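/- Let Λ = ℤ³ regarded as a ring with componentwise multiplication. Then for every prime p, as an identity of formal power series in ℚ[[Y]]: (∑_{i≥0} a_{p^i}(ℤ³)·Y^i)·(1−Y)²(1−p²Y⁴)(1−p³Y⁶) = 1 + 4Y + 2Y² + (4p−3)Y³ + (5p−1)Y⁴ + (p²−5p)Y⁵ + (3p²−4p)Y⁶ − 2p²Y⁷ − 4p²Y⁸ − p²Y⁹. -/

import Mathlib

/-- The number of subrings (additive subgroups closed under multiplication) of additive
index `n` in a not necessarily associative, commutative or unital ring `Λ`. -/
noncomputable def subringCount (Λ : Type*) [NonUnitalNonAssocRing Λ] (n : ℕ) : ℕ :=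
  Nat.card {S : NonUnitalSubring Λ // S.toAddSubgroup.index = n}

namespace ZZ3
open Submodule

abbrev R3 := Fin 3 → ℤ
abbrev Lt := Submodule ℤ R3

/-- additive index of a lattice -/
noncomputable def ix (M : Lt) : ℕ := M.toAddSubgroup.index
/-- relative index `[N : M]` -/
noncomputable def rx (M N : Lt) : ℕ := M.toAddSubgroup.relIndex N.toAddSubgroup
/-- the multiplier lattice `p ℤ` (scalars) -/
def P (p : ℕ) : Lt := Submodule.span ℤ {(p : R3)}

lemma rx_mul_ix {M N : Lt} (h : M ≤ N) : rx M N * ix N = ix M :=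
  AddSubgroup.relIndex_mul_index (Submodule.toAddSubgroup_mono h)
lemma rx_mul {M N L : Lt} (h : M ≤ N) (h' : N ≤ L) : rx M N * rx N L = rx M L :=
  AddSubgroup.relIndex_mul_relIndex _ _ _ (Submodule.toAddSubgroup_mono h) (Submodule.toAddSubgroup_mono h')
lemma sup_tas (M N : Lt) : (M ⊔ N).toAddSubgroup = M.toAddSubgroup ⊔ N.toAddSubgroup := by
  exact Submodule.sup_toAddSubgroup M N
lemma inf_tas (M N : Lt) : (M ⊓ N).toAddSubgroup = M.toAddSubgroup ⊓ N.toAddSubgroup := by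
  rfl
lemma rx_sup (M N : Lt) : rx N (M ⊔ N) = rx N M := by
  unfold rx; rw [sup_tas]; exact AddSubgroup.relIndex_sup_right M.toAddSubgroup N.toAddSubgroup
lemma rx_inf (M N : Lt) : rx (M ⊓ N) N = rx M N := by
  unfold rx; rw [inf_tas]; exact AddSubgroup.inf_relIndex_right (G := R3) _ _
lemma rx_eq_one {M N : Lt} : rx M N = 1 ↔ N ≤ M := by
  unfold rx; rw [AddSubgroup.relIndex_eq_one]; rfl
lemma rx_self (M : Lt) : rx M M = 1 := rx_eq_one.2 le_rfl
lemma ix_top : ix ⊤ = 1 := by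
  unfold ix; simp

lemma mem_P {p : ℕ} {M : Lt} {x : R3} : x ∈ P p * M ↔ ∃ m ∈ M, (p : ℤ) • m = x := by
  unfold P
  rw [Submodule.mem_span_singleton_mul]
  constructor
  · rintro ⟨m, hm, rfl⟩
    exact ⟨m, hm, by ext i; simp⟩
  · rintro ⟨m, hm, rfl⟩
    exact ⟨m, hm, by ext i; simp⟩

lemma P_mul_eq_map (p : ℕ) (M : Lt) :
    P p * M = M.map (LinearMap.lsmul ℤ R3 (p : ℤ)) := by
  ext x; rw [mem_P, Submodule.mem_map]; rfl

lemma P_le (p : ℕ) (M : Lt) : P p * M ≤ M := by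
  intro x hx
  obtain ⟨m, hm, rfl⟩ := mem_P.1 hx
  exact M.smul_mem _ hm

lemma lsmul_inj {p : ℕ} (hp : p.Prime) :
    Function.Injective (LinearMap.lsmul ℤ R3 (p : ℤ)) := by
  intro x y h
  have h0 : (p : ℤ) ≠ 0 := by exact_mod_cast hp.ne_zero
  exact smul_right_injective _ h0 h

lemma P_le_P {p : ℕ} (hp : p.Prime) {M N : Lt} : P p * M ≤ P p * N ↔ M ≤ N := by
  rw [P_mul_eq_map, P_mul_eq_map]
  exact Submodule.map_le_map_iff_of_injective (lsmul_inj hp) _ _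

lemma P_inj {p : ℕ} (hp : p.Prime) {M N : Lt} : P p * M = P p * N ↔ M = N := by
  rw [le_antisymm_iff, P_le_P hp, P_le_P hp, ← le_antisymm_iff]

lemma rx_P {p : ℕ} (hp : p.Prime) (M N : Lt) : rx (P p * M) (P p * N) = rx M N := by
  unfold rx
  rw [P_mul_eq_map, P_mul_eq_map]
  exact AddSubgroup.relIndex_map_map_of_injective (f := (LinearMap.lsmul ℤ R3 (p : ℤ)).toAddMonoidHom)
    M.toAddSubgroup N.toAddSubgroup (lsmul_inj hp)

lemma ix_Ptop {p : ℕ} : ix (P p * ⊤) = p ^ 3 := by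
  have := AddSubgroup.index_range_nsmul R3 p
  simp at this
  rw [← this]; unfold ix; congr 1
  ext x
  show x ∈ P p * ⊤ ↔ _
  rw [mem_P]; simp

lemma ix_P {p : ℕ} (hp : p.Prime) (M : Lt) : ix (P p * M) = p ^ 3 * ix M := by
  have h := rx_mul_ix ((P_le_P hp).2 (le_top : M ≤ ⊤))
  rw [rx_P hp, ix_Ptop] at h
  have h2 := rx_mul_ix (le_top : M ≤ ⊤)
  rw [ix_top, mul_one] at h2
  rw [← h, h2, mul_comm]

lemma rx_P_self {p : ℕ} (hp : p.Prime) {M : Lt} (hM : ix M ≠ 0) : rx (P p * M) M = p ^ 3 := by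
  have h := rx_mul_ix (P_le p M)
  rw [ix_P hp] at h
  exact Nat.eq_of_mul_eq_mul_right (Nat.pos_of_ne_zero hM) h

lemma smul_mem_of_rx {M N : Lt} {n : ℕ} (h : rx M N = n) {x : R3} (hx : x ∈ N) :
    (n : ℤ) • x ∈ M := by
  have := AddSubgroup.nsmul_index_mem (M.toAddSubgroup.addSubgroupOf N.toAddSubgroup) ⟨x, hx⟩
  rw [AddSubgroup.mem_addSubgroupOf] at this
  subst h
  rw [natCast_zsmul]
  exact this

lemma P_le_of_rx {p : ℕ} {M N : Lt} (h : rx M N = p) : P p * N ≤ M := by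
  intro x hx
  obtain ⟨m, hm, rfl⟩ := mem_P.1 hx
  exact smul_mem_of_rx h hm

/-- prime index: nothing in between -/
lemma prime_mid {p : ℕ} (hp : p.Prime) {M N B : Lt} (h : rx M B = p) (h1 : M ≤ N) (h2 : N ≤ B) :
    N = M ∨ N = B := by
  have := rx_mul h1 h2
  rw [h] at this
  rcases (Nat.dvd_prime hp).1 (Dvd.intro _ this) with h' | h'
  · left; exact le_antisymm (rx_eq_one.1 h') h1
  · right
    rw [h'] at this
    have : rx N B = 1 := by
      have := hp.pos; nlinarith
    exact le_antisymm h2 (rx_eq_one.1 this)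
end ZZ3

namespace ZZ3
open Submodule

section CC
variable {K V : Type*} [Field K] [Finite K] [AddCommGroup V] [Module K V] [Module.Finite K V]

lemma compl_card (U : Submodule K V) :
    Nat.card {W : Submodule K V // IsCompl U W} =
      Nat.card K ^ (Module.finrank K U * Module.finrank K (V ⧸ U)) := by
  obtain ⟨Q, hQ⟩ := U.exists_isCompl
  have e1 := U.isComplEquivProj
  have e2 : {f : V →ₗ[K] U // ∀ x : U, f x = x} ≃ (Q →ₗ[K] U) :=
    { toFun := fun f => f.1.comp Q.subtype
      invFun := fun g => ⟨LinearMap.ofIsCompl hQ LinearMap.id g, by intro x; simp⟩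
      left_inv := by
        intro f
        apply Subtype.ext
        apply LinearMap.ofIsCompl_eq hQ
        · intro u; simp [f.2]
        · intro u; simp
      right_inv := by
        intro g; ext x; simp }
  rw [Nat.card_congr (e1.trans e2)]
  haveI : Finite U := Module.finite_of_finite K
  rw [Module.natCard_eq_pow_finrank (K := K) (V := Q →ₗ[K] U), Module.finrank_linearMap]
  congr 1
  rw [mul_comm]
  congr 1
  exact (U.quotientEquivOfIsCompl Q hQ).finrank_eq.symm
end CC


section down
variable {p : ℕ} {S : Lt} {V : Type*} [AddCommGroup V] [Module (ZMod p) V]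

/-- preimage lattice of a subspace under a reduction map `f : S → V` -/
def down (f : S →ₗ[ℤ] V) (U : Submodule (ZMod p) V) : Lt :=
  (AddSubgroup.toIntSubmodule (U.toAddSubgroup.comap f.toAddMonoidHom)).map S.subtype

lemma mem_down {f : S →ₗ[ℤ] V} {U : Submodule (ZMod p) V} {x : R3} :
    x ∈ down f U ↔ ∃ h : x ∈ S, f ⟨x, h⟩ ∈ U := by
  unfold down
  rw [Submodule.mem_map]
  constructor
  · rintro ⟨⟨y, hy⟩, h, rfl⟩
    exact ⟨hy, h⟩
  · rintro ⟨h, h'⟩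
    exact ⟨⟨x, h⟩, h', rfl⟩

lemma down_le (f : S →ₗ[ℤ] V) (U : Submodule (ZMod p) V) : down f U ≤ S := by
  intro x hx; exact (mem_down.1 hx).1

lemma down_top (f : S →ₗ[ℤ] V) : down f (⊤ : Submodule (ZMod p) V) = S := by
  ext x; rw [mem_down]; simp

lemma down_inf (f : S →ₗ[ℤ] V) (U U' : Submodule (ZMod p) V) :
    down f (U ⊓ U') = down f U ⊓ down f U' := by
  ext x; simp only [mem_down, Submodule.mem_inf]
  constructor
  · rintro ⟨h, h1, h2⟩; exact ⟨⟨h, h1⟩, ⟨h, h2⟩⟩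
  · rintro ⟨⟨h, h1⟩, ⟨_, h2⟩⟩; exact ⟨h, h1, h2⟩

lemma down_le_down {f : S →ₗ[ℤ] V} (hf : Function.Surjective f) {U U' : Submodule (ZMod p) V} :
    down f U ≤ down f U' ↔ U ≤ U' := by
  constructor
  · intro h v hv
    obtain ⟨⟨x, hx⟩, rfl⟩ := hf v
    obtain ⟨h1, h2⟩ := mem_down.1 (h (mem_down.2 ⟨hx, hv⟩))
    exact h2
  · intro h x hx
    obtain ⟨h1, h2⟩ := mem_down.1 hx
    exact mem_down.2 ⟨h1, h h2⟩

lemma down_inj {f : S →ₗ[ℤ] V} (hf : Function.Surjective f) :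
    Function.Injective (down f : Submodule (ZMod p) V → Lt) := by
  intro U U' h
  exact le_antisymm ((down_le_down hf).1 h.le) ((down_le_down hf).1 h.ge)

lemma down_surj {f : S →ₗ[ℤ] V} (hf : Function.Surjective f) {W : Lt}
    (h1 : down f (⊥ : Submodule (ZMod p) V) ≤ W) (h2 : W ≤ S) :
    ∃ U : Submodule (ZMod p) V, down f U = W := by
  refine ⟨AddSubgroup.toZModSubmodule p
    ((W.submoduleOf S).map f).toAddSubgroup, ?_⟩
  ext x
  rw [mem_down]
  constructor
  · rintro ⟨h, h'⟩
    obtain ⟨⟨y, hy⟩, hy1, hy2⟩ := h'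
    have hyW : y ∈ W := hy1
    have : x - y ∈ W := by
      apply h1
      rw [mem_down]
      refine ⟨S.sub_mem h hy, ?_⟩
      have : (⟨x - y, S.sub_mem h hy⟩ : S) = ⟨x, h⟩ - ⟨y, hy⟩ := rfl
      rw [this, map_sub]
      have hy3 : f ⟨y, hy⟩ = f ⟨x, h⟩ := hy2
      rw [hy3]; simp
    have := W.add_mem this hyW
    simpa using this
  · intro hx
    exact ⟨h2 hx, ⟨x, h2 hx⟩, hx, rfl⟩

lemma rx_down {f : S →ₗ[ℤ] V} (hf : Function.Surjective f) (U : Submodule (ZMod p) V) :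
    rx (down f U) S = U.toAddSubgroup.index := by
  rw [← AddSubgroup.index_comap_of_surjective (f := f.toAddMonoidHom) U.toAddSubgroup hf]
  unfold rx AddSubgroup.relIndex
  congr 1
  ext ⟨x, hx⟩
  rw [AddSubgroup.mem_addSubgroupOf]
  show x ∈ down f U ↔ f ⟨x, hx⟩ ∈ U
  rw [mem_down]
  exact ⟨fun h => h.2, fun h => ⟨hx, h⟩⟩

lemma down_sup {f : S →ₗ[ℤ] V} (hf : Function.Surjective f) (U U' : Submodule (ZMod p) V) :
    down f (U ⊔ U') = down f U ⊔ down f U' := by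
  apply le_antisymm
  · obtain ⟨Q, hQ⟩ := down_surj (p := p) hf (W := down f U ⊔ down f U')
      (le_trans ((down_le_down hf).2 bot_le) le_sup_left) (sup_le (down_le _ _) (down_le _ _))
    rw [← hQ, down_le_down hf]
    apply sup_le
    · rw [← down_le_down hf, hQ]; exact le_sup_left
    · rw [← down_le_down hf, hQ]; exact le_sup_right
  · exact sup_le ((down_le_down hf).2 le_sup_left) ((down_le_down hf).2 le_sup_right)

lemma index_sub {p : ℕ} [Fact p.Prime] {V : Type*} [AddCommGroup V] [Module (ZMod p) V]
    [Module.Finite (ZMod p) V] (U : Submodule (ZMod p) V) :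
    U.toAddSubgroup.index = p ^ Module.finrank (ZMod p) (V ⧸ U) := by
  have := Module.natCard_eq_pow_finrank (K := ZMod p) (V := V ⧸ U)
  rw [Nat.card_zmod] at this
  rw [← this]; rfl

end down


lemma CC_aux {p : ℕ} (hp : p.Prime) {A D C : Lt} (hAD : A ≤ D) (hDC : D ≤ C)
    {i j : ℕ} (hi : rx A D = p ^ i) (hj : rx D C = p ^ j)
    {V : Type} [AddCommGroup V] [Module (ZMod p) V] (f : C →ₗ[ℤ] V)
    (hf : Function.Surjective f) (hbot : down f (⊥ : Submodule (ZMod p) V) = A) :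
    Set.ncard {W : Lt | W ⊓ D = A ∧ W ⊔ D = C} = p ^ (i * j) := by
  haveI : Fact p.Prime := ⟨hp⟩
  have hcard : Nat.card V = p ^ (i + j) := by
    have h1 := rx_mul hAD hDC
    rw [hi, hj, ← pow_add] at h1
    rw [h1, ← hbot, rx_down hf]
    show _ = Nat.card (V ⧸ (⊥ : AddSubgroup V))
    exact Nat.card_congr QuotientAddGroup.quotientBot.symm.toEquiv
  haveI : Finite V := Nat.finite_of_card_ne_zero (by rw [hcard]; exact pow_ne_zero _ hp.ne_zero)
  haveI : Module.Finite (ZMod p) V := Module.Finite.of_finite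
  obtain ⟨UD, hUD⟩ := down_surj (p := p) hf (W := D) (by rw [hbot]; exact hAD) hDC
  have hq : Module.finrank (ZMod p) (V ⧸ UD) = j := by
    have h1 := rx_down hf UD
    rw [hUD, hj, index_sub] at h1
    exact (Nat.pow_right_injective hp.two_le h1).symm
  have ht : Module.finrank (ZMod p) V = i + j := by
    have := Module.natCard_eq_pow_finrank (K := ZMod p) (V := V)
    rw [Nat.card_zmod, hcard] at this
    exact (Nat.pow_right_injective hp.two_le this).symm
  have hd : Module.finrank (ZMod p) UD = i := by
    have := Submodule.finrank_quotient_add_finrank UD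
    omega
  have key := compl_card UD
  rw [Nat.card_zmod, hq, hd] at key
  rw [← key]
  have e : {W : Submodule (ZMod p) V // IsCompl UD W} ≃ {W : Lt | W ⊓ D = A ∧ W ⊔ D = C} := by
    refine Equiv.ofBijective (fun W => ⟨down f W.1, ?_, ?_⟩) ⟨?_, ?_⟩
    · rw [← hUD, ← down_inf, inf_comm, W.2.inf_eq_bot, hbot]
    · rw [← hUD, ← down_sup hf, sup_comm, W.2.sup_eq_top, down_top]
    · intro W W' h
      exact Subtype.ext (down_inj hf (Subtype.ext_iff.1 h))
    · rintro ⟨W, h1, h2⟩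
      obtain ⟨U, rfl⟩ := down_surj (p := p) hf (W := W)
        (by rw [hbot, ← h1]; exact inf_le_left) (by rw [← h2]; exact le_sup_left)
      refine ⟨⟨U, ?_⟩, rfl⟩
      constructor
      · rw [disjoint_iff]; apply down_inj hf
        rw [down_inf, hUD, hbot, inf_comm, h1]
      · rw [codisjoint_iff]; apply down_inj hf
        rw [down_sup hf, hUD, down_top, sup_comm, h2]
  rw [← Nat.card_coe_set_eq]
  exact (Nat.card_congr e).symm

/-- complement count -/
lemma CC {p : ℕ} (hp : p.Prime) {A D C : Lt} (hAD : A ≤ D) (hDC : D ≤ C) (hC : P p * C ≤ A)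
    {i j : ℕ} (hi : rx A D = p ^ i) (hj : rx D C = p ^ j) :
    Set.ncard {W : Lt | W ⊓ D = A ∧ W ⊔ D = C} = p ^ (i * j) := by
  have hz : ∀ x : C ⧸ A.submoduleOf C, p • x = 0 := by
    intro x
    obtain ⟨y, rfl⟩ := Submodule.mkQ_surjective _ x
    rw [← map_nsmul]
    simp only [Submodule.mkQ_apply]
    rw [Submodule.Quotient.mk_eq_zero]
    show ((p • y : C) : R3) ∈ A
    apply hC
    rw [mem_P]
    exact ⟨y, y.2, by simp⟩
  letI : Module (ZMod p) (C ⧸ A.submoduleOf C) := AddCommGroup.zmodModule hz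
  refine @CC_aux p hp A D C hAD hDC i j hi hj (C ⧸ A.submoduleOf C) _
    this (Submodule.mkQ _) (Submodule.mkQ_surjective _) ?_
  ext x
  rw [mem_down]
  constructor
  · rintro ⟨h, h'⟩
    have : (⟨x, h⟩ : C) ∈ A.submoduleOf C := (Submodule.Quotient.mk_eq_zero _).1 h'
    exact this
  · intro h
    refine ⟨hDC (hAD h), ?_⟩
    exact (Submodule.Quotient.mk_eq_zero _).2 h
end ZZ3

namespace ZZ3
open Submodule

/-- `p`-power index -/
def pp (p : ℕ) (M : Lt) : Prop := ∃ k, P p ^ k * ⊤ ≤ M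

lemma pp_mono {p : ℕ} {M N : Lt} (h : M ≤ N) : pp p M → pp p N := by
  rintro ⟨k, hk⟩; exact ⟨k, hk.trans h⟩

lemma P_pow_mul (p k : ℕ) (M : Lt) : P p ^ k * M = P (p ^ k) * M := by
  unfold P
  rw [Submodule.span_pow]
  simp

lemma pp_of_rx {p : ℕ} {M B : Lt} (hB : pp p B) {n : ℕ} (h : rx M B = p ^ n) : pp p M := by
  obtain ⟨k, hk⟩ := hB
  refine ⟨n + k, ?_⟩
  rw [pow_add, mul_assoc, P_pow_mul p n]
  exact (mul_le_mul' le_rfl hk).trans (P_le_of_rx h)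

lemma rx_top (M : Lt) : rx M ⊤ = ix M := by
  have := rx_mul_ix (le_top : M ≤ ⊤)
  rw [ix_top, mul_one] at this; exact this

lemma pp_top (p : ℕ) : pp p ⊤ := ⟨0, le_top⟩

lemma pp_of_ix {p : ℕ} {M : Lt} {n : ℕ} (h : ix M = p ^ n) : pp p M :=
  pp_of_rx (pp_top p) (by rw [rx_top, h])

lemma ix_Pk {p : ℕ} (hp : p.Prime) (k : ℕ) : ix (P p ^ k * ⊤) = p ^ (3 * k) := by
  rw [P_pow_mul, ix_Ptop, ← pow_mul, mul_comm]

lemma ix_of_pp {p : ℕ} (hp : p.Prime) {M : Lt} (h : pp p M) : ∃ n, ix M = p ^ n := by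
  obtain ⟨k, hk⟩ := h
  have := rx_mul_ix hk
  rw [ix_Pk hp] at this
  obtain ⟨n, _, hn⟩ := (Nat.dvd_prime_pow hp).1 (Dvd.intro_left _ this)
  exact ⟨n, hn⟩

lemma rx_of_pp {p : ℕ} (hp : p.Prime) {M N : Lt} (h : pp p M) (hN : M ≤ N) : ∃ n, rx M N = p ^ n := by
  obtain ⟨k, hk⟩ := ix_of_pp hp h
  have := rx_mul_ix hN
  rw [hk] at this
  obtain ⟨n, _, hn⟩ := (Nat.dvd_prime_pow hp).1 (Dvd.intro _ this)
  exact ⟨n, hn⟩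

lemma ix_ne {p : ℕ} (hp : p.Prime) {M : Lt} (h : pp p M) : ix M ≠ 0 := by
  obtain ⟨k, hk⟩ := ix_of_pp hp h
  rw [hk]; exact pow_ne_zero _ hp.ne_zero

lemma rx_ne {p : ℕ} (hp : p.Prime) {M N : Lt} (h : pp p M) (hN : M ≤ N) : rx M N ≠ 0 := by
  obtain ⟨k, hk⟩ := rx_of_pp hp h hN
  rw [hk]; exact pow_ne_zero _ hp.ne_zero

lemma pp_P {p : ℕ} {M : Lt} (h : pp p M) : pp p (P p * M) := by
  obtain ⟨k, hk⟩ := h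
  refine ⟨k + 1, ?_⟩
  rw [pow_succ', mul_assoc]
  exact mul_le_mul' le_rfl hk

lemma pp_inf {p : ℕ} {M N : Lt} (h : pp p M) (h' : pp p N) : pp p (M ⊓ N) := by
  obtain ⟨k, hk⟩ := h
  obtain ⟨l, hl⟩ := h'
  refine ⟨k + l, le_inf ?_ ?_⟩
  · rw [pow_add, mul_assoc]; exact (mul_le_mul' le_rfl le_top).trans hk
  · rw [add_comm, pow_add, mul_assoc]; exact (mul_le_mul' le_rfl le_top).trans hl

lemma eq_of_rx {p : ℕ} (hp : p.Prime) {M N L : Lt} (hM : pp p M) (h : M ≤ N) (hN : N ≤ L)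
    (e : rx M L = rx N L) : M = N := by
  have h1 := rx_mul h hN
  rw [e] at h1
  have h2 := rx_ne hp (pp_mono h hM) hN
  have : rx M N = 1 := by
    have := Nat.pos_of_ne_zero h2
    exact Nat.eq_of_mul_eq_mul_right this (by rw [h1, one_mul])
  exact le_antisymm h (rx_eq_one.1 this)

/-- Nakayama -/
lemma nak {p : ℕ} {M B : Lt} (hM : pp p M) (h : B ≤ M ⊔ P p * B) : B ≤ M := by
  have key : ∀ k, B ≤ M ⊔ P p ^ k * B := by
    intro k
    induction k with
    | zero => simp
    | succ k ih =>
      refine ih.trans (sup_le le_sup_left ?_)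
      calc P p ^ k * B ≤ P p ^ k * (M ⊔ P p * B) := mul_le_mul' le_rfl h
        _ = P p ^ k * M ⊔ P p ^ (k + 1) * B := by rw [Submodule.mul_sup, pow_succ, mul_assoc]
        _ ≤ M ⊔ P p ^ (k + 1) * B := by
            apply sup_le_sup_right
            rw [P_pow_mul]; exact P_le _ _
  obtain ⟨k, hk⟩ := hM
  exact (key k).trans (sup_le le_rfl ((mul_le_mul' le_rfl le_top).trans hk))

/-- one more cyclic generator killed by `p` -/
lemma rx_span {p : ℕ} (hp : p.Prime) {V : Lt} {s : R3} (h : (p : ℤ) • s ∈ V) :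
    rx V (V ⊔ span ℤ {s}) = 1 ∨ rx V (V ⊔ span ℤ {s}) = p := by
  rw [sup_comm, rx_sup]
  apply (Nat.dvd_prime hp).1
  unfold rx AddSubgroup.relIndex AddSubgroup.index
  have e : (span ℤ {s}).toAddSubgroup = AddSubgroup.zmultiples s := by
    ext x; rw [Submodule.mem_toAddSubgroup, Submodule.mem_span_singleton, AddSubgroup.mem_zmultiples_iff]
  rw [e]
  have : IsAddCyclic (AddSubgroup.zmultiples s ⧸ V.toAddSubgroup.addSubgroupOf (AddSubgroup.zmultiples s)) :=
    isAddCyclic_of_surjective (QuotientAddGroup.mk' _) (QuotientAddGroup.mk'_surjective _)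
  rw [← IsAddCyclic.exponent_eq_card]
  apply AddMonoid.exponent_dvd_of_forall_nsmul_eq_zero
  intro x
  obtain ⟨⟨y, hy⟩, rfl⟩ := QuotientAddGroup.mk_surjective x
  rw [← QuotientAddGroup.mk_nsmul, QuotientAddGroup.eq_zero_iff, AddSubgroup.mem_addSubgroupOf]
  obtain ⟨k, rfl⟩ := AddSubgroup.mem_zmultiples_iff.1 hy
  have := V.smul_mem k h
  rw [smul_comm] at this
  rw [natCast_zsmul] at this
  exact this

def Cl (M : Lt) : Prop := M * M ≤ M
def PCl (p : ℕ) (M : Lt) : Prop := P p * (M * M) ≤ M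
/-- every closed lattice containing `M` contains `B` -/
def Gn (M B : Lt) : Prop := ∀ C, Cl C → M ≤ C → B ≤ C


lemma not_cl {p : ℕ} {V B : Lt} (hg : Gn V B) {n : ℕ} (h : rx V B = n) (hn : n ≠ 1) : ¬ Cl V := by
  intro hc
  exact hn (h ▸ rx_eq_one.2 (hg V hc le_rfl))

lemma gn_mono {M V B : Lt} (h : M ≤ V) (hg : Gn M B) : Gn V B :=
  fun C hC hV => hg C hC (h.trans hV)

/-- data of a corank two generating sublattice -/
structure Cls2 (p : ℕ) (B V V2 : Lt) : Prop where
  hB : Cl B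
  ppB : pp p B
  PBV : P p * B ≤ V
  VB : V ≤ B
  rV : rx (P p * B) V = p
  V2def : V2 = V ⊔ V * V
  r1 : rx V V2 = p
  r2 : rx V2 B = p
  V2B : V2 ≤ B
  gen : B = V2 ⊔ V * V2

lemma cls2 {p : ℕ} (hp : p.Prime) {B V : Lt} (hB : Cl B) (ppB : pp p B) (PBV : P p * B ≤ V)
    (VB : V ≤ B) (hr : rx V B = p ^ 2) (hg : Gn V B) : Cls2 p B V (V ⊔ V * V) := by
  have hp1 := hp.one_lt
  have hB' : B * B ≤ B := hB
  have hVV : V * V ≤ B := (mul_le_mul' VB VB).trans hB'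
  have rV : rx (P p * B) V = p := by
    have h1 := rx_mul PBV VB
    rw [hr, rx_P_self hp (ix_ne hp ppB)] at h1
    have : 0 < p ^ 2 := pow_pos hp.pos 2
    exact Nat.eq_of_mul_eq_mul_right this (by rw [h1]; ring)
  have hnV : ¬ V ≤ P p * B := by
    intro h; rw [rx_eq_one.2 h] at rV; omega
  obtain ⟨t, htV, htB⟩ := SetLike.not_le_iff_exists.1 hnV
  have hV : V = span ℤ {t} ⊔ P p * B := by
    rcases prime_mid hp rV (le_sup_right : _ ≤ span ℤ {t} ⊔ P p * B)
      (sup_le (by rw [span_le]; simpa using htV) PBV) with h | h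
    · exfalso; apply htB; rw [← h]
      exact (le_sup_left : span ℤ {t} ≤ _) (mem_span_singleton_self t)
    · exact h.symm
  have hV2 : V ⊔ V * V = V ⊔ span ℤ {t * t} := by
    apply le_antisymm
    · apply sup_le le_sup_left
      have h1 : V * V ≤ span ℤ {t * t} ⊔ P p * B := by
        have hsB : span ℤ {t} ≤ B := by rw [span_le]; simpa using VB htV
        conv_lhs => rw [hV]
        rw [Submodule.mul_sup, Submodule.sup_mul, Submodule.span_mul_span]
        apply sup_le
        · apply sup_le
          · simp only [Set.singleton_mul_singleton]; exact le_sup_left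
          · refine le_trans ?_ le_sup_right
            rw [mul_assoc]; exact mul_le_mul' le_rfl ((mul_le_mul' le_rfl hsB).trans hB')
        · refine le_trans ?_ le_sup_right
          calc (span ℤ {t} ⊔ P p * B) * (P p * B) ≤ B * (P p * B) :=
                mul_le_mul' (sup_le hsB (P_le _ _)) le_rfl
            _ = P p * (B * B) := by rw [mul_left_comm]
            _ ≤ _ := mul_le_mul' le_rfl hB'
      exact h1.trans (sup_le le_sup_right (PBV.trans le_sup_left))
    · apply sup_le le_sup_left
      refine le_trans ?_ le_sup_right
      rw [span_le]; simpa using mul_mem_mul htV htV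
  have hnc : ¬ Cl V := not_cl (p := p) hg hr (by have := Nat.one_lt_pow (n := 2) (by norm_num) hp1; omega)
  have r1 : rx V (V ⊔ V * V) = p := by
    have : rx V (V ⊔ V * V) = 1 ∨ rx V (V ⊔ V * V) = p := by
      rw [hV2]; apply rx_span hp
      apply PBV
      rw [mem_P]
      exact ⟨t * t, hVV (mul_mem_mul htV htV), rfl⟩
    rcases this with h | h
    · exfalso; apply hnc
      exact le_sup_right.trans (rx_eq_one.1 h)
    · exact h
  have V2B : V ⊔ V * V ≤ B := sup_le VB hVV
  have r2 : rx (V ⊔ V * V) B = p := by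
    have h1 := rx_mul (le_sup_left : V ≤ V ⊔ V * V) V2B
    rw [r1, hr] at h1
    exact Nat.eq_of_mul_eq_mul_left hp.pos (by rw [h1]; ring)
  refine ⟨hB, ppB, PBV, VB, rV, rfl, r1, r2, V2B, ?_⟩
  rcases prime_mid hp r2 (le_sup_left : _ ≤ (V ⊔ V * V) ⊔ V * (V ⊔ V * V))
    (sup_le V2B ((mul_le_mul' VB V2B).trans hB')) with h | h
  · exfalso
    have h2 : V * (V ⊔ V * V) ≤ V ⊔ V * V := by conv_rhs => rw [← h]
                                                exact le_sup_right
    refine not_cl (p := p) (gn_mono (le_sup_left : V ≤ V ⊔ V * V) hg) r2 (by omega) ?_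
    unfold Cl
    conv_lhs => rw [Submodule.sup_mul]
    apply sup_le h2
    rw [mul_assoc]
    exact (mul_le_mul' le_rfl h2).trans h2
  · exact h.symm

lemma Cls2.ext {p : ℕ} {B V V2 M : Lt} (h : Cls2 p B V V2) (hM : pp p M)
    (e : M ⊔ P p * B = V) : B ≤ M ⊔ M * M ⊔ M * (M * M) := by
  have hMV : M ≤ V := by rw [← e]; exact le_sup_left
  have hMB := hMV.trans h.VB
  have hBB : B * B ≤ B := h.hB
  apply nak (pp_mono (le_sup_left.trans le_sup_left) hM)
  have hVV : V * V ≤ M * M ⊔ P p * B := by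
    conv_lhs => rw [← e]
    rw [Submodule.mul_sup, Submodule.sup_mul]
    refine sup_le (sup_le le_sup_left (le_trans ?_ le_sup_right)) (le_trans ?_ le_sup_right)
    · rw [mul_assoc]; exact mul_le_mul' le_rfl ((mul_le_mul' le_rfl hMB).trans hBB)
    · rw [mul_left_comm, e]; exact mul_le_mul' le_rfl ((mul_le_mul' h.VB le_rfl).trans hBB)
  have hVVV : V * (V * V) ≤ M * (M * M) ⊔ P p * B := by
    refine (mul_le_mul' e.ge hVV).trans ?_
    rw [Submodule.mul_sup, Submodule.sup_mul]
    refine sup_le (sup_le le_sup_left (le_trans ?_ le_sup_right)) (le_trans ?_ le_sup_right)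
    · rw [mul_assoc]
      exact mul_le_mul' le_rfl ((mul_le_mul' le_rfl ((mul_le_mul' hMB hMB).trans hBB)).trans hBB)
    · rw [mul_left_comm, e]; exact mul_le_mul' le_rfl ((mul_le_mul' h.VB le_rfl).trans hBB)
  have hg := h.gen
  rw [h.V2def] at hg
  have l1 : M ≤ M ⊔ M * M ⊔ M * (M * M) ⊔ P p * B := le_sup_left.trans (le_sup_left.trans le_sup_left)
  have l2 : M * M ≤ M ⊔ M * M ⊔ M * (M * M) ⊔ P p * B := le_sup_right.trans (le_sup_left.trans le_sup_left)
  have l3 : M * (M * M) ≤ M ⊔ M * M ⊔ M * (M * M) ⊔ P p * B := le_sup_right.trans le_sup_left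
  have l4 : P p * B ≤ M ⊔ M * M ⊔ M * (M * M) ⊔ P p * B := le_sup_right
  have l5 := hVV.trans (sup_le l2 l4)
  conv_lhs => rw [hg]
  refine sup_le (sup_le (e.ge.trans (sup_le l1 l4)) l5) ?_
  rw [Submodule.mul_sup]
  exact sup_le l5 (hVVV.trans (sup_le l3 l4))

lemma Cls2.PV2_le {p : ℕ} {B V V2 M : Lt} (h : Cls2 p B V V2) (hM : pp p M) (hc : PCl p M)
    (e : M ⊔ P p * B = V) : P p * V2 ≤ M := by
  have hMV : M ≤ V := by rw [← e]; exact le_sup_left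
  have hMB := hMV.trans h.VB
  have hBB : B * B ≤ B := h.hB
  have hc' : P p * (M * M) ≤ M := hc
  have h1 := h.ext hM e
  have h2 : P p * B ≤ M ⊔ M * M := by
    refine (mul_le_mul' le_rfl h1).trans ?_
    rw [Submodule.mul_sup, Submodule.mul_sup]
    refine sup_le (sup_le ((P_le _ _).trans le_sup_left) (hc'.trans le_sup_left)) ?_
    rw [mul_left_comm]
    exact (mul_le_mul' le_rfl hc').trans le_sup_right
  have h3 : V2 ≤ M ⊔ M * M := by
    rw [h.V2def]
    apply sup_le (e.ge.trans (sup_le le_sup_left h2))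
    conv_lhs => rw [← e]
    rw [Submodule.mul_sup, Submodule.sup_mul]
    refine sup_le (sup_le le_sup_right (le_trans ?_ h2)) (le_trans ?_ h2)
    · rw [mul_assoc]; exact mul_le_mul' le_rfl ((mul_le_mul' le_rfl hMB).trans hBB)
    · rw [mul_left_comm, e]; exact mul_le_mul' le_rfl ((mul_le_mul' h.VB le_rfl).trans hBB)
  refine (mul_le_mul' le_rfl h3).trans ?_
  rw [Submodule.mul_sup]
  exact sup_le (P_le _ _) hc'

end ZZ3

namespace ZZ3
open Submodule

lemma fin_above {A : Lt} (h : ix A ≠ 0) : {M : Lt | A ≤ M}.Finite := by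
  have : Finite (R3 ⧸ A) := Nat.finite_of_card_ne_zero h
  have e := (Submodule.comapMkQRelIso A).toEquiv
  have : Finite (Set.Ici A) := Finite.of_equiv _ e
  exact Set.toFinite (Set.Ici A)

lemma fin_ix {n : ℕ} (h : n ≠ 0) : {M : Lt | ix M = n}.Finite := by
  refine (fin_above (A := P n * ⊤) ?_).subset ?_
  · rw [ix_Ptop]; exact pow_ne_zero _ h
  · intro M hM
    exact P_le_of_rx (by rw [rx_top]; exact hM)

lemma fin_rx {p : ℕ} (hp : p.Prime) {B : Lt} (hB : pp p B) (k : ℕ) :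
    {M : Lt | M ≤ B ∧ rx M B = p ^ k}.Finite := by
  obtain ⟨n, hn⟩ := ix_of_pp hp hB
  refine (fin_ix (n := p ^ k * p ^ n) (by simp [hp.ne_zero])).subset ?_
  rintro M ⟨h1, h2⟩
  have := rx_mul_ix h1
  rw [h2, hn] at this
  exact this.symm

noncomputable def h3 (p : ℕ) (S : Lt) : ℕ := Set.ncard {W : Lt | W ≤ S ∧ rx W S = p ∧ ¬ Cl W}
noncomputable def h2 (p : ℕ) (S : Lt) : ℕ :=
  Set.ncard {T : Lt | P p * S ≤ T ∧ T ≤ S ∧ rx T S = p ^ 2 ∧ Gn T S}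

lemma cl_P {p : ℕ} (hp : p.Prime) {M : Lt} : Cl (P p * M) ↔ PCl p M := by
  unfold Cl PCl
  have : P p * M * (P p * M) = P p * (P p * (M * M)) := by
    rw [mul_assoc, mul_left_comm M]
  rw [this, P_le_P hp]

lemma exists_P {p : ℕ} {S : Lt} (h : S ≤ P p * ⊤) : ∃ M, S = P p * M := by
  refine ⟨S.comap (LinearMap.lsmul ℤ R3 (p : ℤ)), ?_⟩
  rw [P_mul_eq_map, Submodule.map_comap_eq]
  rw [P_mul_eq_map, Submodule.map_top] at h
  exact (inf_eq_right.2 h).symm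

lemma PCl_of_Cl {p : ℕ} {M : Lt} (h : Cl M) : PCl p M := (P_le _ _).trans h

lemma P_injective {p : ℕ} (hp : p.Prime) : Function.Injective (fun M : Lt => P p * M) :=
  fun _ _ h => (P_inj hp).1 h

lemma h3_P {p : ℕ} (hp : p.Prime) (M : Lt) :
    h3 p (P p * M) = Set.ncard {W : Lt | W ≤ M ∧ rx W M = p ∧ ¬ PCl p W} := by
  unfold h3
  rw [← Set.ncard_image_of_injective {W : Lt | W ≤ M ∧ rx W M = p ∧ ¬ PCl p W} (P_injective hp)]
  congr 1
  ext W
  simp only [Set.mem_ofPred_eq, Set.mem_image]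
  constructor
  · rintro ⟨h1, h2, h3⟩
    obtain ⟨W', rfl⟩ := exists_P (h1.trans (mul_le_mul' le_rfl le_top))
    exact ⟨W', ⟨(P_le_P hp).1 h1, by rwa [rx_P hp] at h2, by rwa [cl_P hp] at h3⟩, rfl⟩
  · rintro ⟨W', ⟨h1, h2, h3⟩, rfl⟩
    exact ⟨(P_le_P hp).2 h1, by rwa [rx_P hp], by rwa [cl_P hp]⟩

lemma h2_P {p : ℕ} (hp : p.Prime) (M : Lt) :
    h2 p (P p * M) = Set.ncard {T : Lt | P p * M ≤ T ∧ T ≤ M ∧ rx T M = p ^ 2 ∧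
      ∀ C, PCl p C → T ≤ C → M ≤ C} := by
  unfold h2
  rw [← Set.ncard_image_of_injective {T : Lt | P p * M ≤ T ∧ T ≤ M ∧ rx T M = p ^ 2 ∧
      ∀ C, PCl p C → T ≤ C → M ≤ C} (P_injective hp)]
  congr 1
  ext W
  simp only [Set.mem_ofPred_eq, Set.mem_image]
  constructor
  · rintro ⟨h1, h2, h3, h4⟩
    obtain ⟨W', rfl⟩ := exists_P (h2.trans (mul_le_mul' le_rfl le_top))
    refine ⟨W', ⟨(P_le_P hp).1 h1, (P_le_P hp).1 h2, by rwa [rx_P hp] at h3, ?_⟩, rfl⟩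
    intro C hC hT
    exact (P_le_P hp).1 (h4 _ ((cl_P hp).2 hC) ((P_le_P hp).2 hT))
  · rintro ⟨W', ⟨h1, h2, h3, h4⟩, rfl⟩
    refine ⟨(P_le_P hp).2 h1, (P_le_P hp).2 h2, by rwa [rx_P hp], ?_⟩
    intro C hC hT
    obtain ⟨C', hC'⟩ := exists_P (inf_le_right : C ⊓ P p * ⊤ ≤ P p * ⊤)
    have hcl : Cl (C ⊓ P p * ⊤) := by
      unfold Cl
      apply le_inf
      · exact (mul_le_mul' inf_le_left inf_le_left).trans hC
      · refine (mul_le_mul' inf_le_right inf_le_right).trans ?_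
        rw [mul_assoc]; exact mul_le_mul' le_rfl le_top
    have h5 := h4 C' ((cl_P hp).1 (hC' ▸ hcl)) ((P_le_P hp).1 (by
      rw [← hC']; exact le_inf hT (mul_le_mul' le_rfl le_top)))
    have := (P_le_P hp).2 h5
    rw [← hC'] at this
    exact this.trans inf_le_left

/-- lattices `M` with `gen M = B` and `[B:M]=p^k` -/
def Fib (p k : ℕ) (B : Lt) : Set Lt := {M | M ≤ B ∧ PCl p M ∧ rx M B = p ^ k ∧ Gn M B}

lemma pow_inj {p : ℕ} (hp : p.Prime) {a b : ℕ} (h : p ^ a = p ^ b) : a = b :=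
  Nat.pow_right_injective hp.two_le h

/-- `M` with the corank 2 top part and small intersection -/
lemma Cls2.r3 {p : ℕ} (hp : p.Prime) {B V V2 M : Lt} (h : Cls2 p B V V2)
    (e : M ⊔ P p * B = V) (e' : M ⊓ P p * B = P p * V2) :
    M ≤ B ∧ rx (P p * V2) M = p ∧ rx M B = p ^ 3 ∧ pp p M := by
  have hMB : M ≤ B := (e ▸ le_sup_left : M ≤ V).trans h.VB
  have hVV2 : V ≤ V2 := by rw [h.V2def]; exact le_sup_left
  have hpp : pp p (P p * V2) := pp_P (pp_mono (h.PBV.trans hVV2) (pp_P h.ppB))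
  have hle : P p * V2 ≤ M := e' ▸ inf_le_left
  have r1 : rx (P p * V2) M = p := by
    rw [← e', inf_comm, rx_inf, ← rx_sup, e, h.rV]
  refine ⟨hMB, r1, ?_, pp_mono hle hpp⟩
  have h1 := rx_mul hle hMB
  have h2 := rx_mul ((P_le_P hp).2 h.V2B) (P_le p B)
  rw [rx_P hp, h.r2, rx_P_self hp (ix_ne hp h.ppB)] at h2
  rw [r1, ← h2] at h1
  exact Nat.eq_of_mul_eq_mul_left hp.pos h1

lemma fib_struct {p : ℕ} (hp : p.Prime) {B M : Lt} (hB : Cl B) (ppB : pp p B) {k : ℕ}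
    (hM : M ∈ Fib p k B) :
    (k = 0 ∧ M = B) ∨ (k = 1 ∧ P p * B ≤ M ∧ M ⊔ M * M = B) ∨
    (k = 2 ∧ P p * B ≤ M ∧ Cls2 p B M (M ⊔ M * M)) ∨
    (k = 3 ∧ ∃ V, M ⊔ P p * B = V ∧ V ∈ Fib p 2 B ∧ Cls2 p B V (V ⊔ V * V) ∧
      M ⊓ P p * B = P p * (V ⊔ V * V)) := by
  obtain ⟨h1, h2, h3, h4⟩ := hM
  have hBB : B * B ≤ B := hB
  have h2' : P p * (M * M) ≤ M := h2
  have ppM : pp p M := pp_of_rx ppB h3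
  obtain ⟨V, hV⟩ : ∃ V, M ⊔ P p * B = V := ⟨_, rfl⟩
  have hMV : M ≤ V := hV ▸ le_sup_left
  have hPV : P p * B ≤ V := hV ▸ le_sup_right
  have hVB : V ≤ B := hV ▸ sup_le h1 (P_le _ _)
  have hg : Gn V B := gn_mono hMV h4
  have r0 := rx_mul hPV hVB
  rw [rx_P_self hp (ix_ne hp ppB)] at r0
  obtain ⟨j, hj, hj'⟩ := (Nat.dvd_prime_pow hp).1 (Dvd.intro_left _ r0)
  have hone : ∀ {j}, p ^ j = 1 → j = 0 := fun {j} h => pow_inj hp (by simpa using h)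
  have hp1 := hp.one_lt
  interval_cases j
  · left
    have : M = B := le_antisymm h1 (nak ppM (by rw [hV]; exact rx_eq_one.1 (by simpa using hj')))
    subst this
    rw [rx_self] at h3
    exact ⟨hone h3.symm, rfl⟩
  · right; left
    rw [pow_one] at hj'
    have hn : ¬ Cl V := not_cl (p := p) hg hj' (by omega)
    have hVV : V ⊔ V * V = B := by
      rcases prime_mid hp hj' (le_sup_left : V ≤ V ⊔ V * V)
        (sup_le hVB ((mul_le_mul' hVB hVB).trans hBB)) with h | h
      · exact absurd (le_sup_right.trans h.le) hn
      · exact h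
    have hMM : M ⊔ M * M = B := by
      apply le_antisymm (sup_le h1 ((mul_le_mul' h1 h1).trans hBB))
      apply nak (pp_mono le_sup_left ppM)
      conv_lhs => rw [← hVV, ← hV]
      refine sup_le (sup_le (le_sup_left.trans le_sup_left) le_sup_right) ?_
      rw [Submodule.mul_sup, Submodule.sup_mul]
      refine sup_le (sup_le (le_sup_right.trans le_sup_left) (le_trans ?_ le_sup_right)) (le_trans ?_ le_sup_right)
      · rw [mul_assoc]; exact mul_le_mul' le_rfl ((mul_le_mul' le_rfl h1).trans hBB)
      · rw [mul_left_comm, hV]; exact mul_le_mul' le_rfl ((mul_le_mul' hVB le_rfl).trans hBB)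
    have hPB : P p * B ≤ M := by
      conv_lhs => rw [← hMM, Submodule.mul_sup]
      exact sup_le (P_le _ _) h2'
    have hMV' : M = V := by rw [← hV]; exact (sup_eq_left.2 hPB).symm
    refine ⟨pow_inj hp ?_, hPB, hMM⟩
    rw [← h3, hMV', hj', pow_one]
  · right; right
    have hc := cls2 hp hB ppB hPV hVB hj' hg
    have hle := hc.PV2_le ppM h2 hV
    have hPVB := (P_le_P hp).2 hc.V2B
    have hr := hc.r2
    rw [← rx_P hp] at hr
    rcases prime_mid hp hr (le_inf hle hPVB) inf_le_right with h | h
    · right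
      obtain ⟨_, _, h3', _⟩ := hc.r3 hp hV h
      refine ⟨pow_inj hp (h3.symm.trans h3'), V, hV, ⟨hVB, ?_, hj', hg⟩, hc, h⟩
      exact (mul_le_mul' le_rfl ((mul_le_mul' hVB hVB).trans hBB)).trans hPV
    · left
      have hPB : P p * B ≤ M := inf_eq_right.1 h
      have hMV' : M = V := by rw [← hV]; exact (sup_eq_left.2 hPB).symm
      subst hMV'
      exact ⟨pow_inj hp (h3.symm.trans hj'), hPB, hc⟩
  · exfalso
    have : P p * B = V := eq_of_rx hp (pp_P ppB) hPV hVB (by rw [hj', rx_P_self hp (ix_ne hp ppB)])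
    have hcl : Cl V := by
      rw [← this, cl_P hp]; exact PCl_of_Cl hB
    exact not_cl (p := p) hg hj' (by have := Nat.one_lt_pow (n := 3) (by norm_num) hp1; omega) hcl

end ZZ3

namespace ZZ3
open Submodule

lemma fib0 {p : ℕ} {B : Lt} (hB : Cl B) : Fib p 0 B = {B} := by
  ext M
  constructor
  · rintro ⟨h1, h2, h3, h4⟩
    exact le_antisymm h1 (rx_eq_one.1 (by simpa using h3))
  · rintro rfl
    exact ⟨le_rfl, PCl_of_Cl hB, by simp [rx_self], fun C _ h => h⟩

lemma cl_inf {M N : Lt} (h : Cl M) (h' : Cl N) : Cl (M ⊓ N) :=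
  le_inf ((mul_le_mul' inf_le_left inf_le_left).trans h) ((mul_le_mul' inf_le_right inf_le_right).trans h')

lemma fib1 {p : ℕ} (hp : p.Prime) {B : Lt} (hB : Cl B) :
    Fib p 1 B = {W : Lt | W ≤ B ∧ rx W B = p ∧ ¬ Cl W} := by
  ext M
  constructor
  · rintro ⟨h1, h2, h3, h4⟩
    rw [pow_one] at h3
    exact ⟨h1, h3, not_cl (p := p) h4 h3 hp.one_lt.ne'⟩
  · rintro ⟨h1, h2, h3⟩
    refine ⟨h1, ?_, by rw [h2, pow_one], ?_⟩
    · exact (mul_le_mul' le_rfl ((mul_le_mul' h1 h1).trans hB)).trans (P_le_of_rx h2)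
    · intro C hC hM
      rcases prime_mid hp h2 (le_inf hM h1) inf_le_right with h | h
      · exact absurd (h ▸ cl_inf hC hB) h3
      · exact inf_eq_right.1 h

lemma fib2 {p : ℕ} (hp : p.Prime) {B : Lt} (hB : Cl B) (ppB : pp p B) :
    Fib p 2 B = {T : Lt | P p * B ≤ T ∧ T ≤ B ∧ rx T B = p ^ 2 ∧ Gn T B} := by
  ext M
  constructor
  · intro hM
    rcases fib_struct hp hB ppB hM with h | h | h | h
    · omega
    · omega
    · exact ⟨h.2.1, hM.1, hM.2.2.1, hM.2.2.2⟩
    · omega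
  · rintro ⟨h1, h2, h3, h4⟩
    exact ⟨h2, (mul_le_mul' le_rfl ((mul_le_mul' h2 h2).trans hB)).trans h1, h3, h4⟩

lemma fib_big {p : ℕ} (hp : p.Prime) {B : Lt} (hB : Cl B) (ppB : pp p B) {k : ℕ} (hk : 4 ≤ k) :
    Fib p k B = ∅ := by
  ext M
  simp only [Set.mem_empty_iff_false, iff_false]
  intro hM
  rcases fib_struct hp hB ppB hM with h | h | h | h <;> omega

lemma cls2_of_fib2 {p : ℕ} (hp : p.Prime) {B : Lt} (hB : Cl B) (ppB : pp p B) {V : Lt}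
    (hV : V ∈ Fib p 2 B) : Cls2 p B V (V ⊔ V * V) := by
  have := hV
  rw [fib2 hp hB ppB] at this
  obtain ⟨h1, h2, h3, h4⟩ := this
  exact cls2 hp hB ppB h1 h2 h3 h4

lemma fib3_fibre {p : ℕ} (hp : p.Prime) {B : Lt} (hB : Cl B) (ppB : pp p B) {V : Lt}
    (hV : V ∈ Fib p 2 B) :
    {M | M ∈ Fib p 3 B ∧ M ⊔ P p * B = V} =
      {M : Lt | M ⊓ P p * B = P p * (V ⊔ V * V) ∧ M ⊔ P p * B = V} := by
  have hc := cls2_of_fib2 hp hB ppB hV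
  ext M
  constructor
  · rintro ⟨hM, e⟩
    rcases fib_struct hp hB ppB hM with h | h | h | ⟨_, V', h1, h2, h3, h4⟩
    · omega
    · omega
    · omega
    · rw [e] at h1; subst h1
      exact ⟨h4, e⟩
  · rintro ⟨h1, e⟩
    obtain ⟨hMB, r1, r3, hpp⟩ := hc.r3 hp e h1
    have hMV : M ≤ V := e ▸ le_sup_left
    refine ⟨⟨hMB, ?_, r3, ?_⟩, e⟩
    · refine (mul_le_mul' le_rfl ((mul_le_mul' hMV hMV).trans (le_sup_right : _ ≤ V ⊔ V * V))).trans ?_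
      rw [← h1]; exact inf_le_left
    · intro C hC hMC
      have hC' : C * C ≤ C := hC
      refine (hc.ext hpp e).trans (sup_le (sup_le hMC ?_) ?_)
      · exact (mul_le_mul' hMC hMC).trans hC'
      · exact (mul_le_mul' hMC ((mul_le_mul' hMC hMC).trans hC')).trans hC'

lemma fib_finite {p : ℕ} (hp : p.Prime) {B : Lt} (ppB : pp p B) (k : ℕ) : (Fib p k B).Finite :=
  (fin_rx hp ppB k).subset fun _ h => ⟨h.1, h.2.2.1⟩

lemma fib3_card {p : ℕ} (hp : p.Prime) {B : Lt} (hB : Cl B) (ppB : pp p B) :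
    (Fib p 3 B).ncard = p * (Fib p 2 B).ncard := by
  classical
  rw [Set.ncard_eq_toFinset_card _ (fib_finite hp ppB 3), Set.ncard_eq_toFinset_card _ (fib_finite hp ppB 2)]
  rw [Finset.card_eq_sum_card_fiberwise (f := fun M => M ⊔ P p * B) (t := (fib_finite hp ppB 2).toFinset)]
  · rw [Finset.sum_const_nat (m := p), mul_comm]
    intro V hV
    rw [Set.Finite.mem_toFinset] at hV
    have hc := cls2_of_fib2 hp hB ppB hV
    rw [← Set.ncard_coe_finset]
    have : ((((fib_finite hp ppB 3).toFinset.filter (fun M => M ⊔ P p * B = V)) : Finset Lt) : Set Lt) =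
        {M | M ∈ Fib p 3 B ∧ M ⊔ P p * B = V} := by
      ext M; simp
    rw [this, fib3_fibre hp hB ppB hV, CC hp (i := 1) (j := 1)]
    · simp
    · exact (P_le_P hp).2 hc.V2B
    · exact hc.PBV
    · exact mul_le_mul' le_rfl le_sup_left
    · rw [rx_P hp, hc.r2, pow_one]
    · rw [hc.rV, pow_one]
  · intro M hM
    simp only [Set.Finite.coe_toFinset] at hM ⊢
    rcases fib_struct hp hB ppB hM with h | h | h | ⟨_, V', h1, h2, h3, h4⟩
    · omega
    · omega
    · omega
    · rw [h1]; exact h2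

/-- statistics for the small fibres -/
lemma stat_small {p : ℕ} (hp : p.Prime) {B M : Lt} (hBB : B * B ≤ B) (hMB : M ≤ B)
    (ppM : pp p M) (hPB : P p * B ≤ M) (hc : PCl p M) (hr : rx M (M ⊔ M * M) = p) :
    h3 p (P p * M) = p ^ 2 ∧ h2 p (P p * M) = 0 := by
  obtain ⟨D, hD⟩ : ∃ D, M ⊔ M * M = D := ⟨_, rfl⟩
  rw [hD] at hr
  have hMD : M ≤ D := hD ▸ le_sup_left
  have hMMD : M * M ≤ D := hD ▸ le_sup_right
  have hDB : D ≤ B := hD ▸ sup_le hMB ((mul_le_mul' hMB hMB).trans hBB)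
  have hPD : P p * D ≤ M := (mul_le_mul' le_rfl hDB).trans hPB
  have hPMD : P p * M ≤ P p * D := (P_le_P hp).2 hMD
  have hr1 : rx (P p * M) (P p * D) = p := by rw [rx_P hp, hr]
  have hr2 : rx (P p * D) M = p ^ 2 := by
    have := rx_mul hPMD hPD
    rw [hr1, rx_P_self hp (ix_ne hp ppM)] at this
    exact Nat.eq_of_mul_eq_mul_left hp.pos (by rw [this]; ring)
  constructor
  · rw [h3_P hp]
    have : {W : Lt | W ≤ M ∧ rx W M = p ∧ ¬PCl p W} =
        {W : Lt | W ⊓ P p * D = P p * M ∧ W ⊔ P p * D = M} := by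
      ext W
      constructor
      · rintro ⟨h1, h2, h3⟩
        have hPMW := P_le_of_rx h2
        have hn : ¬ P p * D ≤ W := by
          intro h
          apply h3
          exact (mul_le_mul' le_rfl ((mul_le_mul' h1 h1).trans hMMD)).trans h
        constructor
        · rcases prime_mid hp hr1 (le_inf hPMW hPMD) inf_le_right with h | h
          · exact h
          · exact absurd (inf_eq_right.1 h) hn
        · rcases prime_mid hp h2 le_sup_left (sup_le h1 hPD) with h | h
          · exact absurd (sup_eq_left.1 h) hn
          · exact h
      · rintro ⟨h1, h2⟩
        have hWM : W ≤ M := h2 ▸ le_sup_left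
        have hr3 : rx W M = p := by
          rw [← h2, sup_comm, rx_sup, ← rx_inf, h1, hr1]
        have hPMW := P_le_of_rx hr3
        refine ⟨hWM, hr3, ?_⟩
        intro hcW
        have hcW' : P p * (W * W) ≤ W := hcW
        have h3 : M * M ≤ W * W ⊔ P p * B := by
          conv_lhs => rw [← h2]
          rw [Submodule.mul_sup, Submodule.sup_mul]
          refine sup_le (sup_le le_sup_left (le_trans ?_ le_sup_right)) (le_trans ?_ le_sup_right)
          · rw [mul_assoc]
            exact mul_le_mul' le_rfl ((mul_le_mul' hDB (hWM.trans hMB)).trans hBB)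
          · rw [mul_left_comm, h2]; exact mul_le_mul' le_rfl ((mul_le_mul' hMB hDB).trans hBB)
        have h4 : P p * D ≤ W := by
          rw [← hD, Submodule.mul_sup]
          apply sup_le hPMW
          refine (mul_le_mul' le_rfl h3).trans ?_
          rw [Submodule.mul_sup]
          exact sup_le hcW' ((mul_le_mul' le_rfl hPB).trans hPMW)
        have h5 : rx W M = 1 := rx_eq_one.2 (by rw [← h2]; exact sup_le le_rfl h4)
        rw [hr3] at h5
        exact hp.one_lt.ne' h5
    rw [this, CC hp hPMD hPD le_rfl (i := 1) (j := 2) (by rw [hr1, pow_one]) hr2]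
  · rw [h2_P hp]
    have : {T : Lt | P p * M ≤ T ∧ T ≤ M ∧ rx T M = p ^ 2 ∧ ∀ C, PCl p C → T ≤ C → M ≤ C} = ∅ := by
      ext T
      simp only [Set.mem_empty_iff_false, iff_false]
      rintro ⟨h1, h2, h3, h4⟩
      have h5 := h4 (T ⊔ P p * D) (by
        refine le_trans ?_ le_sup_right
        have : T ⊔ P p * D ≤ M := sup_le h2 hPD
        exact mul_le_mul' le_rfl ((mul_le_mul' this this).trans hMMD)) le_sup_left
      have h6 : T ⊔ P p * D = M := le_antisymm (sup_le h2 hPD) h5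
      have h7 : rx T M = rx (T ⊓ P p * D) (P p * D) := by
        conv_lhs => rw [← h6]
        rw [sup_comm, rx_sup, rx_inf]
      have h8 := rx_mul (le_inf h1 hPMD) (inf_le_right : T ⊓ P p * D ≤ P p * D)
      rw [← h7, h3, hr1] at h8
      have := Nat.le_of_dvd hp.pos (Dvd.intro_left _ h8)
      have := hp.one_lt
      nlinarith
    rw [this, Set.ncard_empty]

lemma stat1 {p : ℕ} (hp : p.Prime) {B M : Lt} (hB : Cl B) (ppB : pp p B) (hM : M ∈ Fib p 1 B) :
    h3 p (P p * M) = p ^ 2 ∧ h2 p (P p * M) = 0 := by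
  rcases fib_struct hp hB ppB hM with h | ⟨_, h1, h2⟩ | h | h
  · omega
  · exact stat_small hp hB hM.1 (pp_of_rx ppB hM.2.2.1) h1 hM.2.1 (by rw [h2, hM.2.2.1, pow_one])
  · omega
  · omega

lemma stat2 {p : ℕ} (hp : p.Prime) {B M : Lt} (hB : Cl B) (ppB : pp p B) (hM : M ∈ Fib p 2 B) :
    h3 p (P p * M) = p ^ 2 ∧ h2 p (P p * M) = 0 := by
  have hc := cls2_of_fib2 hp hB ppB hM
  exact stat_small hp hB hM.1 (pp_of_rx ppB hM.2.2.1) hc.PBV hM.2.1 hc.r1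

lemma stat0 {p : ℕ} (hp : p.Prime) {B : Lt} (hB : Cl B) (ppB : pp p B) :
    h3 p (P p * B) = 0 ∧ h2 p (P p * B) = 0 := by
  constructor
  · rw [h3_P hp]
    have : {W : Lt | W ≤ B ∧ rx W B = p ∧ ¬PCl p W} = ∅ := by
      ext W
      simp only [Set.mem_empty_iff_false, iff_false]
      rintro ⟨h1, h2, h3⟩
      exact h3 ((mul_le_mul' le_rfl ((mul_le_mul' h1 h1).trans hB)).trans (P_le_of_rx h2))
    rw [this, Set.ncard_empty]
  · rw [h2_P hp]
    have : {T : Lt | P p * B ≤ T ∧ T ≤ B ∧ rx T B = p ^ 2 ∧ ∀ C, PCl p C → T ≤ C → B ≤ C} = ∅ := by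
      ext T
      simp only [Set.mem_empty_iff_false, iff_false]
      rintro ⟨h1, h2, h3, h4⟩
      have := h4 T ((mul_le_mul' le_rfl ((mul_le_mul' h2 h2).trans hB)).trans h1) le_rfl
      rw [rx_eq_one.2 this] at h3
      have := Nat.one_lt_pow (n := 2) (by norm_num) hp.one_lt
      omega
    rw [this, Set.ncard_empty]

end ZZ3

namespace ZZ3
open Submodule

/-- projective plane points, normalized -/
abbrev NN (p : ℕ) := (ZMod p × ZMod p) ⊕ (ZMod p ⊕ Unit)
abbrev V3 (p : ℕ) := Fin 3 → ZMod p

def nv {p : ℕ} : NN p → V3 p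
  | .inl (m, n) => ![1, m, n]
  | .inr (.inl n) => ![0, 1, n]
  | .inr (.inr _) => ![0, 0, 1]

def dot {p : ℕ} (l : V3 p) : V3 p →ₗ[ZMod p] ZMod p :=
  l 0 • LinearMap.proj 0 + l 1 • LinearMap.proj 1 + l 2 • LinearMap.proj 2

lemma dot_apply {p : ℕ} (l v : V3 p) : dot l v = l 0 * v 0 + l 1 * v 1 + l 2 * v 2 := rfl

def plane {p : ℕ} (x : NN p) : Submodule (ZMod p) (V3 p) := LinearMap.ker (dot (nv x))
def line {p : ℕ} (x : NN p) : Submodule (ZMod p) (V3 p) := span (ZMod p) {nv x}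

lemma mem_plane {p : ℕ} {x : NN p} {v : V3 p} :
    v ∈ plane x ↔ nv x 0 * v 0 + nv x 1 * v 1 + nv x 2 * v 2 = 0 := Iff.rfl

section
variable {p : ℕ} [hpf : Fact p.Prime]

/-- every nonzero vector is a multiple of a normalized one -/
lemma exists_nv {v : V3 p} (hv : v ≠ 0) : ∃ x : NN p, ∃ c : ZMod p, c ≠ 0 ∧ v = c • nv x := by
  by_cases h0 : v 0 = 0
  · by_cases h1 : v 1 = 0
    · by_cases h2 : v 2 = 0
      · exfalso; apply hv; ext i; fin_cases i <;> simp [h0, h1, h2]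
      · refine ⟨.inr (.inr ()), v 2, h2, ?_⟩
        ext i; fin_cases i <;> simp [nv, h0, h1]
    · refine ⟨.inr (.inl (v 2 / v 1)), v 1, h1, ?_⟩
      ext i; fin_cases i <;> simp [nv, h0]
      field_simp
  · refine ⟨.inl (v 1 / v 0, v 2 / v 0), v 0, h0, ?_⟩
    ext i; fin_cases i <;> simp [nv]
    · field_simp
    · field_simp

lemma nv_ne (x : NN p) : nv x ≠ 0 := by
  intro h
  rcases x with ⟨m, n⟩ | n | _
  · have := congrFun h 0; simp [nv] at this
  · have := congrFun h 1; simp [nv] at this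
  · have := congrFun h 2; simp [nv] at this

lemma nv_smul_inj {x y : NN p} {c : ZMod p} (h : nv x = c • nv y) : x = y := by
  have e0 := congrFun h 0
  have e1 := congrFun h 1
  have e2 := congrFun h 2
  rcases x with ⟨m, n⟩ | n | _ <;> rcases y with ⟨m', n'⟩ | n' | _ <;> simp [nv] at e0 e1 e2 ⊢
  · subst e0; simpa using And.intro e1 e2
  all_goals grind

lemma line_inj : Function.Injective (line : NN p → _) := by
  intro x y h
  have : nv x ∈ line y := h ▸ mem_span_singleton_self _
  obtain ⟨c, hc⟩ := mem_span_singleton.1 this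
  exact nv_smul_inj hc.symm

lemma plane_inj : Function.Injective (plane : NN p → _) := by
  intro x y h
  have key : ∀ v : V3 p, nv x 0 * v 0 + nv x 1 * v 1 + nv x 2 * v 2 = 0 ↔
      nv y 0 * v 0 + nv y 1 * v 1 + nv y 2 * v 2 = 0 := by
    intro v; rw [← mem_plane, ← mem_plane, h]
  have a1 := key ![-nv x 1, nv x 0, 0]
  have a2 := key ![-nv x 2, 0, nv x 0]
  have a3 := key ![0, -nv x 2, nv x 1]
  simp only [Matrix.cons_val_zero, Matrix.cons_val_one, Matrix.cons_val] at a1 a2 a3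
  have b1 := a1.1 (by ring)
  have b2 := a2.1 (by ring)
  have b3 := a3.1 (by ring)
  rcases x with ⟨m, n⟩ | n | _ <;> rcases y with ⟨m', n'⟩ | n' | _ <;> simp [nv] at b1 b2 b3 ⊢
  · constructor
    · linear_combination -b1
    · linear_combination -b2
  · linear_combination -b3

lemma index_plane (x : NN p) : (plane x).toAddSubgroup.index = p := by
  have h1 : (plane x).toAddSubgroup = (dot (nv x)).toAddMonoidHom.ker := rfl
  rw [h1, AddSubgroup.index_ker]
  have hs : Function.Surjective (dot (nv x)) := by
    intro c
    rcases x with ⟨m, n⟩ | n | _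
    · exact ⟨![c, 0, 0], by simp [dot_apply, nv]⟩
    · exact ⟨![0, c, 0], by simp [dot_apply, nv]⟩
    · exact ⟨![0, 0, c], by simp [dot_apply, nv]⟩
  have : (dot (nv x)).toAddMonoidHom.range = ⊤ := AddMonoidHom.range_eq_top.2 hs
  rw [this]
  simp

lemma plane_surj {U : Submodule (ZMod p) (V3 p)} (h : U.toAddSubgroup.index = p) :
    ∃ x, plane x = U := by
  rw [index_sub] at h
  have h1 : Module.finrank (ZMod p) (V3 p ⧸ U) = 1 := pow_inj hpf.out (by rw [h, pow_one])
  obtain ⟨e⟩ : Nonempty ((V3 p ⧸ U) ≃ₗ[ZMod p] ZMod p) :=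
    FiniteDimensional.nonempty_linearEquiv_of_finrank_eq (by rw [h1]; simp)
  let g : V3 p →ₗ[ZMod p] ZMod p := e.toLinearMap.comp U.mkQ
  have hg : ∀ v, g v = 0 ↔ v ∈ U := by
    intro v; simp [g]
  let l : V3 p := fun i => g (fun j => if i = j then 1 else 0)
  have hl : ∀ v, g v = dot l v := by
    intro v
    rw [LinearMap.pi_apply_eq_sum_univ g v]
    simp [Fin.sum_univ_three, dot_apply, l]
    ring
  have hl0 : l ≠ 0 := by
    intro h0
    have : U = ⊤ := by
      rw [eq_top_iff]; intro v _
      rw [← hg, hl, h0]; simp [dot_apply]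
    have h2 := Submodule.finrank_quotient_add_finrank U
    rw [this, finrank_top, ← this, h1] at h2
    omega
  obtain ⟨x, c, hc, hx⟩ := exists_nv hl0
  refine ⟨x, ?_⟩
  ext v
  rw [mem_plane, ← hg, hl, hx, dot_apply]
  simp only [Pi.smul_apply, smul_eq_mul]
  constructor
  · intro h; linear_combination c * h
  · intro h
    have : c * (nv x 0 * v 0 + nv x 1 * v 1 + nv x 2 * v 2) = 0 := by linear_combination h
    exact (mul_eq_zero.1 this).resolve_left hc

lemma index_line (x : NN p) : (line x).toAddSubgroup.index = p ^ 2 := by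
  rw [index_sub]
  have h1 := Submodule.finrank_quotient_add_finrank (line x)
  have h2 : Module.finrank (ZMod p) (line x) = 1 := finrank_span_singleton (nv_ne x)
  rw [h2] at h1
  simp at h1
  rw [show Module.finrank (ZMod p) (V3 p ⧸ line x) = 2 by omega]

lemma line_surj {U : Submodule (ZMod p) (V3 p)} (h : U.toAddSubgroup.index = p ^ 2) :
    ∃ x, line x = U := by
  rw [index_sub] at h
  have h1 : Module.finrank (ZMod p) (V3 p ⧸ U) = 2 := pow_inj hpf.out h
  have h2 := Submodule.finrank_quotient_add_finrank U
  rw [h1] at h2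
  simp at h2
  have h3 : Module.finrank (ZMod p) U = 1 := by omega
  obtain ⟨⟨v, hvU⟩, hv0, hv⟩ := finrank_eq_one_iff'.1 h3
  have hv0' : v ≠ 0 := fun h => hv0 (Subtype.ext h)
  obtain ⟨x, c, hc, hx⟩ := exists_nv hv0'
  refine ⟨x, le_antisymm ?_ ?_⟩
  · unfold line; rw [span_le, Set.singleton_subset_iff]
    have : nv x = c⁻¹ • v := by rw [hx, smul_smul, inv_mul_cancel₀ hc, one_smul]
    rw [this]; exact U.smul_mem _ hvU
  · intro u hu
    obtain ⟨d, hd⟩ := hv ⟨u, hu⟩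
    have : d • v = u := congrArg Subtype.val hd
    rw [← this, hx]
    exact (line x).smul_mem _ ((line x).smul_mem _ (mem_span_singleton_self _))

/-- a reduction mod p of a lattice -/
structure Red (p : ℕ) (S : Lt) (f : S →ₗ[ℤ] V3 p) : Prop where
  surj : Function.Surjective f
  bot : down f (⊥ : Submodule (ZMod p) (V3 p)) = P p * S

lemma plane_count {S : Lt} {f : S →ₗ[ℤ] V3 p} (hf : Red p S f) (Q : Lt → Prop) :
    {W : Lt | W ≤ S ∧ rx W S = p ∧ Q W}.ncard = Nat.card {x : NN p // Q (down f (plane x))} := by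
  rw [← Nat.card_coe_set_eq]
  symm
  refine Nat.card_congr (Equiv.ofBijective (fun x => ⟨down f (plane x.1), down_le _ _, ?_, x.2⟩) ⟨?_, ?_⟩)
  · rw [rx_down hf.surj, index_plane]
  · intro x y h
    exact Subtype.ext (plane_inj (down_inj hf.surj (Subtype.ext_iff.1 h)))
  · rintro ⟨W, h1, h2, h3⟩
    obtain ⟨U, rfl⟩ := down_surj hf.surj (by rw [hf.bot]; exact P_le_of_rx h2) h1
    rw [rx_down hf.surj] at h2
    obtain ⟨x, rfl⟩ := plane_surj h2
    exact ⟨⟨x, h3⟩, rfl⟩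

lemma line_count {S : Lt} {f : S →ₗ[ℤ] V3 p} (hf : Red p S f) (Q : Lt → Prop) :
    {T : Lt | P p * S ≤ T ∧ T ≤ S ∧ rx T S = p ^ 2 ∧ Q T}.ncard =
      Nat.card {x : NN p // Q (down f (line x))} := by
  rw [← Nat.card_coe_set_eq]
  symm
  refine Nat.card_congr (Equiv.ofBijective (fun x => ⟨down f (line x.1), ?_, down_le _ _, ?_, x.2⟩) ⟨?_, ?_⟩)
  · rw [← hf.bot]; exact (down_le_down hf.surj).2 bot_le
  · rw [rx_down hf.surj, index_line]
  · intro x y h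
    exact Subtype.ext (line_inj (down_inj hf.surj (Subtype.ext_iff.1 h)))
  · rintro ⟨W, h0, h1, h2, h3⟩
    obtain ⟨U, rfl⟩ := down_surj hf.surj (by rw [hf.bot]; exact h0) h1
    rw [rx_down hf.surj] at h2
    obtain ⟨x, rfl⟩ := line_surj h2
    exact ⟨⟨x, h3⟩, rfl⟩

/-- reduction from a basis -/
noncomputable def redb (p : ℕ) {S : Lt} (b : Module.Basis (Fin 3) ℤ S) : S →ₗ[ℤ] V3 p :=
  ((Int.castAddHom (ZMod p)).toIntLinearMap.compLeft (Fin 3)).comp b.equivFun.toLinearMap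

lemma redb_apply {S : Lt} (b : Module.Basis (Fin 3) ℤ S) (s : S) (i : Fin 3) :
    redb p b s i = ((b.repr s i : ℤ) : ZMod p) := rfl

lemma red_redb {S : Lt} (b : Module.Basis (Fin 3) ℤ S) : Red p S (redb p b) := by
  constructor
  · intro v
    refine ⟨b.equivFun.symm (fun i => ((v i).val : ℤ)), ?_⟩
    ext i
    rw [redb_apply]
    have : b.repr (b.equivFun.symm (fun i => ((v i).val : ℤ))) i = ((v i).val : ℤ) := by
      have := congrFun (b.equivFun.apply_symm_apply (fun i => ((v i).val : ℤ))) i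
      exact this
    rw [this]; simp
  · ext x
    rw [mem_down, mem_P]
    constructor
    · rintro ⟨h, h'⟩
      have h'' : redb p b ⟨x, h⟩ = 0 := h'
      have hd : ∀ i, ∃ c : ℤ, b.repr ⟨x, h⟩ i = p * c := by
        intro i
        have := congrFun h'' i
        rw [redb_apply] at this
        exact (ZMod.intCast_zmod_eq_zero_iff_dvd _ _).1 (by simpa using this)
      choose c hc using hd
      refine ⟨b.equivFun.symm c, Subtype.coe_prop _, ?_⟩
      have : (p : ℤ) • b.equivFun.symm c = ⟨x, h⟩ := by
        rw [← map_smul, LinearEquiv.symm_apply_eq]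
        ext i
        simp [hc i]
      exact congrArg Subtype.val this
    · rintro ⟨m, hm, rfl⟩
      refine ⟨S.smul_mem _ hm, ?_⟩
      have : (⟨(p : ℤ) • m, S.smul_mem _ hm⟩ : S) = (p : ℤ) • ⟨m, hm⟩ := rfl
      rw [this, map_smul]
      show (p : ℤ) • _ = 0
      ext i
      simp

lemma exists_basis {S : Lt} (h : pp p S) : Nonempty (Module.Basis (Fin 3) ℤ S) := by
  obtain ⟨k, hk⟩ := h
  have h1 : Module.finrank ℤ S ≤ 3 := by
    have := Submodule.finrank_le S
    simpa using this
  have h2 : 3 ≤ Module.finrank ℤ S := by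
    let g : R3 →ₗ[ℤ] S := LinearMap.codRestrict S (LinearMap.lsmul ℤ R3 ((p ^ k : ℕ) : ℤ)) (by
      intro x; apply hk; rw [P_pow_mul, mem_P]; exact ⟨x, trivial, rfl⟩)
    have hg : Function.Injective g := by
      intro x y hxy
      have := congrArg Subtype.val hxy
      have h0 : ((p ^ k : ℕ) : ℤ) ≠ 0 := by exact_mod_cast pow_ne_zero _ hpf.out.ne_zero
      exact smul_right_injective _ h0 this
    have := LinearMap.finrank_le_finrank_of_injective hg
    simpa using this
  exact ⟨Module.finBasisOfFinrankEq ℤ S (le_antisymm h1 h2)⟩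

lemma card_NN : Nat.card (NN p) = p ^ 2 + p + 1 := by
  simp [Nat.card_sum, Nat.card_prod]; ring

end

lemma total_index_p {p : ℕ} (hp : p.Prime) {S : Lt} (h : pp p S) :
    {W : Lt | W ≤ S ∧ rx W S = p}.ncard = p ^ 2 + p + 1 := by
  haveI : Fact p.Prime := ⟨hp⟩
  obtain ⟨b⟩ := exists_basis h
  have := plane_count (red_redb (p := p) b) (fun _ => True)
  simp only [and_true] at this
  rw [this, ← card_NN]
  exact Nat.card_congr (Equiv.subtypeUnivEquiv (fun _ => trivial))

lemma stat3 {p : ℕ} (hp : p.Prime) {B M : Lt} (hB : Cl B) (ppB : pp p B) (hM : M ∈ Fib p 3 B) :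
    h3 p (P p * M) = p ^ 2 + p ∧ h2 p (P p * M) = p ^ 2 := by
  rcases fib_struct hp hB ppB hM with h | h | h | ⟨_, V, hV, hV2, hc, hI⟩
  · omega
  · omega
  · omega
  obtain ⟨V2, hV2d⟩ : ∃ V2, V ⊔ V * V = V2 := ⟨_, rfl⟩
  rw [hV2d] at hc hI
  obtain ⟨hMB, r1, r3, ppM⟩ := hc.r3 hp hV hI
  have hVV2 : V ≤ V2 := hV2d ▸ le_sup_left
  have hMV : M ≤ V := hV ▸ le_sup_left
  have hW0 : P p * V2 ≤ M := hI ▸ inf_le_left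
  have hBB : B * B ≤ B := hB
  -- containing PV2
  have key : ∀ W, W ≤ M → pp p W → PCl p W → ¬ W ≤ P p * V2 → P p * V2 ≤ W := by
    intro W h1 h2 h3 h4
    refine hc.PV2_le h2 h3 ?_
    rcases prime_mid hp hc.rV le_sup_right (sup_le (h1.trans hMV) hc.PBV) with h | h
    · exfalso; apply h4; rw [← hI]
      exact le_inf h1 (sup_eq_right.1 h)
    · exact h
  have hPCl0 : PCl p (P p * V2) := by
    unfold PCl
    have : P p * (P p * V2 * (P p * V2)) = P p * (P p * (P p * (V2 * V2))) := by
      rw [mul_assoc (P p) V2, mul_left_comm V2]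
    rw [this]
    apply mul_le_mul' le_rfl
    refine (P_le _ _).trans ?_
    exact (mul_le_mul' le_rfl ((mul_le_mul' hc.V2B hc.V2B).trans hBB)).trans (hc.PBV.trans hVV2)
  have hp1 := hp.one_lt
  constructor
  · rw [h3_P hp]
    have e : {W : Lt | W ≤ M ∧ rx W M = p ∧ ¬PCl p W} = {W : Lt | W ≤ M ∧ rx W M = p} \ {P p * V2} := by
      ext W
      simp only [Set.mem_ofPred_eq, Set.mem_diff, Set.mem_singleton_iff]
      constructor
      · rintro ⟨h1, h2, h3⟩
        exact ⟨⟨h1, h2⟩, fun h => h3 (h ▸ hPCl0)⟩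
      · rintro ⟨⟨h1, h2⟩, h3⟩
        refine ⟨h1, h2, fun h4 => h3 ?_⟩
        have ppW : pp p W := pp_of_rx ppM (n := 1) (by rw [h2, pow_one])
        by_cases h5 : W ≤ P p * V2
        · exact eq_of_rx hp ppW h5 hW0 (by rw [h2, r1])
        · have h6 := key W h1 ppW h4 h5
          exact (eq_of_rx hp (pp_of_rx ppM (n := 1) (by rw [r1, pow_one])) h6 h1 (by rw [h2, r1])).symm
    rw [e, Set.ncard_diff_singleton_of_mem, total_index_p hp ppM]
    · omega
    · exact ⟨hW0, r1⟩
  · rw [h2_P hp]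
    have hPM : P p * M ≤ P p * V2 := P_le_of_rx r1
    have rA : rx (P p * M) (P p * V2) = p ^ 2 := by
      have := rx_mul hPM hW0
      rw [r1, rx_P_self hp (ix_ne hp ppM)] at this
      exact Nat.eq_of_mul_eq_mul_right hp.pos (by rw [this]; ring)
    have e : {T : Lt | P p * M ≤ T ∧ T ≤ M ∧ rx T M = p ^ 2 ∧ ∀ C, PCl p C → T ≤ C → M ≤ C} =
        {T : Lt | T ⊓ P p * V2 = P p * M ∧ T ⊔ P p * V2 = M} := by
      ext T
      constructor
      · rintro ⟨h1, h2, h3, h4⟩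
        have hn : ¬ T ≤ P p * V2 := by
          intro h
          rw [rx_eq_one.2 (h4 _ hPCl0 h)] at r1
          omega
        have rT : rx (P p * M) T = p := by
          have := rx_mul h1 h2
          rw [h3, rx_P_self hp (ix_ne hp ppM)] at this
          exact Nat.eq_of_mul_eq_mul_right (pow_pos hp.pos 2) (by rw [this]; ring)
        constructor
        · rcases prime_mid hp rT (le_inf h1 hPM) inf_le_left with h | h
          · exact h
          · exact absurd (inf_eq_left.1 h) hn
        · rcases prime_mid hp r1 le_sup_right (sup_le h2 hW0) with h | h
          · exact absurd (sup_eq_right.1 h) hn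
          · exact h
      · rintro ⟨h1, h2⟩
        have h3 : T ≤ M := h2 ▸ le_sup_left
        have h4 : rx T M = p ^ 2 := by
          rw [← rA, ← h1, rx_inf]
          conv_lhs => rw [← h2]
          rw [sup_comm, rx_sup]
        have hn : ¬ T ≤ P p * V2 := by
          intro h
          rw [sup_eq_right.2 h] at h2
          rw [h2, rx_self] at r1
          omega
        refine ⟨h1 ▸ inf_le_left, h3, h4, ?_⟩
        intro C hC hTC
        have hTC' : T ≤ C ⊓ M := le_inf hTC h3
        have := key (C ⊓ M) inf_le_right (pp_mono hTC' (pp_of_rx ppM h4)) (by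
          apply le_inf
          · exact (mul_le_mul' le_rfl (mul_le_mul' inf_le_left inf_le_left)).trans hC
          · exact (mul_le_mul' le_rfl (mul_le_mul' inf_le_right inf_le_right)).trans hM.2.1)
          (fun h => hn (hTC'.trans h))
        conv_lhs => rw [← h2]
        exact sup_le hTC (this.trans inf_le_left)
    rw [e, CC hp hPM hW0 le_rfl (i := 2) (j := 1) rA (by rw [r1, pow_one])]

end ZZ3

namespace ZZ3
open Submodule
open scoped Classical

section
variable {p : ℕ} [hpf : Fact p.Prime]

lemma fin_cond (n : ℕ) (Q : Lt → Prop) : {M : Lt | Q M ∧ ix M = p ^ n}.Finite :=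
  (fin_ix (n := p ^ n) (pow_ne_zero _ hpf.out.ne_zero)).subset fun _ h => h.2

/-- closed lattices of index `p^n` -/
noncomputable def Sub (p : ℕ) [Fact p.Prime] (n : ℕ) : Finset Lt := (fin_cond (p := p) n Cl).toFinset
noncomputable def PC (p : ℕ) [Fact p.Prime] (n : ℕ) : Finset Lt := (fin_cond (p := p) n (PCl p)).toFinset

lemma mem_Sub {n : ℕ} {S : Lt} : S ∈ Sub p n ↔ Cl S ∧ ix S = p ^ n := by
  unfold Sub; rw [Set.Finite.mem_toFinset]; rfl
lemma mem_PC {n : ℕ} {S : Lt} : S ∈ PC p n ↔ PCl p S ∧ ix S = p ^ n := by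
  unfold PC; rw [Set.Finite.mem_toFinset]; rfl

/-- shift of a sequence -/
def sh (d : ℕ) (g : ℕ → ℕ) (n : ℕ) : ℕ := if d ≤ n then g (n - d) else 0

lemma loc_sum1 (w : Lt → ℕ) (n : ℕ) :
    ∑ S ∈ (Sub p n).filter (fun S => S ≤ P p * ⊤), w S = sh 3 (fun m => ∑ M ∈ PC p m, w (P p * M)) n := by
  have hp := hpf.out
  unfold sh
  split_ifs with h
  · symm
    refine Finset.sum_bij (fun M _ => P p * M) ?_ ?_ ?_ ?_
    · intro M hM
      rw [mem_PC] at hM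
      rw [Finset.mem_filter, mem_Sub, cl_P hp, ix_P hp, hM.2, ← pow_add]
      refine ⟨⟨hM.1, by congr 1; omega⟩, mul_le_mul' le_rfl le_top⟩
    · intro M _ M' _ h
      exact (P_inj hp).1 h
    · intro S hS
      rw [Finset.mem_filter, mem_Sub] at hS
      obtain ⟨⟨h1, h2⟩, h3⟩ := hS
      obtain ⟨M, rfl⟩ := exists_P h3
      refine ⟨M, ?_, rfl⟩
      rw [mem_PC]
      rw [cl_P hp] at h1
      rw [ix_P hp] at h2
      refine ⟨h1, ?_⟩
      apply Nat.eq_of_mul_eq_mul_left (pow_pos hp.pos 3)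
      rw [h2, ← pow_add]; congr 1; omega
    · intros; rfl
  · apply Finset.sum_eq_zero
    intro S hS
    exfalso
    rw [Finset.mem_filter, mem_Sub] at hS
    obtain ⟨⟨h1, h2⟩, h3⟩ := hS
    obtain ⟨M, rfl⟩ := exists_P h3
    rw [ix_P hp] at h2
    have := (Nat.pow_dvd_pow_iff_le_right hp.one_lt).1 (Dvd.intro _ h2)
    omega

def gen (M : Lt) : Lt := sInf {C | Cl C ∧ M ≤ C}

lemma gen_cl (M : Lt) : Cl (gen M) := by
  apply le_sInf
  intro C hC
  exact (mul_le_mul' (sInf_le hC) (sInf_le hC)).trans hC.1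
lemma le_gen (M : Lt) : M ≤ gen M := le_sInf fun _ h => h.2
lemma gen_Gn (M : Lt) : Gn M (gen M) := fun _ h h' => sInf_le ⟨h, h'⟩

lemma pp_of_Sub {n : ℕ} {B : Lt} (h : B ∈ Sub p n) : pp p B := pp_of_ix (mem_Sub.1 h).2

noncomputable def FibF (p k : ℕ) (B : Lt) : Finset Lt :=
  if h : (Fib p k B).Finite then h.toFinset else ∅

lemma mem_FibF {k : ℕ} {B M : Lt} (hB : pp p B) : M ∈ FibF p k B ↔ M ∈ Fib p k B := by
  unfold FibF; rw [dif_pos (fib_finite hpf.out hB k), Set.Finite.mem_toFinset]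

lemma card_FibF {k : ℕ} {B : Lt} (hB : pp p B) : (FibF p k B).card = (Fib p k B).ncard := by
  unfold FibF; rw [dif_pos (fib_finite hpf.out hB k), Set.ncard_eq_toFinset_card _ (fib_finite hpf.out hB k)]

noncomputable def SubK (p : ℕ) [Fact p.Prime] (k m : ℕ) : Finset Lt := if k ≤ m then Sub p (m - k) else ∅

lemma mem_SubK {k m : ℕ} {B : Lt} : B ∈ SubK p k m ↔ k ≤ m ∧ Cl B ∧ ix B = p ^ (m - k) := by
  unfold SubK
  split_ifs with h
  · rw [mem_Sub]; tauto
  · simp; tauto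

lemma pc_sum (u : Lt → ℕ) (m : ℕ) :
    ∑ M ∈ PC p m, u M =
      ∑ k ∈ Finset.range 4, sh k (fun j => ∑ B ∈ Sub p j, ∑ M ∈ FibF p k B, u M) m := by
  have hp := hpf.out
  have e : ∀ k, sh k (fun j => ∑ B ∈ Sub p j, ∑ M ∈ FibF p k B, u M) m =
      ∑ B ∈ SubK p k m, ∑ M ∈ FibF p k B, u M := by
    intro k; unfold sh SubK; split_ifs <;> simp
  simp only [e]
  rw [Finset.sum_sigma', Finset.sum_sigma']
  symm
  refine Finset.sum_bij (fun x _ => x.2) ?_ ?_ ?_ ?_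
  · rintro ⟨⟨k, B⟩, M⟩ h
    simp only [Finset.mem_sigma, mem_SubK] at h
    obtain ⟨⟨h0, h1, h2, h3⟩, h4⟩ := h
    rw [mem_FibF (pp_of_ix h3)] at h4
    rw [mem_PC]
    refine ⟨h4.2.1, ?_⟩
    have := rx_mul_ix h4.1
    rw [h4.2.2.1, h3, ← pow_add] at this
    rw [← this]; congr 1; omega
  · rintro ⟨⟨k, B⟩, M⟩ h ⟨⟨k', B'⟩, M'⟩ h' e
    simp only [Finset.mem_sigma, mem_SubK] at h h' e
    subst e
    obtain ⟨⟨h0, h1, h2, h3⟩, h4⟩ := h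
    obtain ⟨⟨h0', h1', h2', h3'⟩, h4'⟩ := h'
    rw [mem_FibF (pp_of_ix h3)] at h4
    rw [mem_FibF (pp_of_ix h3')] at h4'
    have : B = B' := le_antisymm (h4.2.2.2 _ h2' h4'.1) (h4'.2.2.2 _ h2 h4.1)
    subst this
    have : k = k' := pow_inj hp (h4.2.2.1.symm.trans h4'.2.2.1)
    subst this
    rfl
  · intro M hM
    rw [mem_PC] at hM
    have ppM : pp p M := pp_of_ix hM.2
    have ppB := pp_mono (le_gen M) ppM
    obtain ⟨k, hk⟩ := rx_of_pp hp ppM (le_gen M)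
    have hF : M ∈ Fib p k (gen M) := ⟨le_gen M, hM.1, hk, gen_Gn M⟩
    have hk4 : k < 4 := by
      by_contra h
      rw [fib_big hp (gen_cl M) ppB (by omega)] at hF
      exact hF
    have hix := rx_mul_ix (le_gen M)
    obtain ⟨j, hj⟩ := ix_of_pp hp ppB
    rw [hk, hM.2, hj, ← pow_add] at hix
    have hix' := pow_inj hp hix
    refine ⟨⟨⟨k, gen M⟩, M⟩, ?_, rfl⟩
    simp only [Finset.mem_sigma, mem_SubK, mem_FibF ppB]
    refine ⟨⟨Finset.mem_range.2 hk4, by omega, gen_cl M, ?_⟩, hF⟩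
    rw [hj]; congr 1; omega
  · intros; rfl

lemma sh_sh (a b : ℕ) (g : ℕ → ℕ) (n : ℕ) : sh a (sh b g) n = sh (a + b) g n := by
  unfold sh
  by_cases h : a + b ≤ n
  · rw [if_pos (by omega), if_pos (by omega), if_pos h, Nat.sub_sub]
  · rw [if_neg h]
    split_ifs <;> first | rfl | omega

noncomputable def F0 (p : ℕ) [Fact p.Prime] (n : ℕ) : ℕ := (Sub p n).card
noncomputable def H3 (p : ℕ) [Fact p.Prime] (n : ℕ) : ℕ := ∑ S ∈ Sub p n, h3 p S
noncomputable def H2 (p : ℕ) [Fact p.Prime] (n : ℕ) : ℕ := ∑ S ∈ Sub p n, h2 p S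

lemma sh_congr {d : ℕ} {g g' : ℕ → ℕ} (h : ∀ n, g n = g' n) (n : ℕ) : sh d g n = sh d g' n := by
  rw [funext h]

lemma loc_sum (w : Lt → ℕ) (c : ℕ → ℕ)
    (hw : ∀ k B M, Cl B → pp p B → M ∈ Fib p k B → k < 4 → w (P p * M) = c k) (n : ℕ) :
    ∑ S ∈ (Sub p n).filter (fun S => S ≤ P p * ⊤), w S =
      sh 3 (fun m => c 0 * F0 p m) n + sh 4 (fun m => c 1 * H3 p m) n
      + sh 5 (fun m => c 2 * H2 p m) n + sh 6 (fun m => c 3 * (p * H2 p m)) n := by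
  have hp := hpf.out
  rw [loc_sum1]
  have hk : ∀ k < 4, ∀ j, ∑ B ∈ Sub p j, ∑ M ∈ FibF p k B, w (P p * M) =
      c k * ∑ B ∈ Sub p j, (Fib p k B).ncard := by
    intro k hk j
    rw [Finset.mul_sum]
    apply Finset.sum_congr rfl
    intro B hB
    have ppB := pp_of_Sub hB
    rw [Finset.sum_congr rfl (g := fun _ => c k), Finset.sum_const, card_FibF ppB, smul_eq_mul, mul_comm]
    intro M hM
    rw [mem_FibF ppB] at hM
    exact hw k B M (mem_Sub.1 hB).1 ppB hM hk
  have e0 : ∀ j, ∑ B ∈ Sub p j, (Fib p 0 B).ncard = F0 p j := by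
    intro j; unfold F0; rw [Finset.card_eq_sum_ones]
    apply Finset.sum_congr rfl
    intro B hB
    rw [fib0 (mem_Sub.1 hB).1, Set.ncard_singleton]
  have e1 : ∀ j, ∑ B ∈ Sub p j, (Fib p 1 B).ncard = H3 p j := by
    intro j; unfold H3
    apply Finset.sum_congr rfl
    intro B hB
    rw [fib1 hp (mem_Sub.1 hB).1]; rfl
  have e2 : ∀ j, ∑ B ∈ Sub p j, (Fib p 2 B).ncard = H2 p j := by
    intro j; unfold H2
    apply Finset.sum_congr rfl
    intro B hB
    rw [fib2 hp (mem_Sub.1 hB).1 (pp_of_Sub hB)]; rfl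
  have e3 : ∀ j, ∑ B ∈ Sub p j, (Fib p 3 B).ncard = p * H2 p j := by
    intro j
    rw [← e2, Finset.mul_sum]
    apply Finset.sum_congr rfl
    intro B hB
    rw [fib3_card hp (mem_Sub.1 hB).1 (pp_of_Sub hB)]
  have key : ∀ m, ∑ M ∈ PC p m, w (P p * M) =
      sh 0 (fun m => c 0 * F0 p m) m + sh 1 (fun m => c 1 * H3 p m) m
      + sh 2 (fun m => c 2 * H2 p m) m + sh 3 (fun m => c 3 * (p * H2 p m)) m := by
    intro m
    rw [pc_sum]
    simp only [Finset.sum_range_succ, Finset.sum_range_zero, zero_add]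
    rw [sh_congr (hk 0 (by norm_num)), sh_congr (hk 1 (by norm_num)),
      sh_congr (hk 2 (by norm_num)), sh_congr (hk 3 (by norm_num))]
    simp only [e0, e1, e2, e3]
  rw [sh_congr key]
  have hadd : ∀ (d : ℕ) (f g : ℕ → ℕ) (n : ℕ), sh d (fun m => f m + g m) n = sh d f n + sh d g n := by
    intro d f g n; unfold sh; split_ifs <;> simp
  rw [hadd, hadd, hadd]
  rw [show sh 3 (fun n => sh 0 (fun m => c 0 * F0 p m) n) n = _ from sh_sh 3 0 _ n,
    show sh 3 (fun n => sh 1 (fun m => c 1 * H3 p m) n) n = _ from sh_sh 3 1 _ n,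
    show sh 3 (fun n => sh 2 (fun m => c 2 * H2 p m) n) n = _ from sh_sh 3 2 _ n,
    show sh 3 (fun n => sh 3 (fun m => c 3 * (p * H2 p m)) n) n = _ from sh_sh 3 3 _ n]

/-- sum over nonlocal subrings -/
noncomputable def NL (p : ℕ) [Fact p.Prime] (w : Lt → ℕ) (n : ℕ) : ℕ :=
  ∑ S ∈ (Sub p n).filter (fun S => ¬ S ≤ P p * ⊤), w S

lemma rec_F (n : ℕ) : F0 p n = NL p (fun _ => 1) n + (sh 3 (F0 p) n + sh 4 (H3 p) n
    + sh 5 (H2 p) n + sh 6 (fun m => p * H2 p m) n) := by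
  have h := loc_sum (p := p) (fun _ => 1) (fun _ => 1) (by intros; rfl) n
  simp only [one_mul] at h
  rw [← show _ = _ from h]
  unfold NL F0
  rw [Finset.card_eq_sum_ones, add_comm, Finset.sum_filter_add_sum_filter_not]

lemma rec_H3 (n : ℕ) : H3 p n = NL p (h3 p) n + (sh 4 (fun m => p ^ 2 * H3 p m) n
    + sh 5 (fun m => p ^ 2 * H2 p m) n + sh 6 (fun m => (p ^ 2 + p) * (p * H2 p m)) n) := by
  have h := loc_sum (p := p) (h3 p) (fun k => if k = 0 then 0 else if k = 3 then p ^ 2 + p else p ^ 2) (by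
    intro k B M hB ppB hM hk
    interval_cases k
    · rw [fib0 hB] at hM; obtain rfl := hM; exact (stat0 hpf.out hB ppB).1
    · exact (stat1 hpf.out hB ppB hM).1
    · exact (stat2 hpf.out hB ppB hM).1
    · exact (stat3 hpf.out hB ppB hM).1) n
  have h0 : sh 3 (fun m => 0) n = 0 := by unfold sh; split_ifs <;> rfl
  simp at h
  rw [h0, zero_add] at h
  rw [← show _ = _ from h]
  unfold NL H3
  rw [add_comm, Finset.sum_filter_add_sum_filter_not]

lemma rec_H2 (n : ℕ) : H2 p n = NL p (h2 p) n + sh 6 (fun m => p ^ 2 * (p * H2 p m)) n := by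
  have h := loc_sum (p := p) (h2 p) (fun k => if k = 3 then p ^ 2 else 0) (by
    intro k B M hB ppB hM hk
    interval_cases k
    · rw [fib0 hB] at hM; obtain rfl := hM; exact (stat0 hpf.out hB ppB).2
    · exact (stat1 hpf.out hB ppB hM).2
    · exact (stat2 hpf.out hB ppB hM).2
    · exact (stat3 hpf.out hB ppB hM).2) n
  have h0 : ∀ d, sh d (fun m => 0) n = 0 := by intro d; unfold sh; split_ifs <;> rfl
  simp at h
  rw [h0, h0, h0, zero_add, zero_add, zero_add] at h
  rw [← show _ = _ from h]
  unfold NL H2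
  rw [add_comm, Finset.sum_filter_add_sum_filter_not]

end
end ZZ3

namespace ZZ3
open Submodule
open scoped Classical

section
variable {p : ℕ} [hpf : Fact p.Prime]

/-- the multiplication table -/
def TT (k a r b : ZMod p) (u v : V3 p) : V3 p :=
  ![u 0 * v 0, k * (u 0 * v 1 + u 1 * v 0) + a * (u 1 * v 1), r * (u 1 * v 1) + b * (u 2 * v 2)]

/-- `S` reduces mod `p` to a (twisted) table algebra -/
def HasType (p : ℕ) [Fact p.Prime] (S : Lt) (k a r b : ZMod p) : Prop :=
  ∃ (f : S →ₗ[ℤ] V3 p) (l : V3 p), Red p S f ∧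
    ∀ (s t : R3) (hs : s ∈ S) (ht : t ∈ S), ∃ h : s * t ∈ S,
      f ⟨s * t, h⟩ = TT k a r b (f ⟨s, hs⟩) (f ⟨t, ht⟩) +
        dot l (f ⟨s, hs⟩) • f ⟨t, ht⟩ + dot l (f ⟨t, ht⟩) • f ⟨s, hs⟩

/-- closed subspaces -/
def ClV (k a r b : ZMod p) (U : Submodule (ZMod p) (V3 p)) : Prop :=
  ∀ u ∈ U, ∀ v ∈ U, TT k a r b u v ∈ U

lemma cl_down {S : Lt} {k a r b : ZMod p} {f : S →ₗ[ℤ] V3 p} {l : V3 p} (hf : Red p S f)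
    (h : ∀ (s t : R3) (hs : s ∈ S) (ht : t ∈ S), ∃ h : s * t ∈ S,
      f ⟨s * t, h⟩ = TT k a r b (f ⟨s, hs⟩) (f ⟨t, ht⟩) +
        dot l (f ⟨s, hs⟩) • f ⟨t, ht⟩ + dot l (f ⟨t, ht⟩) • f ⟨s, hs⟩)
    (U : Submodule (ZMod p) (V3 p)) : Cl (down f U) ↔ ClV k a r b U := by
  constructor
  · intro hc u hu v hv
    obtain ⟨⟨s, hs⟩, rfl⟩ := hf.surj u
    obtain ⟨⟨t, ht⟩, rfl⟩ := hf.surj v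
    obtain ⟨hst, e⟩ := h s t hs ht
    have h1 : s * t ∈ down f U := hc (mul_mem_mul (mem_down.2 ⟨hs, hu⟩) (mem_down.2 ⟨ht, hv⟩))
    obtain ⟨_, h2⟩ := mem_down.1 h1
    rw [e] at h2
    have h3 := U.sub_mem (U.sub_mem h2 (U.smul_mem (dot l (f ⟨t, ht⟩)) hu)) (U.smul_mem (dot l (f ⟨s, hs⟩)) hv)
    convert h3 using 1
    abel
  · intro hc
    unfold Cl
    rw [Submodule.mul_le]
    intro s hs t ht
    obtain ⟨hs, hu⟩ := mem_down.1 hs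
    obtain ⟨ht, hv⟩ := mem_down.1 ht
    obtain ⟨hst, e⟩ := h s t hs ht
    rw [mem_down]
    refine ⟨hst, ?_⟩
    rw [e]
    exact U.add_mem (U.add_mem (hc _ hu _ hv) (U.smul_mem _ hv)) (U.smul_mem _ hu)

lemma gn_down {S : Lt} {k a r b : ZMod p} {f : S →ₗ[ℤ] V3 p} {l : V3 p} (hf : Red p S f)
    (h : ∀ (s t : R3) (hs : s ∈ S) (ht : t ∈ S), ∃ h : s * t ∈ S,
      f ⟨s * t, h⟩ = TT k a r b (f ⟨s, hs⟩) (f ⟨t, ht⟩) +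
        dot l (f ⟨s, hs⟩) • f ⟨t, ht⟩ + dot l (f ⟨t, ht⟩) • f ⟨s, hs⟩)
    (x : NN p) : Gn (down f (line x)) S ↔ ∀ U, ClV k a r b U → nv x ∈ U → U = ⊤ := by
  have hS : Cl S := by
    unfold Cl; rw [Submodule.mul_le]; intro s hs t ht; exact (h s t hs ht).1
  constructor
  · intro hg U hU hx
    have h1 := hg (down f U) ((cl_down hf h U).2 hU) ((down_le_down hf.surj).2 (by
      unfold line; rw [span_le]; simpa using hx))
    apply down_inj hf.surj
    rw [down_top]
    exact le_antisymm (down_le _ _) h1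
  · intro hg C hC hle
    obtain ⟨U, hU⟩ := down_surj (p := p) hf.surj (W := C ⊓ S)
      (le_trans ((down_le_down hf.surj).2 bot_le) (le_inf hle (down_le _ _))) inf_le_right
    have h1 : ClV k a r b U := (cl_down hf h U).1 (by rw [hU]; exact cl_inf hC hS)
    have h2 : line x ≤ U := by
      rw [← down_le_down hf.surj, hU]; exact le_inf hle (down_le _ _)
    have h3 := hg U h1 (h2 (mem_span_singleton_self _))
    rw [h3, down_top] at hU
    exact inf_eq_right.1 hU.symm

lemma h3_type {S : Lt} {k a r b : ZMod p} (h : HasType p S k a r b) :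
    h3 p S = Nat.card {x : NN p // ¬ ClV k a r b (plane x)} := by
  obtain ⟨f, l, hf, h⟩ := h
  unfold h3
  rw [plane_count hf]
  simp only [cl_down hf h]

lemma h2_type {S : Lt} {k a r b : ZMod p} (h : HasType p S k a r b) :
    h2 p S = Nat.card {x : NN p // ∀ U, ClV k a r b U → nv x ∈ U → U = ⊤} := by
  obtain ⟨f, l, hf, h⟩ := h
  unfold h2
  rw [line_count hf]
  simp only [gn_down hf h]

lemma cl_plane1 (k a r b m n : ZMod p) : ClV k a r b (plane (.inl (m, n))) ↔
    m ^ 2 - 2 * k * m ^ 2 + a * m + r * n = 0 ∧ m * n - k * m * n = 0 ∧ n ^ 2 + b * n = 0 := by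
  simp only [ClV, mem_plane]
  constructor
  · intro h
    have h1 := h ![-m, 1, 0] (by simp [nv]) ![-m, 1, 0] (by simp [nv])
    have h2 := h ![-m, 1, 0] (by simp [nv]) ![-n, 0, 1] (by simp [nv])
    have h3 := h ![-n, 0, 1] (by simp [nv]) ![-n, 0, 1] (by simp [nv])
    simp [nv, TT] at h1 h2 h3
    refine ⟨?_, ?_, ?_⟩
    · linear_combination h1
    · linear_combination h2
    · linear_combination h3
  · rintro ⟨h1, h2, h3⟩ u hu v hv
    simp [nv, TT] at hu hv ⊢
    have hu' : u 0 = - m * u 1 - n * u 2 := by linear_combination hu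
    have hv' : v 0 = - m * v 1 - n * v 2 := by linear_combination hv
    rw [hu', hv']
    linear_combination u 1 * v 1 * h1 + (u 1 * v 2 + u 2 * v 1) * h2 + u 2 * v 2 * h3

lemma cl_plane2 (k a r b n : ZMod p) : ClV k a r b (plane (.inr (.inl n))) ↔
    k * n = 0 ∧ a * n ^ 2 + r * n ^ 3 + b * n = 0 := by
  simp only [ClV, mem_plane]
  constructor
  · intro h
    have h1 := h ![1, 0, 0] (by simp [nv]) ![0, -n, 1] (by simp [nv])
    have h2 := h ![0, -n, 1] (by simp [nv]) ![0, -n, 1] (by simp [nv])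
    simp [nv, TT] at h1 h2
    refine ⟨by simpa using h1, ?_⟩
    linear_combination h2
  · rintro ⟨h1, h2⟩ u hu v hv
    simp [nv, TT] at hu hv ⊢
    have hu' : u 1 = - n * u 2 := by linear_combination hu
    have hv' : v 1 = - n * v 2 := by linear_combination hv
    rw [hu', hv']
    linear_combination -(u 0 * v 2 + u 2 * v 0) * h1 + u 2 * v 2 * h2

lemma cl_plane3 (k a r b : ZMod p) (q : Unit) : ClV k a r b (plane (.inr (.inr q))) ↔ r = 0 := by
  simp only [ClV, mem_plane]
  constructor
  · intro h
    have h1 := h ![0, 1, 0] (by simp [nv]) ![0, 1, 0] (by simp [nv])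
    simpa [nv, TT] using h1
  · rintro h u hu v hv
    simp [nv, TT] at hu hv ⊢
    simp [h, hu]

lemma card_not_mem (Q : NN p → Prop) (E : Finset (NN p)) (h : ∀ x, Q x ↔ x ∈ E) :
    Nat.card {x // ¬ Q x} = p ^ 2 + p + 1 - E.card := by
  have h1 : Nat.card {x // ¬ Q x} = (Eᶜ).card := by
    rw [Nat.card_eq_fintype_card, Fintype.card_subtype]
    congr 1
    ext x; simp [h]
  rw [h1, Finset.card_compl, ← card_NN, Nat.card_eq_fintype_card]

lemma neg1 : (-1 : ZMod p) ≠ 0 := by simp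

lemma h3_A {S : Lt} (h : HasType p S 0 1 0 1) : h3 p S = p ^ 2 + p - 5 := by
  rw [h3_type h, card_not_mem _ {.inl (0, 0), .inl (-1, 0), .inl (0, -1), .inr (.inl 0), .inr (.inl (-1)), .inr (.inr ())}]
  · have : ({.inl (0, 0), .inl (-1, 0), .inl (0, -1), .inr (.inl 0), .inr (.inl (-1)), .inr (.inr ())} : Finset (NN p)).card = 6 := by
      repeat rw [Finset.card_insert_of_notMem (by simp)]
      simp
    rw [this]; omega
  · rintro (⟨m, n⟩ | n | q)
    · rw [cl_plane1]
      simp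
      grind
    · rw [cl_plane2]; simp
      grind
    · rw [cl_plane3]; simp

lemma h3_B {S : Lt} (h : HasType p S 0 1 0 0) : h3 p S = p ^ 2 + p - 3 := by
  rw [h3_type h, card_not_mem _ {.inl (0, 0), .inl (-1, 0), .inr (.inl 0), .inr (.inr ())}]
  · have : ({.inl (0, 0), .inl (-1, 0), .inr (.inl 0), .inr (.inr ())} : Finset (NN p)).card = 4 := by
      repeat rw [Finset.card_insert_of_notMem (by simp)]
      simp
    rw [this]; omega
  · rintro (⟨m, n⟩ | n | q)
    · rw [cl_plane1]
      simp
      grind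
    · rw [cl_plane2]; simp
    · rw [cl_plane3]; simp

lemma h3_C {S : Lt} (h : HasType p S 1 0 0 0) : h3 p S = p ^ 2 + p - 2 := by
  rw [h3_type h, card_not_mem _ {.inl (0, 0), .inr (.inl 0), .inr (.inr ())}]
  · have : ({.inl (0, 0), .inr (.inl 0), .inr (.inr ())} : Finset (NN p)).card = 3 := by
      repeat rw [Finset.card_insert_of_notMem (by simp)]
      simp
    rw [this]; omega
  · rintro (⟨m, n⟩ | n | q)
    · rw [cl_plane1]
      simp
      grind
    · rw [cl_plane2]; simp
    · rw [cl_plane3]; simp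

lemma h3_D1 {S : Lt} {r : ZMod p} (hr : r ≠ 0) (h : HasType p S 0 0 r 0) : h3 p S = p ^ 2 + p - 1 := by
  rw [h3_type h, card_not_mem _ {.inl (0, 0), .inr (.inl 0)}]
  · have : ({.inl (0, 0), .inr (.inl 0)} : Finset (NN p)).card = 2 := by
      repeat rw [Finset.card_insert_of_notMem (by simp)]
      simp
    rw [this]; omega
  · rintro (⟨m, n⟩ | n | q)
    · rw [cl_plane1]
      simp
      grind
    · rw [cl_plane2]; simp [hr]
    · rw [cl_plane3]; simp [hr]

lemma h3_D0 {S : Lt} (h : HasType p S 0 0 0 0) : h3 p S = p ^ 2 - 1 := by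
  rw [h3_type h, card_not_mem _ (insert (.inl (0, 0)) (Finset.univ.map ⟨Sum.inr, Sum.inr_injective⟩))]
  · rw [Finset.card_insert_of_notMem (by simp), Finset.card_map, Finset.card_univ]
    simp [ZMod.card]
    omega
  · rintro (⟨m, n⟩ | n | q)
    · rw [cl_plane1]
      simp
      grind
    · rw [cl_plane2]; simp
    · rw [cl_plane3]; simp

/-- generating lines -/
lemma gen_of_det {k a r b m n : ZMod p} (U : Submodule (ZMod p) (V3 p)) (hU : ClV k a r b U)
    (hx : nv (.inl (m, n)) ∈ U) (u1 u2 w1 w2 : ZMod p)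
    (hu1 : u1 = 2 * k * m + a * m ^ 2) (hu2 : u2 = r * m ^ 2 + b * n ^ 2)
    (hw1 : w1 = k * (u1 + m) + a * m * u1) (hw2 : w2 = r * m * u1 + b * n * u2)
    (hd : (u1 - m) * (w2 - n) - (u2 - n) * (w1 - m) ≠ 0) : U = ⊤ := by
  have h2 : ![1, u1, u2] ∈ U := by
    have := hU _ hx _ hx
    convert this using 1
    ext i; fin_cases i <;> simp [TT, nv, hu1, hu2] <;> ring
  have h3 : ![1, w1, w2] ∈ U := by
    have := hU _ hx _ h2
    convert this using 1
    ext i; fin_cases i <;> simp [TT, nv, hw1, hw2] <;> ring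
  rw [eq_top_iff]
  intro v _
  set d := (u1 - m) * (w2 - n) - (u2 - n) * (w1 - m) with hd'
  have h4 : d • v ∈ U := by
    have := U.add_mem (U.add_mem
      (U.smul_mem (v 0 * (u1 * w2 - u2 * w1) - v 1 * (w2 - u2) + v 2 * (w1 - u1)) hx)
      (U.smul_mem (-(v 0 * (m * w2 - n * w1)) + v 1 * (w2 - n) - v 2 * (w1 - m)) h2))
      (U.smul_mem (v 0 * (m * u2 - n * u1) - v 1 * (u2 - n) + v 2 * (u1 - m)) h3)
    convert this using 1
    ext i; fin_cases i <;> simp [nv, hd'] <;> ring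
  have := U.smul_mem d⁻¹ h4
  rwa [smul_smul, inv_mul_cancel₀ hd, one_smul] at this

lemma plane_ne_top (x : NN p) : plane x ≠ ⊤ := by
  intro h
  have := index_plane x
  rw [h] at this
  simp at this
  exact hpf.out.one_lt.ne this

lemma not_gen {k a r b : ZMod p} (x y : NN p) (hc : ClV k a r b (plane y)) (h : nv x ∈ plane y) :
    ¬ ∀ U, ClV k a r b U → nv x ∈ U → U = ⊤ := fun H => plane_ne_top y (H _ hc h)

lemma not_gen_inr {k a r b : ZMod p} (x : ZMod p ⊕ Unit) :
    ¬ ∀ U, ClV k a r b U → nv (.inr x) ∈ U → U = ⊤ := by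
  apply not_gen _ (.inl (0, 0))
  · rw [cl_plane1]; simp
  · rw [mem_plane]; rcases x with n | _ <;> simp [nv]

lemma card_inl (Q : NN p → Prop) (Q' : ZMod p → ZMod p → Prop) (h : ∀ m n, Q (.inl (m, n)) ↔ Q' m n)
    (h' : ∀ x, ¬ Q (.inr x)) :
    Nat.card {x // Q x} = ∑ m : ZMod p, (Finset.univ.filter (fun n => Q' m n)).card := by
  rw [Nat.card_congr (Equiv.subtypeSum), Nat.card_sum]
  haveI : IsEmpty {x // Q (Sum.inr x)} := ⟨fun x => h' x.1 x.2⟩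
  rw [Nat.card_of_isEmpty (α := {x // Q (Sum.inr x)}), add_zero, Nat.card_eq_fintype_card, Fintype.card_subtype]
  rw [Finset.card_filter, ← Finset.univ_product_univ, Finset.sum_product]
  apply Finset.sum_congr rfl
  intro m _
  rw [Finset.card_filter]
  simp only [h]

lemma card_ne (E : Finset (ZMod p)) : (Finset.univ.filter (fun n => n ∉ E)).card = p - E.card := by
  have : (Finset.univ.filter (fun n => n ∉ E)) = Eᶜ := by ext; simp
  rw [this, Finset.card_compl, ZMod.card]

lemma card_two (g : ZMod p → ℕ) (E : Finset (ZMod p)) (c : ℕ) (h : ∀ m, m ∉ E → g m = c)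
    (h0 : ∀ m, m ∈ E → g m = 0) : ∑ m, g m = (p - E.card) * c := by
  have h1 : ∑ m, g m = ∑ m, if m ∉ E then c else 0 := by
    apply Finset.sum_congr rfl
    intro m _
    by_cases hm : m ∈ E
    · simp [hm, h0 m hm]
    · simp [hm, h m hm]
  rw [h1, ← Finset.sum_filter, Finset.sum_const, card_ne, smul_eq_mul]

lemma h2_D0 {S : Lt} (h : HasType p S 0 0 0 0) : h2 p S = 0 := by
  rw [h2_type h]
  have : IsEmpty {x : NN p // ∀ U, ClV 0 0 0 0 U → nv x ∈ U → U = ⊤} := by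
    constructor
    rintro ⟨x, hx⟩
    rcases x with ⟨m, n⟩ | x
    · revert hx
      by_cases hm : m = 0
      · apply not_gen _ (.inr (.inl 0))
        · rw [cl_plane2]; simp
        · rw [mem_plane]; simp [nv, hm]
      · by_cases hn : n = 0
        · apply not_gen _ (.inr (.inr ()))
          · rw [cl_plane3]
          · rw [mem_plane]; simp [nv, hn]
        · apply not_gen _ (.inr (.inl (-m / n)))
          · rw [cl_plane2]; simp
          · rw [mem_plane]; simp [nv]; field_simp; ring
    · exact not_gen_inr x hx
  exact Nat.card_of_isEmpty

lemma h2_D1 {S : Lt} {r : ZMod p} (hr : r ≠ 0) (h : HasType p S 0 0 r 0) : h2 p S = p * (p - 1) := by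
  rw [h2_type h, card_inl _ (fun m n => m ≠ 0) ?_ not_gen_inr]
  · rw [card_two _ {0} p]
    · simp [mul_comm]
    · intro m hm
      simp at hm
      simp [hm, Finset.filter_true_of_mem]
    · intro m hm
      simp at hm
      simp [hm]
  · intro m n
    constructor
    · intro H hm
      refine not_gen (.inl (m, n)) (.inr (.inl 0)) ?_ ?_ H
      · rw [cl_plane2]; simp
      · rw [mem_plane]; simp [nv, hm]
    · intro hm U hU hx
      apply gen_of_det U hU hx _ _ _ _ rfl rfl rfl rfl
      have : r * m ^ 3 ≠ 0 := mul_ne_zero hr (pow_ne_zero _ hm)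
      intro H; apply this; linear_combination H

lemma h2_C {S : Lt} (h : HasType p S 1 0 0 0) : h2 p S = (p - 1) ^ 2 := by
  rw [h2_type h, card_inl _ (fun m n => m ≠ 0 ∧ n ≠ 0) ?_ not_gen_inr]
  · rw [card_two _ {0} (p - 1)]
    · simp [sq]
    · intro m hm
      have h1 := card_ne ({0} : Finset (ZMod p))
      rw [Finset.card_singleton] at h1
      simp at hm
      rw [← h1]; congr 1; ext n; simp [hm]
    · intro m hm
      simp at hm
      simp [hm]
  · intro m n
    constructor
    · intro H
      constructor
      · intro hm
        refine not_gen (.inl (m, n)) (.inr (.inl 0)) ?_ ?_ H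
        · rw [cl_plane2]; simp
        · rw [mem_plane]; simp [nv, hm]
      · intro hm
        refine not_gen (.inl (m, n)) (.inr (.inr ())) ?_ ?_ H
        · rw [cl_plane3]
        · rw [mem_plane]; simp [nv, hm]
    · rintro ⟨hm, hn⟩ U hU hx
      apply gen_of_det U hU hx _ _ _ _ rfl rfl rfl rfl
      have : m * n ≠ 0 := mul_ne_zero hm hn
      intro H; apply this; linear_combination H

lemma h2_B {S : Lt} (h : HasType p S 0 1 0 0) : h2 p S = (p - 2) * (p - 1) := by
  rw [h2_type h, card_inl _ (fun m n => (m ≠ 0 ∧ m ≠ 1) ∧ n ≠ 0) ?_ not_gen_inr]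
  · rw [card_two _ {0, 1} (p - 1)]
    · simp
    · intro m hm
      have h1 := card_ne ({0} : Finset (ZMod p))
      rw [Finset.card_singleton] at h1
      simp at hm
      rw [← h1]; congr 1; ext n; simp [hm]
    · intro m hm
      rw [Finset.card_eq_zero]; ext n; simp at hm ⊢; tauto
  · intro m n
    constructor
    · intro H
      refine ⟨⟨?_, ?_⟩, ?_⟩
      · intro hm
        refine not_gen (.inl (m, n)) (.inr (.inl 0)) ?_ ?_ H
        · rw [cl_plane2]; simp
        · rw [mem_plane]; simp [nv, hm]
      · intro hm
        refine not_gen (.inl (m, n)) (.inl (-1, 0)) ?_ ?_ H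
        · rw [cl_plane1]; simp
        · rw [mem_plane]; simp [nv, hm]
      · intro hm
        refine not_gen (.inl (m, n)) (.inr (.inr ())) ?_ ?_ H
        · rw [cl_plane3]
        · rw [mem_plane]; simp [nv, hm]
    · rintro ⟨⟨hm, hm1⟩, hn⟩ U hU hx
      apply gen_of_det U hU hx _ _ _ _ rfl rfl rfl rfl
      have : m ^ 2 * (m - 1) * n ≠ 0 := mul_ne_zero (mul_ne_zero (pow_ne_zero _ hm) (sub_ne_zero.2 hm1)) hn
      intro H; apply this; linear_combination H

lemma h2_A {S : Lt} (h : HasType p S 0 1 0 1) : h2 p S = (p - 2) * (p - 3) := by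
  rw [h2_type h, card_inl _ (fun m n => (m ≠ 0 ∧ m ≠ 1) ∧ n ≠ 0 ∧ n ≠ 1 ∧ n ≠ m) ?_ not_gen_inr]
  · rw [card_two _ {0, 1} (p - 3)]
    · simp
    · intro m hm
      have h1 := card_ne ({0, 1, m} : Finset (ZMod p))
      have h2 : ({0, 1, m} : Finset (ZMod p)).card = 3 := by
        simp at hm
        rw [Finset.card_insert_of_notMem (by simp; tauto), Finset.card_insert_of_notMem (by simp; tauto)]
        simp
      rw [h2] at h1
      rw [← h1]; congr 1; ext n; simp at hm ⊢; tauto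
    · intro m hm
      rw [Finset.card_eq_zero]; ext n; simp at hm ⊢; tauto
  · intro m n
    constructor
    · intro H
      refine ⟨⟨?_, ?_⟩, ?_, ?_, ?_⟩
      · intro hm
        refine not_gen (.inl (m, n)) (.inr (.inl 0)) ?_ ?_ H
        · rw [cl_plane2]; simp
        · rw [mem_plane]; simp [nv, hm]
      · intro hm
        refine not_gen (.inl (m, n)) (.inl (-1, 0)) ?_ ?_ H
        · rw [cl_plane1]; simp
        · rw [mem_plane]; simp [nv, hm]
      · intro hm
        refine not_gen (.inl (m, n)) (.inr (.inr ())) ?_ ?_ H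
        · rw [cl_plane3]
        · rw [mem_plane]; simp [nv, hm]
      · intro hm
        refine not_gen (.inl (m, n)) (.inl (0, -1)) ?_ ?_ H
        · rw [cl_plane1]; simp
        · rw [mem_plane]; simp [nv, hm]
      · intro hm
        refine not_gen (.inl (m, n)) (.inr (.inl (-1))) ?_ ?_ H
        · rw [cl_plane2]; simp
        · rw [mem_plane]; simp [nv, hm]
    · rintro ⟨⟨hm, hm1⟩, hn, hn1, hmn⟩ U hU hx
      apply gen_of_det U hU hx _ _ _ _ rfl rfl rfl rfl
      have : m * (m - 1) * (n * (n - 1) * (n - m)) ≠ 0 := mul_ne_zero (mul_ne_zero hm (sub_ne_zero.2 hm1))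
        (mul_ne_zero (mul_ne_zero hn (sub_ne_zero.2 hn1)) (sub_ne_zero.2 hmn))
      intro H; apply this; linear_combination H

end
end ZZ3

namespace ZZ3
open Submodule
open scoped Classical

/-- the map whose range is a lattice in Hermite normal form -/
def Tm (A B C x y z : ℤ) : R3 →ₗ[ℤ] R3 where
  toFun v := ![v 0 * A, v 0 * x + v 1 * B, v 0 * y + v 1 * z + v 2 * C]
  map_add' u v := by
    ext i; fin_cases i <;> simp <;> ring
  map_smul' c v := by
    ext i; fin_cases i <;> simp <;> ring

lemma Tm_apply (A B C x y z : ℤ) (v : R3) :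
    Tm A B C x y z v = ![v 0 * A, v 0 * x + v 1 * B, v 0 * y + v 1 * z + v 2 * C] := rfl

/-- lattice in Hermite normal form -/
def H (A B C x y z : ℤ) : Lt := LinearMap.range (Tm A B C x y z)

lemma mem_H {A B C x y z : ℤ} {v : R3} : v ∈ H A B C x y z ↔
    ∃ α β γ : ℤ, v 0 = α * A ∧ v 1 = α * x + β * B ∧ v 2 = α * y + β * z + γ * C := by
  unfold H
  rw [LinearMap.mem_range]
  constructor
  · rintro ⟨u, rfl⟩
    exact ⟨u 0, u 1, u 2, rfl, rfl, rfl⟩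
  · rintro ⟨α, β, γ, h0, h1, h2⟩
    refine ⟨![α, β, γ], ?_⟩
    ext i; fin_cases i <;> simp [Tm_apply, h0, h1, h2]

lemma Tm_inj {A B C : ℤ} (hA : A ≠ 0) (hB : B ≠ 0) (hC : C ≠ 0) (x y z : ℤ) :
    Function.Injective (Tm A B C x y z) := by
  rw [← LinearMap.ker_eq_bot, LinearMap.ker_eq_bot']
  intro v hv
  have h0 := congrFun hv 0
  have h1 := congrFun hv 1
  have h2 := congrFun hv 2
  simp only [Tm_apply, Matrix.cons_val_zero, Matrix.cons_val_one, Matrix.cons_val, Pi.zero_apply] at h0 h1 h2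
  have e0 : v 0 = 0 := by simpa [hA] using h0
  rw [e0] at h1 h2
  have e1 : v 1 = 0 := by simpa [hB] using h1
  rw [e1] at h2
  have e2 : v 2 = 0 := by simpa [hC] using h2
  ext i; fin_cases i <;> simp [e0, e1, e2]

noncomputable def He {A B C : ℤ} (hA : A ≠ 0) (hB : B ≠ 0) (hC : C ≠ 0) (x y z : ℤ) :
    R3 ≃ₗ[ℤ] H A B C x y z := LinearEquiv.ofInjective _ (Tm_inj hA hB hC x y z)

lemma He_apply {A B C : ℤ} (hA : A ≠ 0) (hB : B ≠ 0) (hC : C ≠ 0) (x y z : ℤ) (v : R3) :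
    ((He hA hB hC x y z v : H A B C x y z) : R3) = Tm A B C x y z v := rfl

lemma ix_H {A B C : ℤ} (hA : A ≠ 0) (hB : B ≠ 0) (hC : C ≠ 0) (x y z : ℤ) :
    ix (H A B C x y z) = (A * B * C).natAbs := by
  have h := Submodule.natAbs_det_equiv (H A B C x y z) (He hA hB hC x y z)
  have h1 : ix (H A B C x y z) = Nat.card (R3 ⧸ H A B C x y z) := rfl
  rw [h1, ← h]
  congr 1
  have h2 : ((H A B C x y z).subtype ∘ₗ AddMonoidHom.toIntLinearMap
      ((He hA hB hC x y z : R3 ≃ₗ[ℤ] H A B C x y z) : R3 →+ H A B C x y z)) = Tm A B C x y z := by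
    ext v : 1; rfl
  rw [h2, ← LinearMap.det_toMatrix', Matrix.det_fin_three]
  simp [LinearMap.toMatrix'_apply, Tm_apply]

noncomputable def Hb {A B C : ℤ} (hA : A ≠ 0) (hB : B ≠ 0) (hC : C ≠ 0) (x y z : ℤ) :
    Module.Basis (Fin 3) ℤ (H A B C x y z) := (Pi.basisFun ℤ (Fin 3)).map (He hA hB hC x y z)

lemma Hb_repr {A B C : ℤ} (hA : A ≠ 0) (hB : B ≠ 0) (hC : C ≠ 0) (x y z : ℤ) (v : R3)
    (h : Tm A B C x y z v ∈ H A B C x y z) (i : Fin 3) :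
    (Hb hA hB hC x y z).repr ⟨Tm A B C x y z v, h⟩ i = v i := by
  have : (⟨Tm A B C x y z v, h⟩ : H A B C x y z) = He hA hB hC x y z v := rfl
  rw [this]
  simp [Hb]

/-- multiplication in coordinates -/
def Mu {R : Type*} [CommRing R] (A B C x y z r s q u : R) (a b : Fin 3 → R) : Fin 3 → R :=
  ![A * (a 0 * b 0), q * (a 0 * b 0) + x * (a 0 * b 1 + a 1 * b 0) + B * (a 1 * b 1),
    u * (a 0 * b 0) + s * (a 0 * b 1 + a 1 * b 0) + y * (a 0 * b 2 + a 2 * b 0) + r * (a 1 * b 1)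
      + z * (a 1 * b 2 + a 2 * b 1) + C * (a 2 * b 2)]

lemma Tm_mul {A B C x y z r s q u : ℤ} (hr : r * C = z ^ 2 - B * z) (hs : s * C = (y - x) * z)
    (hq : q * B = x ^ 2 - A * x) (hu : u * C = y ^ 2 - A * y - q * z) (a b : R3) :
    Tm A B C x y z a * Tm A B C x y z b = Tm A B C x y z (Mu A B C x y z r s q u a b) := by
  ext i; fin_cases i
  · simp [Tm_apply, Mu]; ring
  · simp [Tm_apply, Mu]
    linear_combination -(a 0 * b 0) * hq
  · simp [Tm_apply, Mu]
    linear_combination -(a 1 * b 1) * hr - (a 0 * b 1 + a 1 * b 0) * hs - (a 0 * b 0) * hu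

lemma cl_H {A B C x y z : ℤ} (hA : A ≠ 0) (hB : B ≠ 0) (hC : C ≠ 0) : Cl (H A B C x y z) ↔
    ∃ r s q u : ℤ, r * C = z ^ 2 - B * z ∧ s * C = (y - x) * z ∧ q * B = x ^ 2 - A * x ∧
      u * C = y ^ 2 - A * y - q * z := by
  constructor
  · intro h
    have m1 : ![A, x, y] ∈ H A B C x y z := mem_H.2 ⟨1, 0, 0, by simp⟩
    have m2 : ![0, B, z] ∈ H A B C x y z := mem_H.2 ⟨0, 1, 0, by simp⟩
    obtain ⟨α, β, γ, e0, e1, e2⟩ := mem_H.1 (h (mul_mem_mul m2 m2))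
    obtain ⟨α', β', γ', e0', e1', e2'⟩ := mem_H.1 (h (mul_mem_mul m1 m2))
    obtain ⟨α'', β'', γ'', e0'', e1'', e2''⟩ := mem_H.1 (h (mul_mem_mul m1 m1))
    simp at e0 e1 e2 e0' e1' e2' e0'' e1'' e2''
    have a1 : α = 0 := by tauto
    have a2 : α' = 0 := by tauto
    have a3 : α'' = A := by tauto
    subst a1 a2 a3
    have b1 : β = B := by simpa [hB, eq_comm] using e1
    have b2 : β' = x := by simpa [hB, eq_comm] using e1'
    subst b1 b2
    refine ⟨γ, γ', β'', γ'', ?_, ?_, ?_, ?_⟩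
    · linear_combination -e2
    · linear_combination -e2'
    · linear_combination -e1''
    · linear_combination -e2''
  · rintro ⟨r, s, q, u, hr, hs, hq, hu⟩
    unfold Cl
    rw [Submodule.mul_le]
    rintro _ ⟨a, rfl⟩ _ ⟨b, rfl⟩
    rw [Tm_mul hr hs hq hu]
    exact ⟨_, rfl⟩

section
variable {p : ℕ} [hpf : Fact p.Prime]

lemma red_comp {S : Lt} {f : S →ₗ[ℤ] V3 p} (hf : Red p S f) (g g' : Matrix (Fin 3) (Fin 3) (ZMod p))
    (h : g * g' = 1) : Red p S ((g.toLin'.restrictScalars ℤ).comp f) := by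
  have h' : g' * g = 1 := mul_eq_one_comm.1 h
  constructor
  · intro v
    obtain ⟨s, hs⟩ := hf.surj (g'.mulVec v)
    refine ⟨s, ?_⟩
    simp [hs, h]
  · rw [← hf.bot]
    ext s
    rw [mem_down, mem_down]
    refine exists_congr fun hs => ?_
    simp only [Submodule.mem_bot, LinearMap.comp_apply, LinearMap.restrictScalars_apply, Matrix.toLin'_apply]
    constructor
    · intro e
      have := congrArg g'.mulVec e
      simpa [h'] using this
    · intro e; rw [e]; simp

lemma hasType_of {A B C x y z r s q u : ℤ} (hA : A ≠ 0) (hB : B ≠ 0) (hC : C ≠ 0)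
    (hr : r * C = z ^ 2 - B * z) (hs : s * C = (y - x) * z)
    (hq : q * B = x ^ 2 - A * x) (hu : u * C = y ^ 2 - A * y - q * z)
    {k a r' b : ZMod p}
    (g g' : Matrix (Fin 3) (Fin 3) (ZMod p)) (hg : g * g' = 1) (l : V3 p)
    (h : ∀ v w : V3 p, g.mulVec (Mu (A : ZMod p) B C x y z r s q u v w) =
      TT k a r' b (g.mulVec v) (g.mulVec w) + dot l (g.mulVec v) • g.mulVec w +
        dot l (g.mulVec w) • g.mulVec v) :
    HasType p (H A B C x y z) k a r' b := by
  refine ⟨(g.toLin'.restrictScalars ℤ).comp (redb p (Hb hA hB hC x y z)), l,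
    red_comp (red_redb _) g g' hg, ?_⟩
  rintro _ _ ⟨v, rfl⟩ ⟨w, rfl⟩
  have e := Tm_mul hr hs hq hu v w
  have hm : Tm A B C x y z (Mu A B C x y z r s q u v w) ∈ H A B C x y z := ⟨_, rfl⟩
  have key : ∀ (v : R3) (hv : Tm A B C x y z v ∈ H A B C x y z),
      redb p (Hb hA hB hC x y z) ⟨_, hv⟩ = fun i => ((v i : ℤ) : ZMod p) := by
    intro v hv
    ext i
    rw [redb_apply, Hb_repr]
  have hm' : Tm A B C x y z v * Tm A B C x y z w ∈ H A B C x y z := by rw [e]; exact hm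
  refine ⟨hm', ?_⟩
  have e2 : (⟨_, hm'⟩ : H A B C x y z) = ⟨_, hm⟩ := Subtype.ext e
  rw [e2]
  simp only [LinearMap.comp_apply, LinearMap.restrictScalars_apply, Matrix.toLin'_apply, key]
  have kv := key v ⟨v, rfl⟩
  have kw := key w ⟨w, rfl⟩
  erw [kv, kw, ← h]
  congr 1
  ext i; fin_cases i <;> simp [Mu]

lemma ideal_pow (I : Submodule ℤ ℤ) {k : ℕ} (h : ((p : ℤ) ^ k) ∈ I) :
    ∃ a : ℕ, ∀ n, n ∈ I ↔ (p : ℤ) ^ a ∣ n := by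
  obtain ⟨d, hd⟩ := (IsPrincipalIdealRing.principal (I : Ideal ℤ)).principal
  have hd' : ∀ n, n ∈ I ↔ d ∣ n := by
    intro n
    rw [hd]; exact Ideal.mem_span_singleton
  have h1 := (hd' _).1 h
  obtain ⟨a, _, ha⟩ := (dvd_prime_pow (Nat.prime_iff_prime_int.1 hpf.out) _).1 h1
  exact ⟨a, fun n => (hd' n).trans ha.dvd_iff_dvd_left⟩

/-- the Hermite normal form with natural number parameters -/
def HH (p a b c : ℕ) (t : ℕ × ℕ × ℕ) : Lt := H (p ^ a) (p ^ b) (p ^ c) t.1 t.2.1 t.2.2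

lemma pz (a : ℕ) : (p : ℤ) ^ a ≠ 0 := pow_ne_zero _ (by exact_mod_cast hpf.out.ne_zero)

lemma exists_HH {S : Lt} (h : pp p S) : ∃ (a b c : ℕ) (t : ℕ × ℕ × ℕ), t.1 < p ^ b ∧ t.2.1 < p ^ c ∧
    t.2.2 < p ^ c ∧ S = HH p a b c t := by
  obtain ⟨k, hk⟩ := h
  have hk' : ∀ v : R3, (p : ℤ) ^ k • v ∈ S := by
    intro v
    apply hk
    rw [P_pow_mul, mem_P]
    exact ⟨v, trivial, by simp⟩
  obtain ⟨a, ha⟩ := ideal_pow (p := p) (k := k) (S.map (LinearMap.proj 0))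
    ⟨_, hk' ![1, 0, 0], by simp⟩
  obtain ⟨b, hb⟩ := ideal_pow (p := p) (k := k)
    ((S ⊓ LinearMap.ker (LinearMap.proj (R := ℤ) (φ := fun _ : Fin 3 => ℤ) 0)).map (LinearMap.proj 1))
    ⟨_, ⟨hk' ![0, 1, 0], by simp⟩, by simp⟩
  obtain ⟨c, hc⟩ := ideal_pow (p := p) (k := k)
    ((S ⊓ LinearMap.ker (LinearMap.proj (R := ℤ) (φ := fun _ : Fin 3 => ℤ) 0) ⊓
      LinearMap.ker (LinearMap.proj (R := ℤ) (φ := fun _ : Fin 3 => ℤ) 1)).map (LinearMap.proj 2))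
    ⟨_, ⟨⟨hk' ![0, 0, 1], by simp⟩, by simp⟩, by simp⟩
  obtain ⟨v1, hv1, e1⟩ := (ha _).2 dvd_rfl
  obtain ⟨v2, ⟨hv2, f0⟩, f1⟩ := (hb _).2 dvd_rfl
  obtain ⟨v3, ⟨⟨hv3, g0⟩, g1⟩, g2⟩ := (hc _).2 dvd_rfl
  simp at e1 f0 f1 g0 g1 g2
  have pb : (0 : ℤ) < (p : ℤ) ^ b := by have := hpf.out.pos; positivity
  have pc : (0 : ℤ) < (p : ℤ) ^ c := by have := hpf.out.pos; positivity
  set z := v2 2 % (p : ℤ) ^ c with hz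
  set x := v1 1 % (p : ℤ) ^ b with hx
  set y := (v1 2 - (v1 1 / (p : ℤ) ^ b) * z) % (p : ℤ) ^ c with hy
  have dz := Int.emod_add_mul_ediv (v2 2) ((p : ℤ) ^ c)
  have dx := Int.emod_add_mul_ediv (v1 1) ((p : ℤ) ^ b)
  have dy := Int.emod_add_mul_ediv (v1 2 - (v1 1 / (p : ℤ) ^ b) * z) ((p : ℤ) ^ c)
  rw [← hz] at dz
  rw [← hx] at dx
  rw [← hy] at dy
  have z0 : 0 ≤ z := Int.emod_nonneg _ pc.ne'
  have x0 : 0 ≤ x := Int.emod_nonneg _ pb.ne'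
  have y0 : 0 ≤ y := Int.emod_nonneg _ pc.ne'
  have z1 : z < (p : ℤ) ^ c := Int.emod_lt_of_pos _ pc
  have x1 : x < (p : ℤ) ^ b := Int.emod_lt_of_pos _ pb
  have y1 : y < (p : ℤ) ^ c := Int.emod_lt_of_pos _ pc
  set w3 : R3 := ![0, 0, (p : ℤ) ^ c] with hw3
  have m3 : w3 ∈ S := by
    have : w3 = v3 := by ext i; fin_cases i <;> simp [hw3, g0, g1, g2]
    rw [this]; exact hv3
  set w2 : R3 := ![0, (p : ℤ) ^ b, z] with hw2
  have m2 : w2 ∈ S := by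
    have : w2 = v2 - (v2 2 / (p : ℤ) ^ c) • w3 := by
      ext i; fin_cases i <;> simp [hw2, hw3, f0, f1]
      linear_combination dz
    rw [this]; exact S.sub_mem hv2 (S.smul_mem _ m3)
  set w1 : R3 := ![(p : ℤ) ^ a, x, y] with hw1
  have m1 : w1 ∈ S := by
    have : w1 = v1 - (v1 1 / (p : ℤ) ^ b) • w2 - ((v1 2 - (v1 1 / (p : ℤ) ^ b) * z) / (p : ℤ) ^ c) • w3 := by
      ext i; fin_cases i <;> simp [hw1, hw2, hw3, e1, Matrix.vecHead, Matrix.vecTail]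
      · linear_combination dx
      · linear_combination dy
    rw [this]; exact S.sub_mem (S.sub_mem hv1 (S.smul_mem _ m2)) (S.smul_mem _ m3)
  refine ⟨a, b, c, (x.toNat, y.toNat, z.toNat), ?_, ?_, ?_, ?_⟩
  · zify; rwa [Int.toNat_of_nonneg x0]
  · zify; rwa [Int.toNat_of_nonneg y0]
  · zify; rwa [Int.toNat_of_nonneg z0]
  · unfold HH
    simp only [Int.toNat_of_nonneg x0, Int.toNat_of_nonneg y0, Int.toNat_of_nonneg z0]
    apply le_antisymm
    · intro v hv
      obtain ⟨α, hα⟩ := (ha (v 0)).1 ⟨v, hv, rfl⟩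
      have n1 : v - α • w1 ∈ S := S.sub_mem hv (S.smul_mem _ m1)
      obtain ⟨β, hβ⟩ := (hb ((v - α • w1) 1)).1 ⟨_, ⟨n1, by simp [hw1, hα, mul_comm, Matrix.vecHead]⟩, rfl⟩
      have n2 : v - α • w1 - β • w2 ∈ S := S.sub_mem n1 (S.smul_mem _ m2)
      obtain ⟨γ, hγ⟩ := (hc ((v - α • w1 - β • w2) 2)).1 ⟨_, ⟨⟨n2, by simp [hw1, hw2, hα, mul_comm, Matrix.vecHead]⟩, by
        simp [hw1, Matrix.vecHead, Matrix.vecTail] at hβ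
        simp [hw1, hw2, Matrix.vecHead, Matrix.vecTail]; linear_combination hβ⟩, rfl⟩
      simp [hw1, Matrix.vecHead, Matrix.vecTail] at hβ
      simp [hw1, hw2, Matrix.vecHead, Matrix.vecTail] at hγ
      refine mem_H.2 ⟨α, β, γ, ?_, ?_, ?_⟩
      · linear_combination hα
      · linear_combination hβ
      · linear_combination hγ
    · intro v hv
      obtain ⟨α, β, γ, h0, h1, h2⟩ := mem_H.1 hv
      have : v = α • w1 + β • w2 + γ • w3 := by
        ext i; fin_cases i <;> simp [hw1, hw2, hw3, h0, h1, h2]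
      rw [this]
      exact S.add_mem (S.add_mem (S.smul_mem _ m1) (S.smul_mem _ m2)) (S.smul_mem _ m3)

lemma ix_HH (a b c : ℕ) (t : ℕ × ℕ × ℕ) : ix (HH p a b c t) = p ^ (a + b + c) := by
  unfold HH
  rw [ix_H (pz a) (pz b) (pz c), ← pow_add, ← pow_add, Int.natAbs_pow]
  simp

lemma HH_le {a b c a' b' c' : ℕ} {t t' : ℕ × ℕ × ℕ} (h : HH p a b c t ≤ HH p a' b' c' t') :
    a' ≤ a ∧ b' ≤ b ∧ c' ≤ c := by
  have hp := hpf.out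
  have hd : ∀ i j : ℕ, ((p : ℤ) ^ i ∣ (p : ℤ) ^ j) → i ≤ j := by
    intro i j hij
    exact (Nat.pow_dvd_pow_iff_le_right hp.one_lt).1 (by exact_mod_cast hij)
  have m1 : ![(p : ℤ) ^ a, t.1, t.2.1] ∈ HH p a b c t := mem_H.2 ⟨1, 0, 0, by simp⟩
  have m2 : ![0, (p : ℤ) ^ b, t.2.2] ∈ HH p a b c t := mem_H.2 ⟨0, 1, 0, by simp⟩
  have m3 : ![0, 0, (p : ℤ) ^ c] ∈ HH p a b c t := mem_H.2 ⟨0, 0, 1, by simp⟩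
  obtain ⟨α, β, γ, e0, e1, e2⟩ := mem_H.1 (h m1)
  obtain ⟨α', β', γ', e0', e1', e2'⟩ := mem_H.1 (h m2)
  obtain ⟨α'', β'', γ'', e0'', e1'', e2''⟩ := mem_H.1 (h m3)
  simp [hp.ne_zero] at e0 e1 e2 e0' e1' e2' e0'' e1'' e2''
  subst e0' e0''
  simp [hp.ne_zero] at e1' e1'' e2' e2''
  subst e1''
  simp at e2''
  exact ⟨hd _ _ ⟨α, by rw [e0]; ring⟩, hd _ _ ⟨β', by rw [e1']; ring⟩, hd _ _ ⟨γ'', by rw [e2'']; ring⟩⟩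

lemma eq_of_mod {m x y : ℕ} {k : ℤ} (hx : x < m) (hy : y < m) (h : (x : ℤ) = y + k * m) : x = y := by
  have h1 : ((x : ℤ)) % (m : ℤ) = (y : ℤ) % m := by rw [h]; simp
  have h2 : x % m = y % m := by exact_mod_cast h1
  rwa [Nat.mod_eq_of_lt hx, Nat.mod_eq_of_lt hy] at h2

lemma HH_inj {a b c a' b' c' : ℕ} {t t' : ℕ × ℕ × ℕ} (h : HH p a b c t = HH p a' b' c' t')
    (h1 : t.1 < p ^ b) (h2 : t.2.1 < p ^ c) (h3 : t.2.2 < p ^ c)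
    (h1' : t'.1 < p ^ b') (h2' : t'.2.1 < p ^ c') (h3' : t'.2.2 < p ^ c') :
    a = a' ∧ b = b' ∧ c = c' ∧ t = t' := by
  have hp := hpf.out
  obtain ⟨i1, i2, i3⟩ := HH_le h.le
  obtain ⟨j1, j2, j3⟩ := HH_le h.ge
  obtain rfl : a = a' := by omega
  obtain rfl : b = b' := by omega
  obtain rfl : c = c' := by omega
  obtain ⟨x, y, z⟩ := t
  obtain ⟨x', y', z'⟩ := t'
  simp only at h1 h2 h3 h1' h2' h3'
  have m1 : ![(p : ℤ) ^ a, x, y] ∈ HH p a b c (x, y, z) := mem_H.2 ⟨1, 0, 0, by simp⟩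
  have m2 : ![0, (p : ℤ) ^ b, z] ∈ HH p a b c (x, y, z) := mem_H.2 ⟨0, 1, 0, by simp⟩
  rw [h] at m1 m2
  obtain ⟨α, β, γ, e0, e1, e2⟩ := mem_H.1 m1
  obtain ⟨α', β', γ', e0', e1', e2'⟩ := mem_H.1 m2
  simp [hp.ne_zero] at e0 e1 e2 e0' e1' e2'
  subst e0'
  simp [hp.ne_zero] at e1' e2'
  subst e1'
  have ea : α = 1 := e0
  subst ea
  have ez : z = z' := eq_of_mod h3 h3' (k := γ') (by push_cast; linear_combination e2')
  have ex : x = x' := eq_of_mod h1 h1' (k := β) (by push_cast; linear_combination e1)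
  have eb : β = 0 := by
    subst ex
    simpa [hp.ne_zero] using e1
  subst eb
  have ey : y = y' := eq_of_mod h2 h2' (k := γ) (by push_cast; linear_combination e2)
  simp [ex, ey, ez]

end
end ZZ3

namespace ZZ3
open Submodule
open scoped Classical

section
variable {p : ℕ} [hpf : Fact p.Prime]

lemma ty_A : HasType p (H 1 1 1 0 0 0) 0 1 0 1 := by
  refine hasType_of (r := 0) (s := 0) (q := 0) (u := 0) one_ne_zero one_ne_zero one_ne_zero
    (by ring) (by ring) (by ring) (by ring) 1 1 (by simp) 0 ?_
  intro v w
  ext i; fin_cases i <;> simp [Mu, TT, dot_apply]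

lemma ty_B1 {A : ℤ} (hA : A ≠ 0) (hA' : (A : ZMod p) = 0) : HasType p (H A 1 1 0 0 0) 0 1 0 0 := by
  refine hasType_of (r := 0) (s := 0) (q := 0) (u := 0) hA one_ne_zero one_ne_zero
    (by ring) (by ring) (by ring) (by ring) !![0, 1, 0; 0, 0, 1; 1, 0, 0] !![0, 0, 1; 1, 0, 0; 0, 1, 0] ?_ 0 ?_
  · ext i j; fin_cases i <;> fin_cases j <;> simp [Matrix.mul_apply, Fin.sum_univ_three]
  · intro v w
    ext i; fin_cases i <;> simp [Mu, TT, dot_apply, Matrix.mulVec, dotProduct, Fin.sum_univ_three, hA']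

lemma ty_B2 {B : ℤ} (hB : B ≠ 0) (hB' : (B : ZMod p) = 0) : HasType p (H 1 B 1 0 0 0) 0 1 0 0 := by
  refine hasType_of (r := 0) (s := 0) (q := 0) (u := 0) one_ne_zero hB one_ne_zero
    (by ring) (by ring) (by ring) (by ring) !![1, 0, 0; 0, 0, 1; 0, 1, 0] !![1, 0, 0; 0, 0, 1; 0, 1, 0] ?_ 0 ?_
  · ext i j; fin_cases i <;> fin_cases j <;> simp [Matrix.mul_apply, Fin.sum_univ_three]
  · intro v w
    ext i; fin_cases i <;> simp [Mu, TT, dot_apply, Matrix.mulVec, dotProduct, Fin.sum_univ_three, hB']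

lemma ty_B3 {B : ℤ} (hB : B ≠ 0) (hB' : (B : ZMod p) = 0) : HasType p (H 1 B 1 1 0 0) 0 1 0 0 := by
  refine hasType_of (r := 0) (s := 0) (q := 0) (u := 0) one_ne_zero hB one_ne_zero
    (by ring) (by ring) (by ring) (by ring) !![-1, 0, 0; -1, 0, 1; 0, 1, 0] !![-1, 0, 0; 0, 0, 1; -1, 1, 0] ?_ ![-1, 0, 0] ?_
  · ext i j; fin_cases i <;> fin_cases j <;> simp [Matrix.mul_apply, Fin.sum_univ_three]
  · intro v w
    ext i; fin_cases i <;> simp [Mu, TT, dot_apply, Matrix.mulVec, dotProduct, Fin.sum_univ_three, hB'] <;> ring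

lemma ty_B4 {C : ℤ} (hC : C ≠ 0) (hC' : (C : ZMod p) = 0) : HasType p (H 1 1 C 0 0 0) 0 1 0 0 := by
  refine hasType_of (r := 0) (s := 0) (q := 0) (u := 0) one_ne_zero one_ne_zero hC
    (by ring) (by ring) (by ring) (by ring) 1 1 (by simp) 0 ?_
  · intro v w
    ext i; fin_cases i <;> simp [Mu, TT, dot_apply, hC']

lemma ty_B5 {C : ℤ} (hC : C ≠ 0) (hC' : (C : ZMod p) = 0) : HasType p (H 1 1 C 0 1 0) 0 1 0 0 := by
  refine hasType_of (r := 0) (s := 0) (q := 0) (u := 0) one_ne_zero one_ne_zero hC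
    (by ring) (by ring) (by ring) (by ring) !![-1, 0, 0; -1, 1, 0; 0, 0, 1] !![-1, 0, 0; -1, 1, 0; 0, 0, 1] ?_ ![-1, 0, 0] ?_
  · ext i j; fin_cases i <;> fin_cases j <;> simp [Matrix.mul_apply, Fin.sum_univ_three]
  · intro v w
    ext i; fin_cases i <;> simp [Mu, TT, dot_apply, Matrix.mulVec, dotProduct, Fin.sum_univ_three, hC'] <;> ring

lemma ty_B6 {C : ℤ} (hC : C ≠ 0) (hC' : (C : ZMod p) = 0) : HasType p (H 1 1 C 0 0 1) 0 1 0 0 := by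
  refine hasType_of (r := 0) (s := 0) (q := 0) (u := 0) one_ne_zero one_ne_zero hC
    (by ring) (by ring) (by ring) (by ring) !![0, -1, 0; 1, -1, 0; 0, 0, 1] !![-1, 1, 0; -1, 0, 0; 0, 0, 1] ?_ ![-1, 0, 0] ?_
  · ext i j; fin_cases i <;> fin_cases j <;> simp [Matrix.mul_apply, Fin.sum_univ_three]
  · intro v w
    ext i; fin_cases i <;> simp [Mu, TT, dot_apply, Matrix.mulVec, dotProduct, Fin.sum_univ_three, hC'] <;> ring

lemma ty_D1 {A B x q : ℤ} (hA : A ≠ 0) (hB : B ≠ 0) (hA' : (A : ZMod p) = 0) (hB' : (B : ZMod p) = 0)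
    (hx : (x : ZMod p) = 0) (hq : q * B = x ^ 2 - A * x) : HasType p (H A B 1 x 0 0) 0 0 (q : ZMod p) 0 := by
  refine hasType_of (r := 0) (s := 0) (q := q) (u := 0) hA hB one_ne_zero
    (by ring) (by ring) hq (by ring) !![0, 0, 1; 1, 0, 0; 0, 1, 0] !![0, 1, 0; 0, 0, 1; 1, 0, 0] ?_ 0 ?_
  · ext i j; fin_cases i <;> fin_cases j <;> simp [Matrix.mul_apply, Fin.sum_univ_three]
  · intro v w
    ext i; fin_cases i <;> simp [Mu, TT, dot_apply, Matrix.mulVec, dotProduct, Fin.sum_univ_three, hA', hB', hx]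

lemma ty_D2 {A C y u : ℤ} (hA : A ≠ 0) (hC : C ≠ 0) (hA' : (A : ZMod p) = 0) (hC' : (C : ZMod p) = 0)
    (hy : (y : ZMod p) = 0) (hu : u * C = y ^ 2 - A * y) : HasType p (H A 1 C 0 y 0) 0 0 (u : ZMod p) 0 := by
  refine hasType_of (r := 0) (s := 0) (q := 0) (u := u) hA one_ne_zero hC
    (by ring) (by ring) (by ring) (by linear_combination hu) !![0, 1, 0; 1, 0, 0; 0, 0, 1] !![0, 1, 0; 1, 0, 0; 0, 0, 1] ?_ 0 ?_
  · ext i j; fin_cases i <;> fin_cases j <;> simp [Matrix.mul_apply, Fin.sum_univ_three]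
  · intro v w
    ext i; fin_cases i <;> simp [Mu, TT, dot_apply, Matrix.mulVec, dotProduct, Fin.sum_univ_three, hA', hC', hy]

lemma ty_C1 {A C : ℤ} (hA : A ≠ 0) (hC : C ≠ 0) (hA' : (A : ZMod p) = 0) (hC' : (C : ZMod p) = 0) :
    HasType p (H A 1 C 0 0 1) 1 0 0 0 := by
  refine hasType_of (r := 0) (s := 0) (q := 0) (u := 0) hA one_ne_zero hC
    (by ring) (by ring) (by ring) (by ring) !![0, -1, 0; 1, 0, 0; 0, 0, 1] !![0, 1, 0; -1, 0, 0; 0, 0, 1] ?_ ![-1, 0, 0] ?_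
  · ext i j; fin_cases i <;> fin_cases j <;> simp [Matrix.mul_apply, Fin.sum_univ_three]
  · intro v w
    ext i; fin_cases i <;> simp [Mu, TT, dot_apply, Matrix.mulVec, dotProduct, Fin.sum_univ_three, hA', hC'] <;> ring

lemma ty_D3 {B C z r : ℤ} (hB : B ≠ 0) (hC : C ≠ 0) (hB' : (B : ZMod p) = 0) (hC' : (C : ZMod p) = 0)
    (hz : (z : ZMod p) = 0) (hr : r * C = z ^ 2 - B * z) : HasType p (H 1 B C 0 0 z) 0 0 (r : ZMod p) 0 := by
  refine hasType_of (r := r) (s := 0) (q := 0) (u := 0) one_ne_zero hB hC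
    hr (by ring) (by ring) (by ring) 1 1 (by simp) 0 ?_
  · intro v w
    ext i; fin_cases i <;> simp [Mu, TT, dot_apply, hB', hC', hz]

lemma ty_D4 {B C z r : ℤ} (hB : B ≠ 0) (hC : C ≠ 0) (hB' : (B : ZMod p) = 0) (hC' : (C : ZMod p) = 0)
    (hz : (z : ZMod p) = 0) (hr : r * C = z ^ 2 - B * z) : HasType p (H 1 B C 1 1 z) 0 0 (r : ZMod p) 0 := by
  refine hasType_of (r := r) (s := 0) (q := 0) (u := 0) one_ne_zero hB hC
    hr (by ring) (by ring) (by ring) !![-1, 0, 0; 0, 1, 0; 0, 0, 1] !![-1, 0, 0; 0, 1, 0; 0, 0, 1] ?_ ![-1, 0, 0] ?_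
  · ext i j; fin_cases i <;> fin_cases j <;> simp [Matrix.mul_apply, Fin.sum_univ_three]
  · intro v w
    ext i; fin_cases i <;> simp [Mu, TT, dot_apply, Matrix.mulVec, dotProduct, Fin.sum_univ_three, hB', hC', hz] <;> ring

lemma ty_C2 {B C : ℤ} (hB : B ≠ 0) (hC : C ≠ 0) (hB' : (B : ZMod p) = 0) (hC' : (C : ZMod p) = 0) :
    HasType p (H 1 B C 0 1 0) 1 0 0 0 := by
  refine hasType_of (r := 0) (s := 0) (q := 0) (u := 0) one_ne_zero hB hC
    (by ring) (by ring) (by ring) (by ring) !![1, 0, 0; 0, 0, 1; 0, 1, 0] !![1, 0, 0; 0, 0, 1; 0, 1, 0] ?_ 0 ?_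
  · ext i j; fin_cases i <;> fin_cases j <;> simp [Matrix.mul_apply, Fin.sum_univ_three]
  · intro v w
    ext i; fin_cases i <;> simp [Mu, TT, dot_apply, Matrix.mulVec, dotProduct, Fin.sum_univ_three, hB', hC']

lemma ty_C3 {B C : ℤ} (hB : B ≠ 0) (hC : C ≠ 0) (hB' : (B : ZMod p) = 0) (hC' : (C : ZMod p) = 0) :
    HasType p (H 1 B C 1 0 0) 1 0 0 0 := by
  refine hasType_of (r := 0) (s := 0) (q := 0) (u := 0) one_ne_zero hB hC
    (by ring) (by ring) (by ring) (by ring) 1 1 (by simp) 0 ?_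
  · intro v w
    ext i; fin_cases i <;> simp [Mu, TT, dot_apply, hB', hC']

/-- parameters of closed lattices with given diagonal -/
noncomputable def G (p a b c : ℕ) : Finset (ℕ × ℕ × ℕ) :=
  (Finset.range (p ^ b) ×ˢ Finset.range (p ^ c) ×ˢ Finset.range (p ^ c)).filter
    (fun t => Cl (HH p a b c t))

lemma mem_G {a b c x y z : ℕ} : (x, y, z) ∈ G p a b c ↔ (x < p ^ b ∧ y < p ^ c ∧ z < p ^ c) ∧
    ∃ r s q u : ℤ, r * p ^ c = z ^ 2 - p ^ b * z ∧ s * p ^ c = (y - x) * z ∧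
      q * p ^ b = x ^ 2 - p ^ a * x ∧ u * p ^ c = y ^ 2 - p ^ a * y - q * z := by
  unfold G
  rw [Finset.mem_filter, HH, cl_H (pz a) (pz b) (pz c)]
  simp

lemma mem_G' {a b c : ℕ} {t : ℕ × ℕ × ℕ} : t ∈ G p a b c ↔ (t.1 < p ^ b ∧ t.2.1 < p ^ c ∧ t.2.2 < p ^ c) ∧
    Cl (HH p a b c t) := by
  unfold G
  rw [Finset.mem_filter]
  simp

lemma pprime : Prime (p : ℤ) := Nat.prime_iff_prime_int.1 hpf.out

lemma nonloc {a b c : ℕ} {t : ℕ × ℕ × ℕ} (ht : t ∈ G p a b c) :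
    HH p a b c t ≤ P p * ⊤ ↔ ¬ (a = 0 ∨ b = 0 ∨ c = 0) := by
  have hp := hpf.out
  have hP : ∀ v : R3, v ∈ P p * ⊤ ↔ ∀ i, (p : ℤ) ∣ v i := by
    intro v
    rw [mem_P]
    constructor
    · rintro ⟨m, _, rfl⟩ i
      exact ⟨m i, by simp⟩
    · intro h
      choose m hm using h
      exact ⟨m, trivial, by ext i; simp [hm]⟩
  have hz : ∀ n : ℕ, (p : ℤ) ∣ (p : ℤ) ^ n ↔ n ≠ 0 := by
    intro n
    constructor
    · rintro h rfl
      rw [pow_zero] at h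
      exact pprime.not_unit (isUnit_of_dvd_one h)
    · intro h; exact dvd_pow_self _ h
  constructor
  · intro h
    have m1 : ![(p : ℤ) ^ a, t.1, t.2.1] ∈ HH p a b c t := mem_H.2 ⟨1, 0, 0, by simp⟩
    have m2 : ![0, (p : ℤ) ^ b, t.2.2] ∈ HH p a b c t := mem_H.2 ⟨0, 1, 0, by simp⟩
    have m3 : ![0, 0, (p : ℤ) ^ c] ∈ HH p a b c t := mem_H.2 ⟨0, 0, 1, by simp⟩
    have n1 := (hz a).1 ((hP _).1 (h m1) 0)
    have n2 := (hz b).1 ((hP _).1 (h m2) 1)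
    have n3 := (hz c).1 ((hP _).1 (h m3) 2)
    tauto
  · intro h
    push Not at h
    obtain ⟨x, y, z⟩ := t
    obtain ⟨_, r, s, q, u, hr, hs, hq, hu⟩ := mem_G.1 ht
    have da := (hz a).2 h.1
    have db := (hz b).2 h.2.1
    have dc := (hz c).2 h.2.2
    have dx : (p : ℤ) ∣ x := by
      apply pprime.dvd_of_dvd_pow (n := 2)
      have : (x : ℤ) ^ 2 = q * p ^ b + p ^ a * x := by linear_combination -hq
      rw [this]; exact dvd_add (db.mul_left _) (da.mul_right _)
    have dz : (p : ℤ) ∣ z := by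
      apply pprime.dvd_of_dvd_pow (n := 2)
      have : (z : ℤ) ^ 2 = r * p ^ c + p ^ b * z := by linear_combination -hr
      rw [this]; exact dvd_add (dc.mul_left _) (db.mul_right _)
    have dy : (p : ℤ) ∣ y := by
      apply pprime.dvd_of_dvd_pow (n := 2)
      have : (y : ℤ) ^ 2 = u * p ^ c + p ^ a * y + q * z := by linear_combination -hu
      rw [this]; exact dvd_add (dvd_add (dc.mul_left _) (da.mul_right _)) (dz.mul_left _)
    intro v hv
    rw [hP]
    obtain ⟨α, β, γ, h0, h1, h2⟩ := mem_H.1 hv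
    intro i; fin_cases i
    · simp [h0]; exact da.mul_left _
    · simp [h1]; exact dvd_add (dx.mul_left _) (db.mul_left _)
    · simp [h2]; exact dvd_add (dvd_add (dy.mul_left _) (dz.mul_left _)) (dc.mul_left _)

/-- contribution of a diagonal -/
noncomputable def gs (p : ℕ) (w : Lt → ℕ) (a b c : ℕ) : ℕ :=
  if a = 0 ∨ b = 0 ∨ c = 0 then ∑ t ∈ G p a b c, w (HH p a b c t) else 0

lemma NL_eq (w : Lt → ℕ) (n : ℕ) : NL p w n =
    ∑ i ∈ Finset.HasAntidiagonal.antidiagonal n, ∑ j ∈ Finset.HasAntidiagonal.antidiagonal i.2, gs p w i.1 j.1 j.2 := by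
  have h1 : ∀ a b c, gs p w a b c =
      ∑ t ∈ (if a = 0 ∨ b = 0 ∨ c = 0 then G p a b c else ∅), w (HH p a b c t) := by
    intro a b c
    unfold gs
    split_ifs <;> simp
  simp only [h1]
  rw [Finset.sum_sigma', Finset.sum_sigma']
  symm
  unfold NL
  refine Finset.sum_bij (fun (x : Σ _ : (Σ _ : ℕ × ℕ, ℕ × ℕ), ℕ × ℕ × ℕ) _ =>
    HH p x.1.1.1 x.1.2.1 x.1.2.2 x.2) ?_ ?_ ?_ ?_
  · rintro ⟨⟨⟨a, m⟩, ⟨b, c⟩⟩, t⟩ hx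
    simp only [Finset.mem_sigma, Finset.HasAntidiagonal.mem_antidiagonal] at hx
    obtain ⟨⟨rfl, rfl⟩, ht⟩ := hx
    split_ifs at ht with hc
    · rw [Finset.mem_filter, mem_Sub, nonloc ht, ix_HH]
      refine ⟨⟨(mem_G'.1 ht).2, by rw [add_assoc]⟩, by tauto⟩
    · simp at ht
  · rintro ⟨⟨⟨a, m⟩, ⟨b, c⟩⟩, t⟩ hx ⟨⟨⟨a', m'⟩, ⟨b', c'⟩⟩, t'⟩ hx' he
    simp only [Finset.mem_sigma, Finset.HasAntidiagonal.mem_antidiagonal] at hx hx'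
    obtain ⟨⟨e1, e2⟩, ht⟩ := hx
    obtain ⟨⟨e1', e2'⟩, ht'⟩ := hx'
    split_ifs at ht with hc
    · split_ifs at ht' with hc'
      · obtain ⟨⟨h1, h2, h3⟩, _⟩ := mem_G'.1 ht
        obtain ⟨⟨h1', h2', h3'⟩, _⟩ := mem_G'.1 ht'
        obtain ⟨rfl, rfl, rfl, rfl⟩ := HH_inj he h1 h2 h3 h1' h2' h3'
        simp only at e2 e2'
        subst e2 e2'
        rfl
      · simp at ht'
    · simp at ht
  · intro S hS
    rw [Finset.mem_filter, mem_Sub] at hS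
    obtain ⟨⟨hc, hi⟩, hn⟩ := hS
    obtain ⟨a, b, c, t, h1, h2, h3, rfl⟩ := exists_HH (pp_of_ix hi)
    have ht : t ∈ G p a b c := mem_G'.2 ⟨⟨h1, h2, h3⟩, hc⟩
    rw [nonloc ht, not_not] at hn
    rw [ix_HH] at hi
    have := pow_inj hpf.out hi
    refine ⟨⟨⟨(a, b + c), (b, c)⟩, t⟩, ?_, rfl⟩
    simp only [Finset.mem_sigma, Finset.HasAntidiagonal.mem_antidiagonal]
    refine ⟨⟨by omega, trivial⟩, ?_⟩
    rw [if_pos hn]; exact ht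
  · intros; rfl

end
end ZZ3

namespace ZZ3
open Submodule
open scoped Classical

section
variable {p : ℕ} [hpf : Fact p.Prime]

/-- a weight depending only on the reduction type -/
structure TW (p : ℕ) [Fact p.Prime] (w : Lt → ℕ) (wA wB wC wD0 wD1 : ℕ) : Prop where
  A : ∀ {S}, HasType p S 0 1 0 1 → w S = wA
  B : ∀ {S}, HasType p S 0 1 0 0 → w S = wB
  C : ∀ {S}, HasType p S 1 0 0 0 → w S = wC
  D0 : ∀ {S}, HasType p S 0 0 0 0 → w S = wD0
  D1 : ∀ {S} {r : ZMod p}, r ≠ 0 → HasType p S 0 0 r 0 → w S = wD1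

/-- solutions of `t (t - p^i) = 0` modulo `p^j` -/
noncomputable def Z (p i j : ℕ) : Finset ℕ :=
  (Finset.range (p ^ j)).filter (fun t => (p : ℤ) ^ j ∣ (t : ℤ) ^ 2 - (p : ℤ) ^ i * t)

lemma mem_Z {i j t : ℕ} : t ∈ Z p i j ↔ t < p ^ j ∧ ∃ r : ℤ, r * (p : ℤ) ^ j = (t : ℤ) ^ 2 - (p : ℤ) ^ i * t := by
  unfold Z
  rw [Finset.mem_filter, Finset.mem_range]
  refine and_congr Iff.rfl ?_
  constructor
  · rintro ⟨r, hr⟩; exact ⟨r, by rw [hr]; ring⟩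
  · rintro ⟨r, hr⟩; exact ⟨r, by rw [← hr]; ring⟩

/-- the contribution of type D lattices -/
noncomputable def dw (p wD0 wD1 i j : ℕ) : ℕ :=
  ∑ t ∈ Z p i j, if (p : ℤ) ^ (j + 1) ∣ (t : ℤ) ^ 2 - (p : ℤ) ^ i * t then wD0 else wD1

lemma TW.D {w : Lt → ℕ} {wA wB wC wD0 wD1 : ℕ} (tw : TW p w wA wB wC wD0 wD1) {S : Lt} {i j t : ℕ} {ρ : ℤ}
    (h : HasType p S 0 0 (ρ : ZMod p) 0) (hr : ρ * (p : ℤ) ^ j = (t : ℤ) ^ 2 - (p : ℤ) ^ i * t) :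
    w S = if (p : ℤ) ^ (j + 1) ∣ (t : ℤ) ^ 2 - (p : ℤ) ^ i * t then wD0 else wD1 := by
  have h1 : ((p : ℤ) ^ (j + 1) ∣ (t : ℤ) ^ 2 - (p : ℤ) ^ i * t) ↔ (ρ : ZMod p) = 0 := by
    rw [← hr, pow_succ', mul_dvd_mul_iff_right (pz j), ZMod.intCast_zmod_eq_zero_iff_dvd]
  split_ifs with hd
  · rw [h1] at hd
    rw [hd] at h
    exact tw.D0 h
  · rw [h1] at hd
    exact tw.D1 hd h

lemma idem {n t : ℕ} {r : ℤ} (ht : t < p ^ (n + 1)) (h : r * (p : ℤ) ^ (n + 1) = (t : ℤ) ^ 2 - 1 * t) :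
    t = 0 ∨ t = 1 := by
  have hd : (p : ℤ) ^ (n + 1) ∣ (t : ℤ) * (t - 1) := ⟨r, by linear_combination -h⟩
  by_cases hpt : (p : ℤ) ∣ t
  · left
    have h1 : ¬ (p : ℤ) ∣ (t : ℤ) - 1 := by
      intro h2
      have := dvd_sub hpt h2
      simp at this
      exact pprime.not_unit (isUnit_of_dvd_one (by exact_mod_cast this))
    have h2 := pprime.pow_dvd_of_dvd_mul_right (n + 1) h1 hd
    have h3 : p ^ (n + 1) ∣ t := by exact_mod_cast h2
    exact Nat.eq_zero_of_dvd_of_lt h3 ht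
  · right
    have h2 := pprime.pow_dvd_of_dvd_mul_left (n + 1) hpt hd
    have h0 : t ≠ 0 := by rintro rfl; simp at hpt
    obtain ⟨s, rfl⟩ := Nat.exists_eq_succ_of_ne_zero h0
    have h3 : p ^ (n + 1) ∣ s := by
      have : ((s.succ : ℕ) : ℤ) - 1 = s := by push_cast; ring
      rw [this] at h2
      exact_mod_cast h2
    have := Nat.eq_zero_of_dvd_of_lt h3 (by omega)
    omega

lemma one_lt_pow (n : ℕ) : 1 < p ^ (n + 1) := Nat.one_lt_pow (by omega) hpf.out.one_lt

lemma small {n t : ℕ} {r : ℤ} (ht : t < p ^ n) (h : r * (p : ℤ) ^ n = t) : t = 0 := by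
  have h2 : (p : ℤ) ^ n ∣ t := ⟨r, by rw [← h]; ring⟩
  have h3 : p ^ n ∣ t := by exact_mod_cast h2
  exact Nat.eq_zero_of_dvd_of_lt h3 ht

lemma pcast (n : ℕ) : (((p : ℤ) ^ (n + 1) : ℤ) : ZMod p) = 0 := by
  push_cast; simp

lemma Z_dvd {i j t : ℕ} (h : t ∈ Z p (i + 1) (j + 1)) : (((t : ℕ) : ℤ) : ZMod p) = 0 := by
  obtain ⟨_, r, hr⟩ := mem_Z.1 h
  rw [ZMod.intCast_zmod_eq_zero_iff_dvd]
  apply pprime.dvd_of_dvd_pow (n := 2)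
  have : (t : ℤ) ^ 2 = r * p ^ (j + 1) + p ^ (i + 1) * t := by linear_combination -hr
  rw [this]
  exact dvd_add ((dvd_pow_self _ (by omega)).mul_left _) ((dvd_pow_self _ (by omega)).mul_right _)

variable {w : Lt → ℕ} {wA wB wC wD0 wD1 : ℕ}

lemma G000 : G p 0 0 0 = {(0, 0, 0)} := by
  ext ⟨x, y, z⟩
  rw [mem_G]
  simp only [pow_zero, Nat.lt_one_iff, Finset.mem_singleton, Prod.mk.injEq, and_iff_left_iff_imp]
  rintro ⟨rfl, rfl, rfl⟩
  exact ⟨0, 0, 0, 0, by simp⟩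

lemma Ga00 (a : ℕ) : G p (a + 1) 0 0 = {(0, 0, 0)} := by
  ext ⟨x, y, z⟩
  rw [mem_G]
  simp only [pow_zero, Nat.lt_one_iff, Finset.mem_singleton, Prod.mk.injEq, and_iff_left_iff_imp]
  rintro ⟨rfl, rfl, rfl⟩
  exact ⟨0, 0, 0, 0, by simp⟩

lemma G0b0 (b : ℕ) : G p 0 (b + 1) 0 = {(0, 0, 0), (1, 0, 0)} := by
  ext ⟨x, y, z⟩
  rw [mem_G]
  simp only [pow_zero, Nat.lt_one_iff, Finset.mem_insert, Finset.mem_singleton, Prod.mk.injEq]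
  have := one_lt_pow (p := p) b
  constructor
  · rintro ⟨⟨hx, rfl, rfl⟩, r, s, q, u, hr, hs, hq, hu⟩
    rcases idem hx hq with rfl | rfl <;> simp
  · rintro (⟨rfl, rfl, rfl⟩ | ⟨rfl, rfl, rfl⟩)
    · exact ⟨⟨by omega, rfl, rfl⟩, 0, 0, 0, 0, by simp⟩
    · exact ⟨⟨by omega, rfl, rfl⟩, 0, 0, 0, 0, by simp⟩

lemma G00c (c : ℕ) : G p 0 0 (c + 1) = {(0, 0, 0), (0, 1, 0), (0, 0, 1)} := by
  ext ⟨x, y, z⟩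
  rw [mem_G]
  simp only [pow_zero, Nat.lt_one_iff, Finset.mem_insert, Finset.mem_singleton, Prod.mk.injEq]
  have := one_lt_pow (p := p) c
  constructor
  · rintro ⟨⟨rfl, hy, hz⟩, r, s, q, u, hr, hs, hq, hu⟩
    have q0 : q = 0 := by simpa using hq
    subst q0
    rcases idem hz hr with rfl | rfl
    · rcases idem (p := p) (n := c) (r := u) hy (by linear_combination hu) with rfl | rfl <;> simp
    · have := small hy (r := s) (by rw [hs]; simp)
      simp [this]
  · rintro (⟨rfl, rfl, rfl⟩ | ⟨rfl, rfl, rfl⟩ | ⟨rfl, rfl, rfl⟩) <;>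
    exact ⟨⟨rfl, by omega, by omega⟩, 0, 0, 0, 0, by simp⟩

lemma Gab0 (a b : ℕ) : G p (a + 1) (b + 1) 0 = (Z p (a + 1) (b + 1)).image (fun x => (x, 0, 0)) := by
  ext ⟨x, y, z⟩
  rw [mem_G]
  simp only [pow_zero, Nat.lt_one_iff, Finset.mem_image, mem_Z, Prod.mk.injEq]
  constructor
  · rintro ⟨⟨hx, rfl, rfl⟩, r, s, q, u, hr, hs, hq, hu⟩
    exact ⟨x, ⟨hx, q, hq⟩, rfl, rfl, rfl⟩
  · rintro ⟨x, ⟨hx, q, hq⟩, rfl, rfl, rfl⟩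
    exact ⟨⟨hx, rfl, rfl⟩, 0, 0, q, 0, by simp, by simp, hq, by simp⟩

lemma Ga0c (a c : ℕ) : G p (a + 1) 0 (c + 1) =
    insert (0, 0, 1) ((Z p (a + 1) (c + 1)).image (fun y => (0, y, 0))) := by
  ext ⟨x, y, z⟩
  rw [mem_G]
  have h1p := one_lt_pow (p := p) c
  simp only [pow_zero, Nat.lt_one_iff, Finset.mem_insert, Finset.mem_image, mem_Z, Prod.mk.injEq]
  constructor
  · rintro ⟨⟨rfl, hy, hz⟩, r, s, q, u, hr, hs, hq, hu⟩
    have q0 : q = 0 := by simpa using hq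
    subst q0
    rcases idem hz hr with rfl | rfl
    · right
      exact ⟨y, ⟨hy, u, by linear_combination hu⟩, rfl, rfl, rfl⟩
    · left
      have := small hy (r := s) (by rw [hs]; simp)
      simp [this]
  · rintro (⟨rfl, rfl, rfl⟩ | ⟨y, ⟨hy, u, hu⟩, rfl, rfl, rfl⟩)
    · exact ⟨⟨rfl, by omega, by omega⟩, 0, 0, 0, 0, by simp⟩
    · exact ⟨⟨rfl, hy, by omega⟩, 0, 0, 0, u, by simp, by simp, by simp, by simpa using hu⟩

lemma G0bc (b c : ℕ) : G p 0 (b + 1) (c + 1) =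
    insert (0, 1, 0) (insert (1, 0, 0) ((Z p (b + 1) (c + 1)).image (fun z => (0, 0, z)) ∪
      (Z p (b + 1) (c + 1)).image (fun z => (1, 1, z)))) := by
  ext ⟨x, y, z⟩
  rw [mem_G]
  have h1p := one_lt_pow (p := p) c
  have h1q := one_lt_pow (p := p) b
  simp only [pow_zero, Finset.mem_insert, Finset.mem_union, Finset.mem_image, mem_Z, Prod.mk.injEq]
  constructor
  · rintro ⟨⟨hx, hy, hz⟩, r, s, q, u, hr, hs, hq, hu⟩
    have hx' := idem hx hq
    have q0 : q = 0 := by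
      have h0 : q * (p : ℤ) ^ (b + 1) = 0 := by rw [hq]; rcases hx' with rfl | rfl <;> simp
      rcases mul_eq_zero.1 h0 with h | h
      · exact h
      · exact absurd h (pz _)
    subst q0
    have hy' := idem (p := p) (n := c) (r := u) hy (by linear_combination hu)
    rcases hx' with rfl | rfl <;> rcases hy' with rfl | rfl
    · right; right; left; exact ⟨z, ⟨hz, r, hr⟩, rfl, rfl, rfl⟩
    · left
      exact ⟨rfl, rfl, small hz (r := s) (by rw [hs]; simp)⟩
    · right; left
      exact ⟨rfl, rfl, small hz (r := -s) (by rw [neg_mul, hs]; simp)⟩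
    · right; right; right; exact ⟨z, ⟨hz, r, hr⟩, rfl, rfl, rfl⟩
  · rintro (⟨rfl, rfl, rfl⟩ | ⟨rfl, rfl, rfl⟩ | ⟨z, ⟨hz, r, hr⟩, rfl, rfl, rfl⟩ | ⟨z, ⟨hz, r, hr⟩, rfl, rfl, rfl⟩)
    · exact ⟨⟨by omega, by omega, by omega⟩, 0, 0, 0, 0, by simp⟩
    · exact ⟨⟨by omega, by omega, by omega⟩, 0, 0, 0, 0, by simp⟩
    · exact ⟨⟨by omega, by omega, hz⟩, r, 0, 0, 0, hr, by simp⟩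
    · exact ⟨⟨by omega, by omega, hz⟩, r, 0, 0, 0, hr, by simp⟩

lemma gs000 (tw : TW p w wA wB wC wD0 wD1) : gs p w 0 0 0 = wA := by
  simp only [gs, true_or, if_true, G000, Finset.sum_singleton]
  apply tw.A
  simpa [HH] using ty_A

lemma gsa00 (tw : TW p w wA wB wC wD0 wD1) (a : ℕ) : gs p w (a + 1) 0 0 = wB := by
  simp only [gs, true_or, or_true, if_true, Ga00, Finset.sum_singleton]
  apply tw.B
  simpa [HH] using ty_B1 (pz (a + 1)) (pcast a)

lemma gs0b0 (tw : TW p w wA wB wC wD0 wD1) (b : ℕ) : gs p w 0 (b + 1) 0 = 2 * wB := by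
  simp only [gs, true_or, or_true, if_true, G0b0]
  rw [Finset.sum_insert (by simp), Finset.sum_singleton, two_mul]
  congr 1 <;> apply tw.B
  · simpa [HH] using ty_B2 (pz (b + 1)) (pcast b)
  · simpa [HH] using ty_B3 (pz (b + 1)) (pcast b)

lemma gs00c (tw : TW p w wA wB wC wD0 wD1) (c : ℕ) : gs p w 0 0 (c + 1) = 3 * wB := by
  simp only [gs, true_or, or_true, if_true, G00c]
  rw [Finset.sum_insert (by simp), Finset.sum_insert (by simp), Finset.sum_singleton]
  rw [tw.B (S := HH p 0 0 (c + 1) (0, 0, 0)), tw.B (S := HH p 0 0 (c + 1) (0, 1, 0)),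
    tw.B (S := HH p 0 0 (c + 1) (0, 0, 1))]
  · ring
  · simpa [HH] using ty_B6 (pz (c + 1)) (pcast c)
  · simpa [HH] using ty_B5 (pz (c + 1)) (pcast c)
  · simpa [HH] using ty_B4 (pz (c + 1)) (pcast c)

lemma gsab0 (tw : TW p w wA wB wC wD0 wD1) (a b : ℕ) : gs p w (a + 1) (b + 1) 0 = dw p wD0 wD1 (a + 1) (b + 1) := by
  simp only [gs, or_true, if_true, Gab0]
  rw [Finset.sum_image (by intro x _ y _ h; simpa using h)]
  apply Finset.sum_congr rfl
  intro t ht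
  obtain ⟨_, r, hr⟩ := mem_Z.1 ht
  apply tw.D (ρ := r) _ hr
  simpa [HH] using ty_D1 (pz (a + 1)) (pz (b + 1)) (pcast a) (pcast b) (Z_dvd ht) hr

lemma gsa0c (tw : TW p w wA wB wC wD0 wD1) (a c : ℕ) : gs p w (a + 1) 0 (c + 1) = wC + dw p wD0 wD1 (a + 1) (c + 1) := by
  simp only [gs, or_true, true_or, if_true, Ga0c]
  rw [Finset.sum_insert (by simp)]
  congr 1
  · apply tw.C
    simpa [HH] using ty_C1 (pz (a + 1)) (pz (c + 1)) (pcast a) (pcast c)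
  rw [Finset.sum_image (by intro x _ y _ h; simpa using h)]
  apply Finset.sum_congr rfl
  intro t ht
  obtain ⟨_, r, hr⟩ := mem_Z.1 ht
  apply tw.D (ρ := r) _ hr
  simpa [HH] using ty_D2 (pz (a + 1)) (pz (c + 1)) (pcast a) (pcast c) (Z_dvd ht) hr

lemma gs0bc (tw : TW p w wA wB wC wD0 wD1) (b c : ℕ) : gs p w 0 (b + 1) (c + 1) = 2 * wC + 2 * dw p wD0 wD1 (b + 1) (c + 1) := by
  simp only [gs, true_or, if_true, G0bc]
  rw [Finset.sum_insert (by simp), Finset.sum_insert (by simp), Finset.sum_union (by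
    rw [Finset.disjoint_left]; simp)]
  rw [Finset.sum_image (by intro x _ y _ h; simpa using h), Finset.sum_image (by intro x _ y _ h; simpa using h)]
  have e1 : w (HH p 0 (b + 1) (c + 1) (0, 1, 0)) = wC := by
    apply tw.C
    simpa [HH] using ty_C2 (pz (b + 1)) (pz (c + 1)) (pcast b) (pcast c)
  have e2 : w (HH p 0 (b + 1) (c + 1) (1, 0, 0)) = wC := by
    apply tw.C
    simpa [HH] using ty_C3 (pz (b + 1)) (pz (c + 1)) (pcast b) (pcast c)
  have e3 : ∑ z ∈ Z p (b + 1) (c + 1), w (HH p 0 (b + 1) (c + 1) (0, 0, z)) = dw p wD0 wD1 (b + 1) (c + 1) := by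
    apply Finset.sum_congr rfl
    intro t ht
    obtain ⟨_, r, hr⟩ := mem_Z.1 ht
    apply tw.D (ρ := r) _ hr
    simpa [HH] using ty_D3 (pz (b + 1)) (pz (c + 1)) (pcast b) (pcast c) (Z_dvd ht) hr
  have e4 : ∑ z ∈ Z p (b + 1) (c + 1), w (HH p 0 (b + 1) (c + 1) (1, 1, z)) = dw p wD0 wD1 (b + 1) (c + 1) := by
    apply Finset.sum_congr rfl
    intro t ht
    obtain ⟨_, r, hr⟩ := mem_Z.1 ht
    apply tw.D (ρ := r) _ hr
    simpa [HH] using ty_D4 (pz (b + 1)) (pz (c + 1)) (pcast b) (pcast c) (Z_dvd ht) hr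
  rw [e1, e2, e3, e4]
  ring

lemma gsabc (a b c : ℕ) : gs p w (a + 1) (b + 1) (c + 1) = 0 := by simp [gs]

end
end ZZ3

namespace ZZ3
open Submodule Finset.HasAntidiagonal
open scoped Classical

section
variable {p : ℕ} [hpf : Fact p.Prime]
variable {w : Lt → ℕ} {wA wB wC wD0 wD1 : ℕ}

lemma NL0 (tw : TW p w wA wB wC wD0 wD1) : NL p w 0 = wA := by
  rw [NL_eq]
  simp [gs000 tw]

lemma X0 (tw : TW p w wA wB wC wD0 wD1) (a : ℕ) :
    ∑ j ∈ antidiagonal 0, gs p w (a + 1) j.1 j.2 = wB := by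
  simp [gsa00 tw]

lemma X1 (tw : TW p w wA wB wC wD0 wD1) (a m : ℕ) :
    ∑ j ∈ antidiagonal (m + 1), gs p w (a + 1) j.1 j.2 = wC + 2 * dw p wD0 wD1 (a + 1) (m + 1) := by
  rw [Finset.Nat.sum_antidiagonal_succ]
  simp only
  rw [gsa0c tw]
  have : ∑ j ∈ antidiagonal m, gs p w (a + 1) (j.1 + 1) j.2 = dw p wD0 wD1 (a + 1) (m + 1) := by
    cases m with
    | zero => simp [gsab0 tw]
    | succ m =>
      rw [Finset.Nat.sum_antidiagonal_succ']
      simp only [gsab0 tw, gsabc, Finset.sum_const_zero, add_zero]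
  rw [this]; ring

lemma NL1 (tw : TW p w wA wB wC wD0 wD1) : NL p w 1 = 6 * wB := by
  rw [NL_eq, Finset.Nat.sum_antidiagonal_succ, Finset.Nat.sum_antidiagonal_succ]
  simp [gs00c tw, gs0b0 tw, gsa00 tw]
  ring

lemma NL2 (tw : TW p w wA wB wC wD0 wD1) (m : ℕ) : NL p w (m + 2) =
    6 * wB + ∑ j ∈ antidiagonal m, (3 * wC + 4 * dw p wD0 wD1 (j.1 + 1) (j.2 + 1)) := by
  rw [NL_eq, Finset.Nat.sum_antidiagonal_succ]
  simp only
  rw [Finset.Nat.sum_antidiagonal_succ, Finset.Nat.sum_antidiagonal_succ', Finset.Nat.sum_antidiagonal_succ']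
  simp only [gs00c tw, gs0b0 tw, gs0bc tw, X0 tw, X1 tw]
  have h1 : ∑ j ∈ antidiagonal m, (3 * wC + 4 * dw p wD0 wD1 (j.1 + 1) (j.2 + 1)) =
      ∑ j ∈ antidiagonal m, (2 * wC + 2 * dw p wD0 wD1 (j.1 + 1) (j.2 + 1)) +
      ∑ j ∈ antidiagonal m, (wC + 2 * dw p wD0 wD1 (j.1 + 1) (j.2 + 1)) := by
    rw [← Finset.sum_add_distrib]
    apply Finset.sum_congr rfl
    intros; ring
  rw [h1]; ring

noncomputable def Ac (p i j : ℕ) : ℕ := (Z p i j).card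

lemma Ac_b0 (b : ℕ) : Ac p b 0 = 1 := by
  have : Z p b 0 = {0} := by
    ext t; rw [mem_Z]; simp
  rw [Ac, this]; simp

lemma Ac_b1 (b : ℕ) : Ac p (b + 1) 1 = 1 := by
  have : Z p (b + 1) 1 = {0} := by
    ext t
    rw [Finset.mem_singleton]
    constructor
    · intro h
      have h1 := Z_dvd (j := 0) h
      rw [ZMod.intCast_zmod_eq_zero_iff_dvd] at h1
      have h2 := (mem_Z.1 h).1
      rw [pow_one] at h2
      exact Nat.eq_zero_of_dvd_of_lt (by exact_mod_cast h1) h2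
    · rintro rfl
      rw [mem_Z]
      exact ⟨by simpa using hpf.out.pos, 0, by simp⟩
  rw [Ac, this]; simp

lemma Ac_0c (c : ℕ) : Ac p 0 (c + 1) = 2 := by
  have : Z p 0 (c + 1) = {0, 1} := by
    ext t
    rw [mem_Z]
    have h1 := one_lt_pow (p := p) c
    simp only [pow_zero, Finset.mem_insert, Finset.mem_singleton]
    constructor
    · rintro ⟨h, r, hr⟩
      exact idem h hr
    · rintro (rfl | rfl)
      · exact ⟨by omega, 0, by simp⟩
      · exact ⟨by omega, 0, by simp⟩
  rw [Ac, this]; simp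

lemma Ac_rec (b c : ℕ) : Ac p (b + 1) (c + 2) = p * Ac p b c := by
  have hp := hpf.out
  have h0 : p * Ac p b c = (Finset.range p ×ˢ Z p b c).card := by
    rw [Finset.card_product, Finset.card_range, Ac]
  rw [h0]
  symm
  refine Finset.card_bij (fun x _ => p * (x.2 + x.1 * p ^ c)) ?_ ?_ ?_
  · rintro ⟨k, t⟩ h
    rw [Finset.mem_product, Finset.mem_range, mem_Z] at h
    obtain ⟨hk, ht, r, hr⟩ := h
    simp only at hk ht hr
    rw [mem_Z]
    constructor
    · have h1 : t + k * p ^ c < p ^ (c + 1) := by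
        have : (k + 1) * p ^ c ≤ p * p ^ c := Nat.mul_le_mul_right _ hk
        rw [pow_succ']
        rw [add_mul, one_mul] at this
        omega
      rw [pow_succ']
      exact Nat.mul_lt_mul_of_pos_left h1 hp.pos
    · refine ⟨r + 2 * t * k + k ^ 2 * p ^ c - p ^ b * k, ?_⟩
      push_cast
      linear_combination (p : ℤ) ^ 2 * hr
  · rintro ⟨k, t⟩ h ⟨k', t'⟩ h' he
    rw [Finset.mem_product, Finset.mem_range, mem_Z] at h h'
    have h1 := Nat.eq_of_mul_eq_mul_left hp.pos he
    simp only at h1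
    have ht := h.2.1
    have ht' := h'.2.1
    simp only at ht ht'
    have e1 : t = t' := by
      have := congrArg (· % p ^ c) h1
      simpa [Nat.add_mul_mod_self_right, Nat.mod_eq_of_lt ht, Nat.mod_eq_of_lt ht'] using this
    subst e1
    have e2 : k = k' := by
      have h2 : k * p ^ c = k' * p ^ c := by omega
      exact Nat.eq_of_mul_eq_mul_right (pow_pos hp.pos c) h2
    rw [e2]
  · intro t ht
    have h1 := Z_dvd (j := c + 1) ht
    rw [ZMod.intCast_zmod_eq_zero_iff_dvd] at h1
    have h2 : p ∣ t := by exact_mod_cast h1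
    obtain ⟨s, rfl⟩ := h2
    obtain ⟨hl, r, hr⟩ := mem_Z.1 ht
    have hs : s < p ^ (c + 1) := by
      rw [pow_succ'] at hl
      exact Nat.lt_of_mul_lt_mul_left hl
    have pc := pow_pos hp.pos c
    refine ⟨(s / p ^ c, s % p ^ c), ?_, ?_⟩
    · rw [Finset.mem_product, Finset.mem_range, mem_Z]
      refine ⟨?_, Nat.mod_lt _ pc, ?_⟩
      · rw [pow_succ'] at hs
        exact Nat.div_lt_of_lt_mul (by rw [mul_comm]; exact hs)
      · have hd := Nat.mod_add_div s (p ^ c)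
        set k := s / p ^ c
        set m := s % p ^ c
        refine ⟨r - 2 * m * k - k ^ 2 * p ^ c + p ^ b * k, ?_⟩
        have hd' : (s : ℤ) = m + p ^ c * k := by exact_mod_cast hd.symm
        push_cast at hr
        rw [hd'] at hr
        apply mul_left_cancel₀ (pz (p := p) 2)
        linear_combination hr
    · simp only
      rw [mul_comm (s / p ^ c), Nat.mod_add_div]

lemma dw_eq (i j : ℕ) : dw p wD0 wD1 (i + 1) (j + 1) + wD1 * Ac p i j =
    wD0 * Ac p i j + wD1 * Ac p (i + 1) (j + 1) := by
  have hp := hpf.out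
  unfold dw
  rw [Finset.sum_ite, Finset.sum_const, Finset.sum_const, smul_eq_mul, smul_eq_mul]
  have h1 : ((Z p (i + 1) (j + 1)).filter (fun t : ℕ => (p : ℤ) ^ (j + 1 + 1) ∣ (t : ℤ) ^ 2 - (p : ℤ) ^ (i + 1) * t)).card = Ac p i j := by
    symm
    refine Finset.card_bij (fun t _ => p * t) ?_ ?_ ?_
    · intro t ht
      obtain ⟨hl, r, hr⟩ := mem_Z.1 ht
      rw [Finset.mem_filter, mem_Z]
      refine ⟨⟨?_, r * p, ?_⟩, r, ?_⟩
      · rw [pow_succ']; exact Nat.mul_lt_mul_of_pos_left hl hp.pos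
      · push_cast; linear_combination (p : ℤ) ^ 2 * hr
      · push_cast; linear_combination -(p : ℤ) ^ 2 * hr
    · intro t _ t' _ h
      exact Nat.eq_of_mul_eq_mul_left hp.pos h
    · intro t ht
      rw [Finset.mem_filter] at ht
      obtain ⟨ht, r, hr⟩ := ht
      have h1 := Z_dvd ht
      rw [ZMod.intCast_zmod_eq_zero_iff_dvd] at h1
      have h2 : p ∣ t := by exact_mod_cast h1
      obtain ⟨s, rfl⟩ := h2
      refine ⟨s, ?_, rfl⟩
      rw [mem_Z]
      have hl := (mem_Z.1 ht).1
      constructor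
      · rw [pow_succ'] at hl
        exact Nat.lt_of_mul_lt_mul_left hl
      · refine ⟨r, ?_⟩
        push_cast at hr
        apply mul_left_cancel₀ (pz (p := p) 2)
        linear_combination -hr
  have h2 := Finset.card_filter_add_card_filter_not (s := Z p (i + 1) (j + 1))
    (fun t : ℕ => (p : ℤ) ^ (j + 1 + 1) ∣ (t : ℤ) ^ 2 - (p : ℤ) ^ (i + 1) * t)
  rw [h1] at h2 ⊢
  rw [show Ac p (i + 1) (j + 1) = (Z p (i + 1) (j + 1)).card from rfl, ← h2]
  ring

noncomputable def AA (p n : ℕ) : ℕ := ∑ x ∈ antidiagonal n, Ac p x.1 x.2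

lemma AA0 : AA p 0 = 1 := by simp [AA, Ac_b0]
lemma AA1 : AA p 1 = 3 := by
  rw [AA, Finset.Nat.sum_antidiagonal_succ]
  simp [Ac_b0, Ac_0c]
lemma AA2' (m : ℕ) : AA p (m + 2) = 3 + ∑ x ∈ antidiagonal m, Ac p (x.1 + 1) (x.2 + 1) := by
  rw [AA, Finset.Nat.sum_antidiagonal_succ, Finset.Nat.sum_antidiagonal_succ']
  simp only [Ac_b0, Ac_0c]
  ring
lemma AA2 : AA p 2 = 4 := by
  rw [AA2']
  simp [Ac_b1]
lemma AA3 (n : ℕ) : AA p (n + 3) = 4 + p * AA p n := by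
  rw [AA2', Finset.Nat.sum_antidiagonal_succ']
  simp only [Ac_rec, zero_add, Ac_b1]
  rw [AA, Finset.mul_sum]
  ring

lemma NL_AA (tw : TW p w wA wB wC wD0 wD1) (m : ℕ) :
    NL p w (m + 2) + 4 * wD1 * AA p m + 12 * wD1 =
      6 * wB + 3 * wC * (m + 1) + 4 * wD0 * AA p m + 4 * wD1 * AA p (m + 2) := by
  rw [NL2 tw, AA2', Finset.sum_add_distrib, Finset.sum_const, Finset.Nat.card_antidiagonal, smul_eq_mul]
  have h : ∑ j ∈ antidiagonal m, 4 * dw p wD0 wD1 (j.1 + 1) (j.2 + 1) + 4 * wD1 * AA p m =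
      4 * wD0 * AA p m + 4 * wD1 * ∑ x ∈ antidiagonal m, Ac p (x.1 + 1) (x.2 + 1) := by
    rw [AA, Finset.mul_sum, Finset.mul_sum, Finset.mul_sum, ← Finset.sum_add_distrib, ← Finset.sum_add_distrib]
    apply Finset.sum_congr rfl
    intro x _
    have := dw_eq (p := p) (wD0 := wD0) (wD1 := wD1) x.1 x.2
    linear_combination 4 * this
  linear_combination h

lemma twF : TW p (fun _ => 1) 1 1 1 1 1 := by
  constructor <;> intros <;> rfl
lemma tw3 : TW p (h3 p) (p ^ 2 + p - 5) (p ^ 2 + p - 3) (p ^ 2 + p - 2) (p ^ 2 - 1) (p ^ 2 + p - 1) :=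
  ⟨h3_A, h3_B, h3_C, h3_D0, h3_D1⟩
lemma tw2 : TW p (h2 p) ((p - 2) * (p - 3)) ((p - 2) * (p - 1)) ((p - 1) ^ 2) 0 (p * (p - 1)) :=
  ⟨h2_A, h2_B, h2_C, h2_D0, h2_D1⟩

end
end ZZ3

namespace ZZ3
open Submodule
open scoped Classical

/-- generating series of a sequence of natural numbers -/
noncomputable def gs1 (f : ℕ → ℕ) : PowerSeries ℚ := PowerSeries.mk fun n => (f n : ℚ)

lemma gs1_add (f g : ℕ → ℕ) : gs1 (fun n => f n + g n) = gs1 f + gs1 g := by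
  ext n; simp [gs1]

lemma gs1_smul (c : ℕ) (f : ℕ → ℕ) : gs1 (fun n => c * f n) = (c : PowerSeries ℚ) * gs1 f := by
  ext n
  rw [← map_natCast (PowerSeries.C (R := ℚ)), PowerSeries.coeff_C_mul]; simp [gs1]

lemma gs1_sh (d : ℕ) (f : ℕ → ℕ) : gs1 (sh d f) = PowerSeries.X ^ d * gs1 f := by
  ext n
  rw [PowerSeries.coeff_X_pow_mul']
  simp only [gs1, PowerSeries.coeff_mk, sh]
  split_ifs <;> simp

lemma gs1_const (c : ℕ) : gs1 (fun _ => c) * (1 - PowerSeries.X) = (c : PowerSeries ℚ) := by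
  have h : gs1 (fun _ => c) = (c : PowerSeries ℚ) * PowerSeries.mk (fun _ => (1 : ℚ)) := by
    have := gs1_smul c (fun _ => 1)
    simpa [gs1] using this
  have h1 : PowerSeries.mk (fun _ => (1 : ℚ)) * (1 - PowerSeries.X) = 1 := PowerSeries.mk_one_mul_one_sub_eq_one ℚ
  rw [h, mul_assoc, h1, mul_one]

/-- split off the first term -/
lemma gs1_succ (f : ℕ → ℕ) : gs1 f = (f 0 : PowerSeries ℚ) + PowerSeries.X * gs1 (fun n => f (n + 1)) := by
  ext n
  cases n with
  | zero => rw [← map_natCast (PowerSeries.C (R := ℚ))]; simp [gs1]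
  | succ n =>
    rw [← map_natCast (PowerSeries.C (R := ℚ)), map_add, PowerSeries.coeff_succ_X_mul, PowerSeries.coeff_C]
    simp [gs1]

lemma gs1_lin : gs1 (fun n => n + 1) * (1 - PowerSeries.X) ^ 2 = 1 := by
  have h := gs1_succ (fun n => n + 1)
  have h2 := gs1_add (fun n => n + 1) (fun _ => 1)
  rw [show gs1 (fun n => n + 1 + 1) = _ from h2] at h
  have h3 := gs1_const 1
  push_cast at h h3
  linear_combination (1 - PowerSeries.X) * h + PowerSeries.X * h3

section
variable {p : ℕ} [hpf : Fact p.Prime]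

lemma gsAA : gs1 (AA p) * ((1 - (p : PowerSeries ℚ) * PowerSeries.X ^ 3) * (1 - PowerSeries.X)) =
    (1 + PowerSeries.X) ^ 2 := by
  have h0 := gs1_succ (AA p)
  have h1 := gs1_succ (fun n => AA p (n + 1))
  have h2 := gs1_succ (fun n => AA p (n + 1 + 1))
  have h3 : gs1 (fun n => AA p (n + 1 + 1 + 1)) = gs1 (fun _ => 4) + (p : PowerSeries ℚ) * gs1 (AA p) := by
    rw [← gs1_smul, ← gs1_add]
    congr 1; funext n; exact AA3 n
  have h4 := gs1_const 4
  simp only [zero_add] at h1 h2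
  rw [AA0] at h0
  rw [AA1] at h1
  rw [show (1 + 1 : ℕ) = 2 from rfl, AA2] at h2
  push_cast at h0 h1 h2 h3 h4
  rw [h3] at h2
  rw [h2] at h1
  rw [h1] at h0
  linear_combination (1 - PowerSeries.X) * h0 + PowerSeries.X ^ 3 * h4

lemma gsNL {w : Lt → ℕ} {wA wB wC wD0 wD1 : ℕ} (tw : TW p w wA wB wC wD0 wD1) :
    gs1 (NL p w) * ((1 - PowerSeries.X) ^ 2 * (1 - (p : PowerSeries ℚ) * PowerSeries.X ^ 3)) =
    (1 - (p : PowerSeries ℚ) * PowerSeries.X ^ 3) * ((wA : PowerSeries ℚ) * (1 - PowerSeries.X) ^ 2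
      + 6 * (wB : PowerSeries ℚ) * PowerSeries.X * (1 - PowerSeries.X) + 3 * (wC : PowerSeries ℚ) * PowerSeries.X ^ 2
      - 12 * (wD1 : PowerSeries ℚ) * PowerSeries.X ^ 2 * (1 - PowerSeries.X)
      - 4 * (wD1 : PowerSeries ℚ) * (1 + 3 * PowerSeries.X) * (1 - PowerSeries.X) ^ 2)
    + (4 * ((wD0 : PowerSeries ℚ) - (wD1 : PowerSeries ℚ)) * PowerSeries.X ^ 2 + 4 * (wD1 : PowerSeries ℚ)) * (1 - PowerSeries.X) * (1 + PowerSeries.X) ^ 2 := by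
  have h0 := gs1_succ (NL p w)
  have h1 := gs1_succ (fun n => NL p w (n + 1))
  have a0 := gs1_succ (AA p)
  have a1 := gs1_succ (fun n => AA p (n + 1))
  simp only [zero_add] at h1 a1
  rw [AA0] at a0
  rw [AA1] at a1
  rw [NL0 tw] at h0
  rw [NL1 tw] at h1
  have h2 : gs1 (fun n => NL p w (n + 1 + 1)) + ((4 * wD1 : ℕ) : PowerSeries ℚ) * gs1 (AA p) + gs1 (fun _ => 12 * wD1) =
      gs1 (fun _ => 6 * wB) + ((3 * wC : ℕ) : PowerSeries ℚ) * gs1 (fun n => n + 1) +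
      ((4 * wD0 : ℕ) : PowerSeries ℚ) * gs1 (AA p) + ((4 * wD1 : ℕ) : PowerSeries ℚ) * gs1 (fun n => AA p (n + 1 + 1)) := by
    simp only [← gs1_smul, ← gs1_add]
    congr 1; funext n; exact NL_AA tw n
  have c1 := gs1_const (12 * wD1)
  have c2 := gs1_const (6 * wB)
  have l := gs1_lin
  have A := gsAA (p := p)
  push_cast at *
  generalize gs1 (fun n => NL p w (n + 1 + 1)) = n2 at *
  generalize gs1 (fun n => NL p w (n + 1)) = n1 at *
  generalize gs1 (NL p w) = n0 at *
  generalize gs1 (fun n => AA p (n + 1 + 1)) = b2 at *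
  generalize gs1 (fun n => AA p (n + 1)) = b1 at *
  generalize gs1 (AA p) = b0 at *
  generalize gs1 (fun n => n + 1) = g2 at *
  generalize gs1 (fun _ => 12 * wD1) = g12 at *
  generalize gs1 (fun _ => 6 * wB) = g6 at *
  generalize (p : PowerSeries ℚ) = q at *
  generalize (PowerSeries.X : PowerSeries ℚ) = x at *
  generalize (wA : PowerSeries ℚ) = A at *
  generalize (wB : PowerSeries ℚ) = B at *
  generalize (wC : PowerSeries ℚ) = C at *
  generalize (wD0 : PowerSeries ℚ) = D0 at *
  generalize (wD1 : PowerSeries ℚ) = D1 at *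
  rename_i A'
  subst h0
  subst h1
  subst a1
  linear_combination ((1 - x) ^ 2 * (1 - q * x ^ 3)) * x ^ 2 * h2
    - (4 * D1) * ((1 - x) ^ 2 * (1 - q * x ^ 3)) * a0 
    + (1 - x) * (1 - q * x ^ 3) * x ^ 2 * (c2 - c1) + 3 * C * (1 - q * x ^ 3) * x ^ 2 * l
    + (1 - x) * (4 * (D0 - D1) * x ^ 2 + 4 * D1) * A'

lemma main_ps : gs1 (F0 p) * ((1 - PowerSeries.X) ^ 2 * (1 - (p : PowerSeries ℚ) ^ 2 * PowerSeries.X ^ 4) *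
          (1 - (p : PowerSeries ℚ) ^ 3 * PowerSeries.X ^ 6))
      = 1 + 4 * PowerSeries.X + 2 * PowerSeries.X ^ 2 + (4 * (p : PowerSeries ℚ) - 3) * PowerSeries.X ^ 3 +
          (5 * (p : PowerSeries ℚ) - 1) * PowerSeries.X ^ 4 +
          ((p : PowerSeries ℚ) ^ 2 - 5 * (p : PowerSeries ℚ)) * PowerSeries.X ^ 5 +
          (3 * (p : PowerSeries ℚ) ^ 2 - 4 * (p : PowerSeries ℚ)) * PowerSeries.X ^ 6 -
          2 * (p : PowerSeries ℚ) ^ 2 * PowerSeries.X ^ 7 - 4 * (p : PowerSeries ℚ) ^ 2 * PowerSeries.X ^ 8 -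
          (p : PowerSeries ℚ) ^ 2 * PowerSeries.X ^ 9 := by
  have hp := hpf.out.two_le
  have rF : gs1 (F0 p) = gs1 (NL p (fun _ => 1)) + (PowerSeries.X ^ 3 * gs1 (F0 p) + PowerSeries.X ^ 4 * gs1 (H3 p)
      + PowerSeries.X ^ 5 * gs1 (H2 p) + PowerSeries.X ^ 6 * ((p : PowerSeries ℚ) * gs1 (H2 p))) := by
    rw [← gs1_smul]
    simp only [← gs1_sh, ← gs1_add]
    exact congrArg gs1 (funext rec_F)
  have r3 : gs1 (H3 p) = gs1 (NL p (h3 p)) + (PowerSeries.X ^ 4 * (((p ^ 2 : ℕ) : PowerSeries ℚ) * gs1 (H3 p))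
      + PowerSeries.X ^ 5 * (((p ^ 2 : ℕ) : PowerSeries ℚ) * gs1 (H2 p)) + PowerSeries.X ^ 6 * (((p ^ 2 + p : ℕ) : PowerSeries ℚ) * ((p : PowerSeries ℚ) * gs1 (H2 p)))) := by
    simp only [← gs1_sh, ← gs1_add, ← gs1_smul]
    exact congrArg gs1 (funext rec_H3)
  have r2 : gs1 (H2 p) = gs1 (NL p (h2 p)) + PowerSeries.X ^ 6 * (((p ^ 2 : ℕ) : PowerSeries ℚ) * ((p : PowerSeries ℚ) * gs1 (H2 p))) := by
    simp only [← gs1_sh, ← gs1_add, ← gs1_smul]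
    exact congrArg gs1 (funext rec_H2)
  have nF := gsNL (twF (p := p))
  have n3 := gsNL (tw3 (p := p))
  have n2 := gsNL (tw2 (p := p))
  have p2 : 2 * 2 ≤ p ^ 2 := by rw [sq]; exact Nat.mul_le_mul hp hp
  have e : (((p - 2) * (p - 3) : ℕ) : PowerSeries ℚ) = (p - 2) * (p - 3) := by
    rcases hp.eq_or_lt with h | h
    · subst h; simp
    · rw [Nat.cast_mul, Nat.cast_sub hp, Nat.cast_sub (show 3 ≤ p from h)]; simp
  rw [e, Nat.cast_mul, Nat.cast_sub hp, Nat.cast_pow, Nat.cast_mul, Nat.cast_sub (show 1 ≤ p by omega)] at n2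
  rw [Nat.cast_sub (show 5 ≤ p ^ 2 + p by omega), Nat.cast_sub (show 3 ≤ p ^ 2 + p by omega),
    Nat.cast_sub (show 2 ≤ p ^ 2 + p by omega), Nat.cast_sub (show 1 ≤ p ^ 2 by omega),
    Nat.cast_sub (show 1 ≤ p ^ 2 + p by omega)] at n3
  push_cast at rF r3 r2 nF n3 n2
  have u1 : (1 - PowerSeries.X ^ 3 : PowerSeries ℚ) ≠ 0 := by
    intro h
    have := congrArg PowerSeries.constantCoeff h
    simp at this
  have u2 : (1 - (p : PowerSeries ℚ) * PowerSeries.X ^ 3 : PowerSeries ℚ) ≠ 0 := by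
    intro h
    have := congrArg PowerSeries.constantCoeff h
    simp at this
  clear e
  generalize gs1 (F0 p) = F at *
  generalize gs1 (H3 p) = T at *
  generalize gs1 (H2 p) = S at *
  generalize gs1 (NL p (fun _ => 1)) = NF at *
  generalize gs1 (NL p (h3 p)) = N3 at *
  generalize gs1 (NL p (h2 p)) = N2 at *
  generalize (p : PowerSeries ℚ) = q at *
  generalize (PowerSeries.X : PowerSeries ℚ) = x at *
  apply mul_right_cancel₀ (mul_ne_zero u1 u2)
  linear_combination ((1 - x) ^ 2 * (1 - q * x ^ 3)) * (1 - q ^ 2 * x ^ 4) * (1 - q ^ 3 * x ^ 6) * rF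
    + ((1 - x) ^ 2 * (1 - q * x ^ 3)) * x ^ 4 * (1 - q ^ 3 * x ^ 6) * r3
    + ((1 - x) ^ 2 * (1 - q * x ^ 3)) * (x ^ 4 * (q ^ 2 * x ^ 5 + (q ^ 2 + q) * q * x ^ 6) + (x ^ 5 + q * x ^ 6) * (1 - q ^ 2 * x ^ 4)) * r2
    + (1 - q ^ 2 * x ^ 4) * (1 - q ^ 3 * x ^ 6) * nF + x ^ 4 * (1 - q ^ 3 * x ^ 6) * n3
    + (x ^ 4 * (q ^ 2 * x ^ 5 + (q ^ 2 + q) * q * x ^ 6) + (x ^ 5 + q * x ^ 6) * (1 - q ^ 2 * x ^ 4)) * n2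

lemma count_eq (n : ℕ) :
    Nat.card {S : NonUnitalSubring (Fin 3 → ℤ) // S.toAddSubgroup.index = p ^ n} = F0 p n := by
  have hc : F0 p n = Nat.card (Sub p n : Set Lt) := by simp [F0]
  rw [hc]
  refine Nat.card_congr
    { toFun := fun S => ⟨AddSubgroup.toIntSubmodule S.1.toAddSubgroup, ?_⟩
      invFun := fun M => ⟨{ M.1.toAddSubgroup with
        mul_mem' := fun {a b} ha hb => (mem_Sub.1 M.2).1 (Submodule.mul_mem_mul ha hb) }, ?_⟩
      left_inv := ?_
      right_inv := ?_ }
  · rw [Finset.mem_coe, mem_Sub]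
    refine ⟨?_, S.2⟩
    unfold Cl
    rw [Submodule.mul_le]
    intro a ha b hb
    exact S.1.mul_mem' ha hb
  · exact (mem_Sub.1 M.2).2
  · intro S
    rfl
  · intro M
    rfl

end
end ZZ3


open PowerSeries in
/-- **The local subring zeta function of `ℤ³` with componentwise multiplication**
(Nakagawa; Liu): for every prime `p`, with `t = p^{-s}`,
`ζ_{ℤ³,p}(s) · (1-t)²(1-p²t⁴)(1-p³t⁶) = 1 + 4t + 2t² + (4p-3)t³ + (5p-1)t⁴ + (p²-5p)t⁵ +
(3p²-4p)t⁶ - 2p²t⁷ - 4p²t⁸ - p²t⁹`. -/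
theorem local_subring_zeta_Z3 (p : ℕ) (hp : p.Prime) :
    (PowerSeries.mk fun i => (subringCount (Fin 3 → ℤ) (p ^ i) : ℚ)) *
        ((1 - X) ^ 2 * (1 - (p : PowerSeries ℚ) ^ 2 * X ^ 4) *
          (1 - (p : PowerSeries ℚ) ^ 3 * X ^ 6))
      = 1 + 4 * X + 2 * X ^ 2 + (4 * (p : PowerSeries ℚ) - 3) * X ^ 3 +
          (5 * (p : PowerSeries ℚ) - 1) * X ^ 4 +
          ((p : PowerSeries ℚ) ^ 2 - 5 * (p : PowerSeries ℚ)) * X ^ 5 +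
          (3 * (p : PowerSeries ℚ) ^ 2 - 4 * (p : PowerSeries ℚ)) * X ^ 6 -
          2 * (p : PowerSeries ℚ) ^ 2 * X ^ 7 - 4 * (p : PowerSeries ℚ) ^ 2 * X ^ 8 -
          (p : PowerSeries ℚ) ^ 2 * X ^ 9 := by
  haveI : Fact p.Prime := ⟨hp⟩
  have h : (PowerSeries.mk fun i => (subringCount (Fin 3 → ℤ) (p ^ i) : ℚ)) = ZZ3.gs1 (ZZ3.F0 p) := by
    ext n
    simp only [ZZ3.gs1, PowerSeries.coeff_mk, subringCount]
    rw [ZZ3.count_eq]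
  rw [h]
  exact ZZ3.main_ps
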